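/- Theorem 1.2 (algebraic case, with the pointwise bounds of Remark 4.1). Let α ∈ (0,1), d₁, d₂ > 0 and c₁, c₂ ∈ ℝ with c₁ ≠ c₂. Assume f₁, f₂, g₁, g₂ : ℝ² → ℝ are C^{2,α} and there exist constants C₀ > 1 and r₀ > 0 such that for all |u|, |v| ≤ r₀: |f₁(u,v)| ≤ C₀(|u|⁴ + |u||v|), |g₁(u,v)| ≤ C₀(|u|² + |u||v|), |f₂(u,v)| ≤ C₀(|v|⁴ + |u||v|), |g₂(u,v)| ≤ C₀(|v|² + |u||v|). Then there exists M₀ ≥ 1 such that for every M ≥ M₀, every r ≥ 3 and every ε > 0 there exists δ > 0 with the following property: for every pair (u₀, v₀) of bounded, α-Hölder continuous functions ℝ → ℝ satisfying |u₀(x)| (1+|x|)^r < δ and |v₀(x)| (1+|x|)^r < δ for all x ∈ ℝ, there exists a global classical solution (u,v) of system (GRD) with initial data (u₀, v₀) such that for all x ∈ ℝ and t ≥ 0: |u(x,t)| ≤ ε[(1+|x+c₁t|+√t)^{-r} + e^{-(x+c₁t)²/(M(1+t))}/√(1+t)], |v(x,t)| ≤ ε[(1+|x+c₂t|+√t)^{-r}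 + e^{-(x+c₂t)²/(M(1+t))}/√(1+t)], sup_{x∈ℝ}(|u(x,t)| + |v(x,t)|) ≤ ε/√(1+t), and ∫_ℝ (|u(x,t)| + |v(x,t)|) dx ≤ ε. -/

import Mathlib

open MeasureTheory Set

noncomputable section

/-- `f` is `α`-Hölder continuous. -/
def HolderCont (α : ℝ) (f : ℝ → ℝ) : Prop :=
  ∃ C : ℝ, ∀ x y : ℝ, |f x - f y| ≤ C * |x - y| ^ α

/-- `h : ℝ² → ℝ` is `C^{2,α}`: twice continuously differentiable with `α`-Hölder
continuous second-order derivatives. -/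
def IsC2Holder (α : ℝ) (h : ℝ × ℝ → ℝ) : Prop :=
  ContDiff ℝ 2 h ∧
    ∃ C : ℝ, ∀ x y : ℝ × ℝ,
      ‖iteratedFDeriv ℝ 2 h x - iteratedFDeriv ℝ 2 h y‖ ≤ C * ‖x - y‖ ^ α

/-- A classical solution of the reaction-diffusion-advection system (GRD)
`u_t = d₁ u_xx + c₁ u_x + f₁(u,v) + ∂_x(g₁(u,v))`,
`v_t = d₂ v_xx + c₂ v_x + f₂(u,v) + ∂_x(g₂(u,v))`
on `ℝ × [0,T)` with initial data `(u₀, v₀)`: jointly continuous, bounded in `x` on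
each compact time interval, once continuously differentiable in `t` and twice
continuously differentiable in `x` on `ℝ × (0,T)`, satisfying both equations
pointwise there, and attaining the initial data at `t = 0`. -/
def IsClassicalSolution (d₁ d₂ c₁ c₂ : ℝ) (f₁ f₂ g₁ g₂ : ℝ × ℝ → ℝ)
    (T : ENNReal) (u₀ v₀ : ℝ → ℝ) (u v : ℝ → ℝ → ℝ) : Prop :=
  (∀ x : ℝ, u x 0 = u₀ x) ∧ (∀ x : ℝ, v x 0 = v₀ x) ∧
  ContinuousOn (fun p : ℝ × ℝ => (u p.1 p.2, v p.1 p.2))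
    {p : ℝ × ℝ | 0 ≤ p.2 ∧ ENNReal.ofReal p.2 < T} ∧
  (∀ t₁ : ℝ, 0 ≤ t₁ → ENNReal.ofReal t₁ < T →
    ∃ K : ℝ, ∀ x t : ℝ, 0 ≤ t → t ≤ t₁ → |u x t| + |v x t| ≤ K) ∧
  ∃ ut vt ux vx uxx vxx gx hx : ℝ → ℝ → ℝ,
    (∀ x t : ℝ, 0 < t → ENNReal.ofReal t < T →
      HasDerivAt (fun τ => u x τ) (ut x t) t ∧
      HasDerivAt (fun ξ => u ξ t) (ux x t) x ∧
      HasDerivAt (fun ξ => ux ξ t) (uxx x t) x ∧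
      HasDerivAt (fun ξ => g₁ (u ξ t, v ξ t)) (gx x t) x ∧
      HasDerivAt (fun τ => v x τ) (vt x t) t ∧
      HasDerivAt (fun ξ => v ξ t) (vx x t) x ∧
      HasDerivAt (fun ξ => vx ξ t) (vxx x t) x ∧
      HasDerivAt (fun ξ => g₂ (u ξ t, v ξ t)) (hx x t) x ∧
      ut x t = d₁ * uxx x t + c₁ * ux x t + f₁ (u x t, v x t) + gx x t ∧
      vt x t = d₂ * vxx x t + c₂ * vx x t + f₂ (u x t, v x t) + hx x t) ∧
    ContinuousOn (fun p : ℝ × ℝ =>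
        (ut p.1 p.2, ux p.1 p.2, uxx p.1 p.2, vt p.1 p.2, vx p.1 p.2, vxx p.1 p.2))
      {p : ℝ × ℝ | 0 < p.2 ∧ ENNReal.ofReal p.2 < T}

namespace RD

/-- wide Gaussian -/
def E (z : ℝ) : ℝ := Real.exp (-z^2/4)
/-- standard normal density -/
def phi (z : ℝ) : ℝ := Real.exp (-z^2/2) / Real.sqrt (2*Real.pi)
/-- Hermite-type kernels -/
def psi : ℕ → ℝ → ℝ
  | 0 => fun z => phi z
  | 1 => fun z => z * phi z
  | _ => fun z => (z^2-1) * phi z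

lemma E_pos (z : ℝ) : 0 < E z := Real.exp_pos _
lemma E_nn (z : ℝ) : 0 ≤ E z := (Real.exp_pos _).le
lemma E_cont : Continuous E := by unfold E; fun_prop
lemma phi_cont : Continuous phi := by unfold phi; fun_prop
lemma phi_nn (z : ℝ) : 0 ≤ phi z := by unfold phi; positivity
lemma psi_cont (k : ℕ) : Continuous (psi k) := by
  have := phi_cont
  match k with
  | 0 => exact this
  | 1 => show Continuous fun z => z * phi z; fun_prop
  | k+2 => show Continuous fun z => (z^2-1) * phi z; fun_prop

lemma E_int : Integrable E := by
  have := integrable_exp_neg_mul_sq (b := 1/4) (by norm_num)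
  refine this.congr (Filter.Eventually.of_forall fun z => ?_)
  simp only [E]; ring_nf

lemma sqrt2pi : 1 ≤ Real.sqrt (2*Real.pi) := by
  rw [Real.one_le_sqrt]; linarith [Real.pi_gt_three]

lemma phi_le (z : ℝ) : phi z * Real.exp (z^2/4) ≤ E z := by
  unfold phi E
  rw [div_mul_eq_mul_div, ← Real.exp_add]
  refine (div_le_self (Real.exp_pos _).le sqrt2pi).trans (le_of_eq ?_)
  ring_nf

lemma psi_le (k : ℕ) (z : ℝ) : |psi k z| ≤ 4 * E z := by
  have h1 : 1 + z^2 ≤ 4 * Real.exp (z^2/4) := by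
    have := Real.add_one_le_exp (z^2/4); linarith
  have h2 : (1 + z^2) * phi z ≤ 4 * E z := by
    have := mul_le_mul_of_nonneg_right h1 (phi_nn z)
    linarith [phi_le z]
  have h0 := phi_nn z
  match k with
  | 0 => show |phi z| ≤ _
         rw [abs_of_nonneg h0]; nlinarith [sq_nonneg z]
  | 1 => show |z * phi z| ≤ _
         rw [abs_mul, abs_of_nonneg h0]
         refine le_trans (mul_le_mul_of_nonneg_right ?_ h0) h2
         nlinarith [sq_abs z, sq_nonneg (|z| - 1)]
  | k+2 => show |(z^2-1) * phi z| ≤ _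
           rw [abs_mul, abs_of_nonneg h0]
           refine le_trans (mul_le_mul_of_nonneg_right ?_ h0) h2
           rw [abs_le]; constructor <;> nlinarith [sq_nonneg z]

lemma phi_deriv (z : ℝ) : HasDerivAt phi (-(z * phi z)) z := by
  unfold phi
  have h : HasDerivAt (fun z : ℝ => -z^2/2) (-z) z := by
    exact ((hasDerivAt_pow 2 z).fun_neg.div_const 2).congr_deriv (by simp; ring)
  exact ((h.exp).div_const (Real.sqrt (2*Real.pi))).congr_deriv (by ring)

lemma psi_deriv {k : ℕ} (hk : k < 2) (z : ℝ) : HasDerivAt (psi k) (-(psi (k+1) z)) z := by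
  interval_cases k
  · exact phi_deriv z
  · refine ((hasDerivAt_id' z).fun_mul (phi_deriv z)).congr_deriv ?_
    show _ = -((z^2-1) * phi z)
    ring

/-- smoothing operators -/
def T (k : ℕ) (σ : ℝ) (h : ℝ → ℝ) (a : ℝ) : ℝ := ∫ z, psi k z * h (a + σ * z)

lemma int_E_mul {q : ℝ → ℝ} (hq : Continuous q) {B : ℝ} (hB : ∀ y, |q y| ≤ B) :
    Integrable (fun z => E z * q z) := by
  refine (E_int.mul_const B).mono' (by have := E_cont; fun_prop) (Filter.Eventually.of_forall fun z => ?_)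
  rw [Real.norm_eq_abs, abs_mul, abs_of_nonneg (E_nn z)]
  exact mul_le_mul_of_nonneg_left (hB _) (E_nn z)

lemma int_psi_mul (k : ℕ) {q : ℝ → ℝ} (hq : Continuous q) {B : ℝ} (hB : ∀ y, |q y| ≤ B) :
    Integrable (fun z => psi k z * q z) := by
  refine (E_int.mul_const (4*B)).mono' (by have := psi_cont k; fun_prop) (Filter.Eventually.of_forall fun z => ?_)
  rw [Real.norm_eq_abs, abs_mul]
  calc |psi k z| * |q z| ≤ (4 * E z) * B := mul_le_mul (psi_le k z) (hB _) (abs_nonneg _) (by have := E_nn z; positivity)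
    _ = E z * (4*B) := by ring

lemma T_abs_le (k : ℕ) (σ a : ℝ) {h q : ℝ → ℝ} (hq : ∀ y, |h y| ≤ q y)
    (hi : Integrable (fun z => E z * q (a + σ * z))) :
    |T k σ h a| ≤ 4 * ∫ z, E z * q (a + σ * z) := by
  rw [← integral_const_mul, ← Real.norm_eq_abs]
  refine norm_integral_le_of_norm_le (hi.const_mul 4) (Filter.Eventually.of_forall fun z => ?_)
  rw [Real.norm_eq_abs, abs_mul, ← mul_assoc]
  exact mul_le_mul (psi_le k z) (hq _) (abs_nonneg _) (by have := E_nn z; positivity)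

/-- the constant -/
def CE : ℝ := 4 * ∫ z, E z
lemma CE_nn : 0 ≤ CE := by
  unfold CE; have : 0 ≤ ∫ z, E z := integral_nonneg E_nn
  positivity

lemma T_le (k : ℕ) (σ a : ℝ) {h : ℝ → ℝ} {B : ℝ} (hq : ∀ y, |h y| ≤ B) : |T k σ h a| ≤ CE * B := by
  have := T_abs_le k σ a (h := h) (q := fun _ => B) hq (E_int.mul_const B)
  rw [integral_mul_const] at this
  unfold CE; linarith

lemma T_sub (k : ℕ) (σ a : ℝ) {h g : ℝ → ℝ} (hh : Continuous h) (hg : Continuous g) {B B' : ℝ}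
    (hB : ∀ y, |h y| ≤ B) (hB' : ∀ y, |g y| ≤ B') :
    T k σ (fun y => h y - g y) a = T k σ h a - T k σ g a := by
  unfold T
  rw [← integral_sub (int_psi_mul k (q := fun z => h (a + σ*z)) (by fun_prop) (fun y => hB _))
    (int_psi_mul k (q := fun z => g (a + σ*z)) (by fun_prop) (fun y => hB' _))]
  simp only [mul_sub]

lemma T_add (k : ℕ) (σ a : ℝ) {h g : ℝ → ℝ} (hh : Continuous h) (hg : Continuous g) {B B' : ℝ}
    (hB : ∀ y, |h y| ≤ B) (hB' : ∀ y, |g y| ≤ B') :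
    T k σ (fun y => h y + g y) a = T k σ h a + T k σ g a := by
  unfold T
  rw [← integral_add (int_psi_mul k (q := fun z => h (a + σ*z)) (by fun_prop) (fun y => hB _))
    (int_psi_mul k (q := fun z => g (a + σ*z)) (by fun_prop) (fun y => hB' _))]
  simp only [mul_add]

lemma T_const_mul (k : ℕ) (σ a b : ℝ) (h : ℝ → ℝ) :
    T k σ (fun y => b * h y) a = b * T k σ h a := by
  unfold T
  rw [← integral_const_mul]; congr 1; ext z; ring

lemma T_cont (k : ℕ) {h : ℝ → ℝ → ℝ} (hc : Continuous (fun p : ℝ × ℝ => h p.1 p.2)) {B : ℝ}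
    (hB : ∀ x t, |h x t| ≤ B) :
    Continuous (fun p : ℝ × ℝ × ℝ => T k p.1 (fun y => h y p.2.2) p.2.1) := by
  unfold T
  refine continuous_of_dominated (bound := fun z => E z * (4*B)) ?_ ?_ (E_int.mul_const _) ?_
  · intro p
    have := psi_cont k
    have h2 : Continuous fun y => h y p.2.2 := hc.comp (by fun_prop : Continuous fun y => (y, p.2.2))
    exact (by fun_prop : Continuous _).aestronglyMeasurable
  · intro p
    refine Filter.Eventually.of_forall fun z => ?_
    rw [Real.norm_eq_abs, abs_mul]
    calc _ ≤ (4 * E z) * B := mul_le_mul (psi_le k z) (hB _ _) (abs_nonneg _) (by have := E_nn z; positivity)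
      _ = E z * (4*B) := by ring
  · refine Filter.Eventually.of_forall fun z => ?_
    have h2 : Continuous fun p : ℝ × ℝ × ℝ => h (p.2.1 + p.1 * z) p.2.2 :=
      hc.comp (by fun_prop : Continuous fun p : ℝ × ℝ × ℝ => (p.2.1 + p.1 * z, p.2.2))
    fun_prop

lemma T_shift (k : ℕ) {σ : ℝ} (hσ : 0 < σ) (h : ℝ → ℝ) (a : ℝ) :
    T k σ h a = ∫ z, psi k (z - a/σ) * h (σ * z) := by
  unfold T
  rw [← integral_sub_right_eq_self (fun z => psi k z * h (a + σ * z)) (a/σ)]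
  congr 1; ext z; congr 2; field_simp; ring

lemma T_deriv {k : ℕ} (hk : k < 2) {σ : ℝ} (hσ : 0 < σ) {h : ℝ → ℝ} (hc : Continuous h) {B : ℝ}
    (hB : ∀ y, |h y| ≤ B) (a : ℝ) : HasDerivAt (T k σ h) (σ⁻¹ * T (k+1) σ h a) a := by
  have e : T k σ h = fun a => ∫ z, psi k (z - a/σ) * h (σ * z) := funext (T_shift k hσ h)
  rw [e, T_shift (k+1) hσ h a, ← integral_const_mul]
  have hB0 : 0 ≤ B := (abs_nonneg _).trans (hB 0)
  have c1 := psi_cont k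
  have c2 := psi_cont (k+1)
  have key := hasDerivAt_integral_of_dominated_loc_of_deriv_le (μ := volume)
    (F := fun a z => psi k (z - a/σ) * h (σ * z)) (x₀ := a) (s := Metric.ball a σ)
    (F' := fun a z => σ⁻¹ * (psi (k+1) (z - a/σ) * h (σ * z)))
    (bound := fun z => σ⁻¹ * (4 * Real.exp (1/4) * Real.exp (-(z - a/σ)^2/8) * B)) (Metric.ball_mem_nhds a hσ)
    (Filter.Eventually.of_forall fun x => (by fun_prop : Continuous _).aestronglyMeasurable)
    ?_ (by fun_prop : Continuous _).aestronglyMeasurable ?_ ?_ ?_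
  · exact key.2
  · have := (int_psi_mul k (q := fun z => h (a + σ*z)) (by fun_prop) (fun y => hB _)).comp_sub_right (a/σ)
    refine this.congr (Filter.Eventually.of_forall fun z => ?_)
    simp only
    congr 2; field_simp; ring
  · refine Filter.Eventually.of_forall fun z x hx => ?_
    rw [Real.norm_eq_abs, abs_mul, abs_of_pos (inv_pos.2 hσ), abs_mul]
    have h1 : E (z - x/σ) ≤ Real.exp (1/4) * Real.exp (-(z - a/σ)^2/8) := by
      unfold E
      rw [← Real.exp_add, Real.exp_le_exp]
      have h3 : |x/σ - a/σ| ≤ 1 := by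
        rw [← sub_div, abs_div, abs_of_pos hσ, div_le_one hσ]
        exact (Metric.mem_ball.1 hx).le
      have h4 : (x/σ - a/σ)^2 ≤ 1 := by rw [← sq_abs]; nlinarith [abs_nonneg (x/σ-a/σ)]
      nlinarith [sq_nonneg ((z - x/σ) - (x/σ-a/σ))]
    have := psi_le (k+1) (z - x/σ)
    have h5 : 0 ≤ σ⁻¹ := (inv_pos.2 hσ).le
    refine mul_le_mul_of_nonneg_left (mul_le_mul ?_ (hB _) (abs_nonneg _) (by positivity)) h5
    linarith
  · have h8 : Integrable fun z : ℝ => Real.exp (-(z - a/σ)^2/8) := by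
      have := (integrable_exp_neg_mul_sq (b := 1/8) (by norm_num)).comp_sub_right (a/σ)
      refine this.congr (Filter.Eventually.of_forall fun z => ?_)
      simp only; ring_nf
    exact ((h8.const_mul _).mul_const B).const_mul _
  · refine Filter.Eventually.of_forall fun z x hx => ?_
    have h1 : HasDerivAt (fun x : ℝ => z - x/σ) (-(1/σ)) x := by
      simpa using ((hasDerivAt_id x).div_const σ).const_sub z
    have h2 := ((psi_deriv hk (z - x/σ)).comp x h1).mul_const (h (σ * z))
    exact h2.congr_deriv (by field_simp)

lemma psi_zero_int : ∫ z, psi 0 z = 1 := by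
  show ∫ z, phi z = 1
  unfold phi
  rw [integral_div]
  have := integral_gaussian (1/2)
  have e : (∫ z : ℝ, Real.exp (-z^2/2)) = ∫ z : ℝ, Real.exp (-(1/2) * z^2) := by
    congr 1; ext z; ring_nf
  rw [e, this]
  rw [show Real.pi / (1/2) = 2 * Real.pi by ring]
  exact div_self (by have := sqrt2pi; positivity)

lemma psi_int {k : ℕ} (hk : k < 2) : ∫ z, psi (k+1) z = 0 := by
  have h1 := T_deriv hk (σ := 1) one_pos (h := fun _ => 1) continuous_const (B := 1) (by simp) 0
  have h2 : T k 1 (fun _ => 1) = fun _ => ∫ z, psi k z := by ext a; simp [T]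
  rw [h2] at h1
  have := h1.unique (hasDerivAt_const 0 _)
  simpa [T] using this

lemma T_zero {h : ℝ → ℝ} (a : ℝ) : T 0 0 h a = h a := by
  unfold T; simp only [zero_mul, add_zero]; rw [integral_mul_const, psi_zero_int, one_mul]

/-- integration by parts -/
lemma T_ibp {σ : ℝ} (hσ : 0 < σ) {h h' : ℝ → ℝ} (hd : ∀ x, HasDerivAt h (h' x) x)
    (hc' : Continuous h') {B B' : ℝ} (hB : ∀ y, |h y| ≤ B) (hB' : ∀ y, |h' y| ≤ B') (a : ℝ) :
    HasDerivAt (T 0 σ h) (T 0 σ h' a) a ∧ σ⁻¹ * T 1 σ h a = T 0 σ h' a := by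
  have hc : Continuous h := continuous_iff_continuousAt.2 fun x => (hd x).continuousAt
  have c1 := psi_cont 0
  have key := hasDerivAt_integral_of_dominated_loc_of_deriv_le (μ := volume)
    (F := fun a z => psi 0 z * h (a + σ * z)) (x₀ := a) (s := univ)
    (F' := fun a z => psi 0 z * h' (a + σ * z))
    (bound := fun z => E z * (4*B')) Filter.univ_mem
    (Filter.Eventually.of_forall fun x => (by fun_prop : Continuous _).aestronglyMeasurable)
    (int_psi_mul 0 (q := fun z => h (a + σ*z)) (by fun_prop) (fun y => hB _))
    (by fun_prop : Continuous _).aestronglyMeasurable ?_ (E_int.mul_const _) ?_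
  · exact ⟨key.2, (T_deriv (k := 0) (by norm_num) hσ hc hB a).unique key.2⟩
  · refine Filter.Eventually.of_forall fun z x hx => ?_
    rw [Real.norm_eq_abs, abs_mul]
    calc _ ≤ (4 * E z) * B' := mul_le_mul (psi_le 0 z) (hB' _) (abs_nonneg _) (by have := E_nn z; positivity)
      _ = E z * (4*B') := by ring
  · refine Filter.Eventually.of_forall fun z x hx => ?_
    have h1 : HasDerivAt (fun x : ℝ => x + σ * z) 1 x := (hasDerivAt_id x).add_const _
    have := ((hd (x + σ*z)).comp x h1).const_mul (psi 0 z)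
    simpa using this

end RD

namespace RD

lemma T0_gauss (σ : ℝ) (h : ℝ → ℝ) (hc : Continuous h) (a : ℝ) :
    T 0 σ h a = ∫ y, h (a + y) ∂(ProbabilityTheory.gaussianReal 0 (NNReal.mk (σ^2) (sq_nonneg _))) := by
  have h1 := ProbabilityTheory.gaussianReal_map_const_mul (μ := 0) (v := 1) σ
  simp only [mul_zero, mul_one] at h1
  rw [← h1, integral_map (by fun_prop) (by fun_prop),
    ProbabilityTheory.integral_gaussianReal_eq_integral_smul one_ne_zero]
  unfold T
  congr 1; ext z
  show phi z * _ = _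
  simp [ProbabilityTheory.gaussianPDFReal, phi]
  left; ring

lemma T0_cont' {σ : ℝ} {h : ℝ → ℝ} (k : ℕ) (hc : Continuous h) {B : ℝ} (hB : ∀ y, |h y| ≤ B) :
    Continuous (T k σ h) := by
  have := T_cont k (h := fun x _ => h x) (by fun_prop) (fun x _ => hB x)
  exact this.comp (by fun_prop : Continuous fun a : ℝ => (σ, a, (0:ℝ)))

lemma T_semi {σ₁ σ₂ σ : ℝ} (e : σ^2 = σ₁^2 + σ₂^2) {h : ℝ → ℝ} (hc : Continuous h) {B : ℝ}
    (hB : ∀ y, |h y| ≤ B) (a : ℝ) : T 0 σ₁ (T 0 σ₂ h) a = T 0 σ h a := by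
  rw [T0_gauss σ₁ _ (T0_cont' 0 hc hB), T0_gauss σ h hc]
  have e2 : (NNReal.mk (σ^2) (sq_nonneg _)) = (NNReal.mk (σ₁^2) (sq_nonneg _)) + (NNReal.mk (σ₂^2) (sq_nonneg _)) := by
    ext; simpa using e
  have := ProbabilityTheory.gaussianReal_conv_gaussianReal (m₁ := 0) (m₂ := 0)
    (v₁ := (NNReal.mk (σ₁^2) (sq_nonneg _))) (v₂ := (NNReal.mk (σ₂^2) (sq_nonneg _)))
  rw [add_zero] at this
  rw [e2, ← this, integral_conv]
  · congr 1; ext y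
    rw [T0_gauss σ₂ h hc]
    simp only [add_assoc]
  · rw [this]
    refine Integrable.of_bound (by fun_prop) B (Filter.Eventually.of_forall fun y => hB _)

lemma T_semi1 {σ₁ σ₂ σ : ℝ} (h1 : 0 < σ₁) (h2 : 0 < σ₂) (h3 : 0 < σ) (e : σ^2 = σ₁^2 + σ₂^2) {h : ℝ → ℝ} (hc : Continuous h) {B : ℝ}
    (hB : ∀ y, |h y| ≤ B) (a : ℝ) : T 0 σ₁ (fun b => σ₂⁻¹ * T 1 σ₂ h b) a = σ⁻¹ * T 1 σ h a := by
  have A := (T_ibp h1 (h := T 0 σ₂ h) (h' := fun b => σ₂⁻¹ * T 1 σ₂ h b)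
    (fun x => T_deriv (k := 0) (by norm_num) h2 hc hB x)
    (by have := T0_cont' (σ := σ₂) 1 hc hB; fun_prop) (B := CE * B) (B' := σ₂⁻¹ * (CE * B)) (fun y => T_le _ _ _ hB)
    (fun y => by
      rw [abs_mul, abs_of_pos (inv_pos.2 h2)]
      exact mul_le_mul_of_nonneg_left (T_le _ _ _ hB) (inv_pos.2 h2).le) a).1
  have B1 : T 0 σ₁ (T 0 σ₂ h) = T 0 σ h := funext fun a => T_semi e hc hB a
  rw [B1] at A
  exact A.unique (T_deriv (k := 0) (by norm_num) h3 hc hB a)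

lemma T_lip {k : ℕ} (hk : k < 2) {σ : ℝ} (hσ : 0 < σ) {h : ℝ → ℝ} (hc : Continuous h) {B : ℝ}
    (hB : ∀ y, |h y| ≤ B) (a b : ℝ) : |T k σ h a - T k σ h b| ≤ σ⁻¹ * (CE * B) * |a - b| := by
  have := Convex.norm_image_sub_le_of_norm_hasDerivWithin_le (s := univ) (f := T k σ h)
    (f' := fun a => σ⁻¹ * T (k+1) σ h a) (C := σ⁻¹ * (CE * B))
    (fun x _ => (T_deriv hk hσ hc hB x).hasDerivWithinAt) (fun x _ => by
      rw [Real.norm_eq_abs, abs_mul, abs_of_pos (inv_pos.2 hσ)]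
      exact mul_le_mul_of_nonneg_left (T_le _ _ _ hB) (inv_pos.2 hσ).le) convex_univ (mem_univ b) (mem_univ a)
  simpa using this

lemma min_pow {α q A : ℝ} (hα : 0 < α) (hα1 : α < 1) (hq : 0 ≤ q) {X : ℝ} (hA : 0 ≤ A)
    (h1 : X ≤ A * q) (h2 : X ≤ 2 * A) : X ≤ 2 * A * q^α := by
  rcases le_total q 1 with h | h
  · have : q ≤ q^α := by
      rcases hq.eq_or_lt with h0 | h0
      · rw [← h0, Real.zero_rpow hα.ne']
      · conv_lhs => rw [← Real.rpow_one q]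
        exact Real.rpow_le_rpow_of_exponent_ge h0 h hα1.le
    nlinarith [Real.rpow_nonneg hq α]
  · have : 1 ≤ q^α := Real.one_le_rpow h hα.le
    nlinarith

lemma T_hol {k : ℕ} (hk : k < 2) {σ : ℝ} (hσ : 0 < σ) {h : ℝ → ℝ} (hc : Continuous h) {B α : ℝ}
    (hα : 0 < α) (hα1 : α < 1)
    (hB : ∀ y, |h y| ≤ B) (a b : ℝ) : |T k σ h a - T k σ h b| ≤ 2 * (CE * B) * |a - b|^α * σ^(-α) := by
  have hB0 : 0 ≤ B := (abs_nonneg _).trans (hB 0)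
  have h1 := T_lip hk hσ hc hB a b
  have h2 : |T k σ h a - T k σ h b| ≤ 2 * (CE * B) := by
    have := abs_sub (T k σ h a) (T k σ h b)
    have := T_le k σ a hB
    have := T_le k σ b hB
    linarith
  have h3 := min_pow (q := |a-b|/σ) hα hα1 (by positivity) (mul_nonneg CE_nn hB0) (h1.trans (le_of_eq (by ring))) h2
  rw [Real.div_rpow (abs_nonneg _) hσ.le] at h3
  rw [Real.rpow_neg hσ.le]
  calc _ ≤ _ := h3
    _ = _ := by ring

/-- another constant -/
def CA : ℝ := ∫ z, 4 * E z * (1 + |z|)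
lemma CA_int : Integrable fun z => 4 * E z * (1 + |z|) := by
  have h1 := (integrable_mul_exp_neg_mul_sq (b := 1/4) (by norm_num)).norm
  refine ((E_int.add h1).const_mul 4).congr (Filter.Eventually.of_forall fun z => ?_)
  simp only [Pi.add_apply, norm_mul, Real.norm_eq_abs, abs_of_pos (Real.exp_pos _), E]
  ring_nf
lemma CA_nn : 0 ≤ CA := integral_nonneg fun z => by have := E_nn z; positivity

lemma T2_le {σ : ℝ} (hσ : 0 < σ) {h : ℝ → ℝ} (hc : Continuous h) {B α H : ℝ}
    (hα : 0 < α) (hα1 : α < 1) (hB : ∀ y, |h y| ≤ B) (hH : ∀ x y, |h x - h y| ≤ H * |x - y|^α) (a : ℝ) :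
    |T 2 σ h a| ≤ CA * H * σ^α := by
  have h1 : T 2 σ h a = ∫ z, psi 2 z * (h (a + σ * z) - h a) := by
    simp only [mul_sub]
    rw [integral_sub (int_psi_mul 2 (q := fun z => h (a + σ*z)) (by fun_prop) (fun y => hB _))
      (int_psi_mul 2 (q := fun z => h a) (by fun_prop) (fun y => hB _)), integral_mul_const, psi_int (by norm_num), zero_mul, sub_zero]
    rfl
  have hH0 : 0 ≤ H := by
    have := (abs_nonneg _).trans (hH 0 1); simpa using this
  rw [h1]
  have : CA * H * σ^α = ∫ z, 4 * E z * (1 + |z|) * (H * σ^α) := by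
    rw [integral_mul_const, CA, mul_assoc]
  rw [this, ← Real.norm_eq_abs]
  refine norm_integral_le_of_norm_le (CA_int.mul_const _) (Filter.Eventually.of_forall fun z => ?_)
  rw [Real.norm_eq_abs, abs_mul]
  have h2 : |h (a + σ * z) - h a| ≤ (1 + |z|) * (H * σ^α) := by
    refine (hH _ _).trans ?_
    rw [add_sub_cancel_left, abs_mul, abs_of_pos hσ, Real.mul_rpow hσ.le (abs_nonneg _)]
    have : |z|^α ≤ 1 + |z| := by
      rcases le_total (|z|) 1 with h | h
      · have := Real.rpow_le_one (abs_nonneg z) h hα.le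
        linarith [abs_nonneg z]
      · have := Real.rpow_le_rpow_of_exponent_le h hα1.le
        rw [Real.rpow_one] at this; linarith
    have h5 : 0 ≤ H * σ^α := mul_nonneg hH0 (Real.rpow_nonneg hσ.le _)
    calc H * (σ^α * |z|^α) = |z|^α * (H * σ^α) := by ring
      _ ≤ _ := mul_le_mul_of_nonneg_right this h5
  calc _ ≤ (4 * E z) * ((1 + |z|) * (H * σ^α)) := mul_le_mul (psi_le 2 z) h2 (abs_nonneg _) (by have := E_nn z; positivity)
    _ = _ := by ring

/-! generic singular integrals -/
lemma pow_int {β : ℝ} (hβ : β < 1) (t : ℝ) : IntegrableOn (fun τ : ℝ => τ^(-β)) (Ioc 0 t) := by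
  rcases le_total t 0 with h | h
  · rw [Ioc_eq_empty (not_lt.2 h)]; exact integrableOn_empty
  · rw [← intervalIntegrable_iff_integrableOn_Ioc_of_le h]
    exact intervalIntegral.intervalIntegrable_rpow' (by linarith)

lemma pow_int_eq {β : ℝ} (hβ : β < 1) {t : ℝ} (ht : 0 ≤ t) : ∫ τ in Ioc 0 t, τ^(-β) = t^(1-β)/(1-β) := by
  rw [← intervalIntegral.integral_of_le ht, integral_rpow (Or.inl (by linarith)),
    Real.zero_rpow (by linarith), sub_zero, show -β + 1 = 1 - β by ring]

/-- admissible kernels -/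
structure Adm (K β : ℝ) (A : ℝ → ℝ → ℝ → ℝ) : Prop where
  hβ : β < 1
  cont : ContinuousOn (fun p : ℝ × ℝ × ℝ => A p.1 p.2.1 p.2.2) {p | 0 < p.2.2}
  bd : ∀ x t τ, 0 < τ → |A x t τ| ≤ K * τ^(-β)

lemma Adm.meas {K β A} (h : Adm K β A) (x t : ℝ) : AEStronglyMeasurable (A x t) (volume.restrict (Ioi 0)) := by
  refine ContinuousOn.aestronglyMeasurable ?_ measurableSet_Ioi
  exact h.cont.comp (by fun_prop : Continuous fun τ : ℝ => (x, t, τ)).continuousOn fun τ hτ => hτ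

lemma Adm.integ {K β A} (h : Adm K β A) (x t r : ℝ) : IntegrableOn (A x t) (Ioc 0 r) := by
  refine ((pow_int h.hβ r).const_mul K).mono' ((h.meas x t).mono_measure (Measure.restrict_mono Ioc_subset_Ioi_self le_rfl)) ?_
  filter_upwards [ae_restrict_mem measurableSet_Ioc] with τ hτ using h.bd x t τ hτ.1

lemma Adm.le {K β A} (h : Adm K β A) (x : ℝ) {t : ℝ} (ht : 0 ≤ t) :
    |∫ τ in Ioc 0 t, A x t τ| ≤ K * (t^(1-β)/(1-β)) := by
  rw [← pow_int_eq h.hβ ht, ← integral_const_mul, ← Real.norm_eq_abs]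
  refine norm_integral_le_of_norm_le ((pow_int h.hβ t).const_mul K) ?_
  filter_upwards [ae_restrict_mem measurableSet_Ioc] with τ hτ using h.bd x t τ hτ.1

lemma Adm.continuous {K β A} (h : Adm K β A) : Continuous fun p : ℝ × ℝ => ∫ τ in Ioc 0 p.2, A p.1 p.2 τ := by
  rw [continuous_iff_continuousAt]
  intro p
  have e : (fun p : ℝ × ℝ => ∫ τ in Ioc 0 p.2, A p.1 p.2 τ) =
      fun p => ∫ τ in Ioi 0, (Ioc 0 p.2).indicator (A p.1 p.2) τ := by
    ext p
    rw [setIntegral_indicator measurableSet_Ioc, inter_eq_self_of_subset_right Ioc_subset_Ioi_self]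
  rw [e]
  refine continuousAt_of_dominated (bound := (Ioc 0 (p.2+1)).indicator fun τ => K * τ^(-β)) ?_ ?_ ?_ ?_
  · exact Filter.Eventually.of_forall fun q => (h.meas _ _).indicator measurableSet_Ioc
  · have : ∀ᶠ q : ℝ × ℝ in nhds p, q.2 < p.2 + 1 :=
      continuous_snd.continuousAt.eventually (gt_mem_nhds (by linarith : p.2 < p.2+1))
    filter_upwards [this] with q hq
    filter_upwards [ae_restrict_mem measurableSet_Ioi] with τ hτ
    by_cases h1 : τ ∈ Ioc 0 q.2
    · rw [indicator_of_mem h1, indicator_of_mem (show τ ∈ Ioc 0 (p.2+1) from ⟨h1.1, by linarith [h1.2]⟩)]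
      exact h.bd _ _ _ hτ
    · rw [indicator_of_notMem h1, norm_zero]
      refine indicator_nonneg (fun τ hτ => (abs_nonneg _).trans (h.bd 0 0 τ hτ.1)) τ
  · rw [integrable_indicator_iff measurableSet_Ioc]
    rw [IntegrableOn, Measure.restrict_restrict measurableSet_Ioc, inter_eq_self_of_subset_left Ioc_subset_Ioi_self]
    exact (pow_int h.hβ _).const_mul K
  · have : ∀ᵐ τ : ℝ ∂(volume.restrict (Ioi 0)), τ ≠ p.2 :=
      ae_restrict_of_ae (Measure.ae_ne volume p.2)
    filter_upwards [this, ae_restrict_mem measurableSet_Ioi] with τ h1 h2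
    rcases lt_or_gt_of_ne h1 with h3 | h3
    · have ev : ∀ᶠ q : ℝ × ℝ in nhds p, τ < q.2 := continuous_snd.continuousAt.eventually (lt_mem_nhds h3)
      have c : ContinuousAt (fun q : ℝ × ℝ => A q.1 q.2 τ) p := by
        have := (h.cont.continuousAt (x := (p.1, p.2, τ))
          ((isOpen_lt continuous_const (by fun_prop)).mem_nhds h2))
        exact ContinuousAt.comp (f := fun q : ℝ × ℝ => (q.1, q.2, τ)) this (by fun_prop)
      refine c.congr ?_
      filter_upwards [ev] with q hq
      rw [indicator_of_mem (show τ ∈ Ioc 0 q.2 from ⟨h2, hq.le⟩)]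
    · have ev : ∀ᶠ q : ℝ × ℝ in nhds p, q.2 < τ := continuous_snd.continuousAt.eventually (gt_mem_nhds h3)
      refine (continuousAt_const (y := (0:ℝ))).congr ?_
      filter_upwards [ev] with q hq
      rw [indicator_of_notMem (fun h => absurd h.2 (not_le.2 hq))]

lemma Adm.deriv {K β A K' β' A'} (h : Adm K β A) (h' : Adm K' β' A')
    (hd : ∀ x t τ, 0 < τ → HasDerivAt (fun x => A x t τ) (A' x t τ) x) (x t : ℝ) :
    HasDerivAt (fun x => ∫ τ in Ioc 0 t, A x t τ) (∫ τ in Ioc 0 t, A' x t τ) x := by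
  have key := hasDerivAt_integral_of_dominated_loc_of_deriv_le (μ := volume.restrict (Ioc 0 t))
    (F := fun x τ => A x t τ) (x₀ := x) (s := univ) (F' := fun x τ => A' x t τ)
    (bound := fun τ => K' * τ^(-β')) Filter.univ_mem
    (Filter.Eventually.of_forall fun x => (h.integ x t t).1) (h.integ x t t) (h'.integ x t t).1 ?_
    ((pow_int h'.hβ t).const_mul K') ?_
  · exact key.2
  · filter_upwards [ae_restrict_mem measurableSet_Ioc] with τ hτ x _ using h'.bd x t τ hτ.1
  · filter_upwards [ae_restrict_mem measurableSet_Ioc] with τ hτ x _ using hd x t τ hτ.1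

lemma Adm.hol {K β A Q γ} (h : Adm K β A) (hγ : γ < 1) {x y t : ℝ} (ht : 0 ≤ t)
    (hq : ∀ τ, 0 < τ → |A x t τ - A y t τ| ≤ Q * τ^(-γ)) :
    |(∫ τ in Ioc 0 t, A x t τ) - ∫ τ in Ioc 0 t, A y t τ| ≤ Q * (t^(1-γ)/(1-γ)) := by
  rw [← integral_sub (h.integ x t t) (h.integ y t t)]
  rw [← pow_int_eq hγ ht, ← integral_const_mul, ← Real.norm_eq_abs]
  refine norm_integral_le_of_norm_le ((pow_int hγ t).const_mul Q) ?_
  filter_upwards [ae_restrict_mem measurableSet_Ioc] with τ hτ using hq τ hτ.1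
end RD

namespace RD

/-- standard deviation at time `τ` -/
def sg (d τ : ℝ) : ℝ := Real.sqrt (2*d*τ)
lemma sg_pos {d τ : ℝ} (hd : 0 < d) (hτ : 0 < τ) : 0 < sg d τ := Real.sqrt_pos.2 (by positivity)
lemma sg_cont (d : ℝ) : Continuous (sg d) := by unfold sg; fun_prop
lemma sg_rpow {d τ : ℝ} (hd : 0 < d) (hτ : 0 < τ) (p : ℝ) : (sg d τ)^p = (2*d)^(p/2) * τ^(p/2) := by
  unfold sg
  rw [Real.sqrt_eq_rpow, ← Real.rpow_mul (by positivity), Real.mul_rpow (by positivity) hτ.le]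
  congr 2 <;> ring
lemma sg_inv {d τ : ℝ} (hd : 0 < d) (hτ : 0 < τ) : (sg d τ)⁻¹ = (2*d)^(-(1/2):ℝ) * τ^(-(1/2):ℝ) := by
  rw [← Real.rpow_neg_one, sg_rpow hd hτ]; norm_num
lemma sg_sq {d τ : ℝ} (hd : 0 < d) (hτ : 0 ≤ τ) : (sg d τ)^2 = 2*d*τ := Real.sq_sqrt (by positivity)

/-- Duhamel kernel -/
def A (k : ℕ) (d c : ℝ) (h : ℝ → ℝ → ℝ) (x t τ : ℝ) : ℝ :=
  ((sg d τ)⁻¹)^k * T k (sg d τ) (fun y => h y (t - τ)) (x + c * τ)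
/-- Duhamel operator -/
def D (k : ℕ) (d c : ℝ) (h : ℝ → ℝ → ℝ) (x t : ℝ) : ℝ := ∫ τ in Ioc 0 t, A k d c h x t τ

/-- bounded continuous -/
def BC (B : ℝ) (h : ℝ → ℝ → ℝ) : Prop := Continuous (fun p : ℝ × ℝ => h p.1 p.2) ∧ ∀ x t, |h x t| ≤ B
/-- uniformly Hölder in space -/
def HU (α H : ℝ) (h : ℝ → ℝ → ℝ) : Prop := ∀ t x y, |h x t - h y t| ≤ H * |x - y|^α

lemma BC.sec {B h} (hb : BC B h) (t : ℝ) : Continuous fun y => h y t :=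
  hb.1.comp (by fun_prop : Continuous fun y : ℝ => (y, t))

variable {d c B : ℝ} {h : ℝ → ℝ → ℝ}

lemma A_cont (hd : 0 < d) (k : ℕ) (hb : BC B h) :
    ContinuousOn (fun p : ℝ × ℝ × ℝ => A k d c h p.1 p.2.1 p.2.2) {p | 0 < p.2.2} := by
  unfold A
  have h1 := T_cont k hb.1 hb.2
  have hs := sg_cont d
  have h2 : Continuous fun p : ℝ × ℝ × ℝ => T k (sg d p.2.2) (fun y => h y (p.2.1 - p.2.2)) (p.1 + c * p.2.2) :=
    h1.comp (by fun_prop : Continuous fun p : ℝ × ℝ × ℝ => (sg d p.2.2, p.1 + c * p.2.2, p.2.1 - p.2.2))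
  refine ContinuousOn.mul (ContinuousOn.pow (ContinuousOn.inv₀ (by fun_prop) ?_) k) h2.continuousOn
  intro p hp
  exact (sg_pos hd hp).ne'

lemma adm0 (hd : 0 < d) (hb : BC B h) : Adm (CE*B) 0 (A 0 d c h) := by
  refine ⟨by norm_num, A_cont hd 0 hb, fun x t τ hτ => ?_⟩
  simp only [A, pow_zero, one_mul, neg_zero, Real.rpow_zero, mul_one]
  exact T_le _ _ _ fun y => hb.2 _ _

lemma adm1 (hd : 0 < d) (hb : BC B h) : Adm (CE*B*(2*d)^(-(1/2):ℝ)) (1/2) (A 1 d c h) := by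
  refine ⟨by norm_num, A_cont hd 1 hb, fun x t τ hτ => ?_⟩
  simp only [A, pow_one]
  rw [abs_mul, abs_of_pos (inv_pos.2 (sg_pos hd hτ)), sg_inv hd hτ]
  calc _ ≤ (2*d)^(-(1/2):ℝ) * τ^(-(1/2):ℝ) * (CE*B) := mul_le_mul_of_nonneg_left (T_le _ _ _ fun y => hb.2 _ _) (by positivity)
    _ = _ := by ring

lemma adm01 (hd : 0 < d) {k : ℕ} (hk : k < 2) (hb : BC B h) : ∃ K β, Adm K β (A k d c h) := by
  interval_cases k
  · exact ⟨_, _, adm0 hd hb⟩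
  · exact ⟨_, _, adm1 hd hb⟩

lemma adm2 (hd : 0 < d) {α H : ℝ} (hα : 0 < α) (hα1 : α < 1) (hb : BC B h) (hh : HU α H h) :
    Adm (CA*H*(2*d)^((α-2)/2)) (1-α/2) (A 2 d c h) := by
  refine ⟨by linarith, A_cont hd 2 hb, fun x t τ hτ => ?_⟩
  simp only [A]
  have hs := sg_pos hd hτ
  have e : (sg d τ)⁻¹^2 * (sg d τ)^α = (2*d)^((α-2)/2) * τ^(-(1-α/2)) := by
    rw [← Real.rpow_natCast, ← Real.rpow_neg_one, ← Real.rpow_mul hs.le, ← Real.rpow_add hs, sg_rpow hd hτ]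
    congr 2 <;> (push_cast; ring)
  rw [abs_mul, abs_of_pos (by positivity)]
  calc _ ≤ (sg d τ)⁻¹^2 * (CA*H*(sg d τ)^α) := mul_le_mul_of_nonneg_left
        (T2_le hs (hb.sec _) hα hα1 (fun y => hb.2 _ _) (hh _) _) (by positivity)
    _ = CA*H*((sg d τ)⁻¹^2 * (sg d τ)^α) := by ring
    _ = _ := by rw [e]; ring

lemma A_deriv (hd : 0 < d) {k : ℕ} (hk : k < 2) (hb : BC B h) (x t τ : ℝ) (hτ : 0 < τ) :
    HasDerivAt (fun x => A k d c h x t τ) (A (k+1) d c h x t τ) x := by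
  unfold A
  have := (T_deriv hk (sg_pos hd hτ) (hb.sec (t-τ)) (fun y => hb.2 y _) (x + c*τ)).comp_add_const x (c*τ)
  exact (this.const_mul ((sg d τ)⁻¹^k)).congr_deriv (by ring)

lemma D_deriv0 (hd : 0 < d) (hb : BC B h) (x t : ℝ) : HasDerivAt (fun x => D 0 d c h x t) (D 1 d c h x t) x :=
  (adm0 hd hb).deriv (adm1 hd hb) (A_deriv hd (by norm_num) hb) x t

lemma D_deriv1 (hd : 0 < d) {α H : ℝ} (hα : 0 < α) (hα1 : α < 1) (hb : BC B h) (hh : HU α H h) (x t : ℝ) :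
    HasDerivAt (fun x => D 1 d c h x t) (D 2 d c h x t) x :=
  (adm1 hd hb).deriv (adm2 hd hα hα1 hb hh) (A_deriv hd (by norm_num) hb) x t

lemma D_cont (hd : 0 < d) {k : ℕ} (hk : k < 2) (hb : BC B h) : Continuous fun p : ℝ × ℝ => D k d c h p.1 p.2 := by
  obtain ⟨K, β, ha⟩ := adm01 (c := c) hd hk hb
  exact ha.continuous

lemma D_hol (hd : 0 < d) {k : ℕ} (hk : k < 2) {α : ℝ} (hα : 0 < α) (hα1 : α < 1) (B : ℝ) {t : ℝ} (ht : 0 ≤ t) :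
    ∃ Q, ∀ h, BC B h → ∀ x y, |D k d c h x t - D k d c h y t| ≤ Q * |x-y|^α := by
  refine ⟨2*(CE*B)*(2*d)^(-(k+α)/2) * (t^(1-(k+α)/2)/(1-(k+α)/2)), fun h hb x y => ?_⟩
  obtain ⟨K, β, ha⟩ := adm01 (c := c) hd hk hb
  have hk' : (k:ℝ) ≤ 1 := by exact_mod_cast Nat.lt_succ_iff.1 hk
  have := ha.hol (x := x) (y := y) (γ := (k+α)/2) (Q := 2*(CE*B)*(2*d)^(-(k+α)/2) * |x-y|^α) (by linarith) ht ?_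
  · refine this.trans (le_of_eq (by ring))
  · intro τ hτ
    have hs := sg_pos hd hτ
    simp only [A]
    rw [← mul_sub, abs_mul, abs_of_pos (by positivity)]
    have h1 := T_hol hk hs (hb.sec (t-τ)) hα hα1 (fun y => hb.2 y _) (x+c*τ) (y+c*τ)
    rw [add_sub_add_right_eq_sub] at h1
    have e : (sg d τ)⁻¹^k * (sg d τ)^(-α) = (2*d)^(-(k+α)/2) * τ^(-((k+α)/2)) := by
      rw [← Real.rpow_natCast, ← Real.rpow_neg_one, ← Real.rpow_mul hs.le, ← Real.rpow_add hs, sg_rpow hd hτ]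
      congr 2 <;> ring
    calc _ ≤ (sg d τ)⁻¹^k * (2*(CE*B)*|x-y|^α*(sg d τ)^(-α)) := mul_le_mul_of_nonneg_left h1 (by positivity)
      _ = 2*(CE*B)*|x-y|^α*((sg d τ)⁻¹^k * (sg d τ)^(-α)) := by ring
      _ = _ := by rw [e]; ring

lemma D_congr (k : ℕ) {h h' : ℝ → ℝ → ℝ} {x t : ℝ} (e : ∀ y s, 0 ≤ s → s < t → h y s = h' y s) :
    D k d c h x t = D k d c h' x t := by
  unfold D
  refine setIntegral_congr_fun measurableSet_Ioc fun τ hτ => ?_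
  simp only [A]
  congr 2; ext y
  exact e y _ (by linarith [hτ.2]) (by linarith [hτ.1])

lemma Adm.swap {K β A} (h : Adm K β A) (σ a t : ℝ) :
    T 0 σ (fun y => ∫ τ in Ioc 0 t, A y t τ) a = ∫ τ in Ioc 0 t, T 0 σ (fun y => A y t τ) a := by
  unfold T
  simp_rw [← integral_const_mul]
  refine integral_integral_swap ?_
  have hI := (E_int.const_mul 4).mul_prod ((pow_int h.hβ t).const_mul K)
  refine hI.mono' ?_ ?_
  · have e : volume.prod (volume.restrict (Ioc 0 t)) = (volume.prod volume).restrict ((univ : Set ℝ) ×ˢ Ioc (0:ℝ) t) := by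
      rw [← Measure.prod_restrict, Measure.restrict_univ]
    rw [e]
    refine ContinuousOn.aestronglyMeasurable ?_ (MeasurableSet.univ.prod measurableSet_Ioc)
    have c1 := psi_cont 0
    refine ContinuousOn.mul (by fun_prop) ?_
    exact h.cont.comp (by fun_prop : Continuous fun p : ℝ × ℝ => (a + σ * p.1, t, p.2)).continuousOn
      fun p hp => hp.2.1
  · have e : ∀ᵐ p : ℝ × ℝ ∂(volume.prod (volume.restrict (Ioc 0 t))), p.2 ∈ Ioc 0 t :=
      Measure.quasiMeasurePreserving_snd.ae (ae_restrict_mem measurableSet_Ioc)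
    filter_upwards [e] with p hp
    simp only [Function.uncurry, norm_mul, Real.norm_eq_abs]
    exact mul_le_mul (psi_le 0 _) (h.bd _ _ _ hp.1) (abs_nonneg _) (by have := E_nn p.1; positivity)

lemma T_trans (k : ℕ) (σ : ℝ) (F : ℝ → ℝ) (a b : ℝ) : T k σ (fun y => F (y + b)) a = T k σ F (a + b) := by
  unfold T; congr 1; ext z; ring_nf

lemma semiA (hd : 0 < d) {k : ℕ} (hk : k < 2) (hb : BC B h) {t τ : ℝ} (ht : 0 < t) (hτ : 0 < τ) (x s : ℝ) :
    T 0 (sg d t) (fun y => A k d c h y s τ) (x + c*t) = A k d c h x (s+t) (t+τ) := by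
  have e : sg d (t+τ)^2 = sg d t^2 + sg d τ^2 := by
    rw [sg_sq hd (by positivity), sg_sq hd ht.le, sg_sq hd hτ.le]; ring
  have e2 : s + t - (t + τ) = s - τ := by ring
  have e3 : x + c*(t+τ) = x + c*t + c*τ := by ring
  simp only [A, e2, e3]
  interval_cases k
  · simp only [pow_zero, one_mul]
    rw [T_trans 0 _ (T 0 (sg d τ) fun y => h y (s-τ))]
    exact T_semi e (hb.sec _) (fun y => hb.2 y _) _
  · simp only [pow_one]
    rw [T_trans 0 _ (fun b => (sg d τ)⁻¹ * T 1 (sg d τ) (fun y => h y (s-τ)) b)]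
    exact T_semi1 (sg_pos hd ht) (sg_pos hd hτ) (sg_pos hd (by positivity)) e (hb.sec _) (fun y => hb.2 y _) _

/-- time shift -/
def sh (ρ : ℝ) (h : ℝ → ℝ → ℝ) : ℝ → ℝ → ℝ := fun x t => h x (ρ + max t 0)

lemma sh_bc (ρ : ℝ) (hb : BC B h) : BC B (sh ρ h) :=
  ⟨hb.1.comp (by fun_prop : Continuous fun p : ℝ × ℝ => (p.1, ρ + max p.2 0)), fun x t => hb.2 _ _⟩

lemma D_split (hd : 0 < d) {k : ℕ} (hk : k < 2) (hb : BC B h) {ρ t : ℝ} (hρ : 0 ≤ ρ) (ht : 0 < t) (x : ℝ) :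
    D k d c h x (ρ+t) = T 0 (sg d t) (fun y => D k d c h y ρ) (x + c*t) + D k d c (sh ρ h) x t := by
  obtain ⟨K, β, ha⟩ := adm01 (c := c) hd hk hb
  have h1 : D k d c h x (ρ+t) = (∫ τ in Ioc 0 t, A k d c h x (ρ+t) τ) + ∫ τ in Ioc t (t+ρ), A k d c h x (ρ+t) τ := by
    have := ha.integ x (ρ+t) (t+ρ)
    unfold D
    rw [← setIntegral_union (Ioc_disjoint_Ioc_of_le le_rfl) measurableSet_Ioc
      (this.mono_set (Ioc_subset_Ioc_right (by linarith))) (this.mono_set (Ioc_subset_Ioc_left ht.le)),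
      Ioc_union_Ioc_eq_Ioc ht.le (by linarith), add_comm ρ t]
  have h2 : (∫ τ in Ioc 0 t, A k d c h x (ρ+t) τ) = D k d c (sh ρ h) x t := by
    refine setIntegral_congr_fun measurableSet_Ioc fun τ hτ => ?_
    simp only [A, sh]
    congr 2; ext y
    rw [max_eq_left (by linarith [hτ.2]), add_sub_assoc]
  have h3 : (∫ τ in Ioc t (t+ρ), A k d c h x (ρ+t) τ) = T 0 (sg d t) (fun y => D k d c h y ρ) (x + c*t) := by
    unfold D
    rw [ha.swap]
    rw [← intervalIntegral.integral_of_le (by linarith), ← intervalIntegral.integral_of_le hρ]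
    have := intervalIntegral.integral_comp_add_left (a := 0) (b := ρ) (fun τ => A k d c h x (ρ+t) τ) t
    rw [add_zero] at this
    rw [← this, intervalIntegral.integral_of_le hρ, intervalIntegral.integral_of_le hρ]
    refine setIntegral_congr_fun measurableSet_Ioc fun τ hτ => ?_
    beta_reduce
    rw [semiA hd hk hb ht hτ.1]
  rw [h1, h2, h3]; ring

/-- mild solutions -/
def Mild (d c : ℝ) (u f g : ℝ → ℝ → ℝ) : Prop := ∀ x t, 0 ≤ t →
  u x t = T 0 (sg d t) (fun y => u y 0) (x + c*t) + D 0 d c f x t + D 1 d c g x t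

lemma D_zero (k : ℕ) (x : ℝ) : D k d c h x 0 = 0 := by simp [D]

lemma D_bd (hd : 0 < d) {k : ℕ} (hk : k < 2) (hb : BC B h) {t : ℝ} (ht : 0 ≤ t) :
    ∃ B', ∀ y, |D k d c h y t| ≤ B' := by
  obtain ⟨K, β, ha⟩ := adm01 (c := c) hd hk hb
  exact ⟨_, fun y => ha.le y ht⟩

lemma Mild.restart {u f g : ℝ → ℝ → ℝ} (hm : Mild d c u f g) (hd : 0 < d) (hu : BC B u) (hf : BC B f) (hg : BC B g)
    {ρ : ℝ} (hρ : 0 < ρ) : Mild d c (sh ρ u) (sh ρ f) (sh ρ g) := by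
  intro x t ht
  rcases ht.eq_or_lt with rfl | ht
  · simp [D_zero, sg, T_zero]
  have e1 : sh ρ u x t = u x (ρ+t) := by simp [sh, ht.le]
  have e2 : (fun y => sh ρ u y 0) = fun y => (T 0 (sg d ρ) (fun z => u z 0) (y + c*ρ) + D 0 d c f y ρ) + D 1 d c g y ρ := by
    ext y; simp only [sh, max_self, add_zero]; exact hm y ρ hρ.le
  obtain ⟨B0, hB0⟩ := D_bd (c := c) hd (k := 0) (by norm_num) hf hρ.le
  obtain ⟨B1, hB1⟩ := D_bd (c := c) hd (k := 1) (by norm_num) hg hρ.le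
  have c0 : Continuous fun y => D 0 d c f y ρ := (D_cont hd (k := 0) (by norm_num) hf).comp (by fun_prop : Continuous fun y : ℝ => (y, ρ))
  have c1 : Continuous fun y => D 1 d c g y ρ := (D_cont hd (k := 1) (by norm_num) hg).comp (by fun_prop : Continuous fun y : ℝ => (y, ρ))
  have cT := T0_cont' (σ := sg d ρ) 0 (hu.sec 0) (fun y => hu.2 y 0)
  have bT : ∀ y, |T 0 (sg d ρ) (fun z => u z 0) (y + c*ρ)| ≤ CE * B := fun y => T_le _ _ _ (fun y => hu.2 y 0)
  rw [e1, e2, T_add 0 _ _ (by fun_prop) c1 (fun y => (abs_add_le _ _).trans (add_le_add (bT y) (hB0 y))) hB1,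
    T_add 0 _ _ (by fun_prop) c0 bT hB0, hm x (ρ+t) (by positivity), D_split hd (by norm_num) hf hρ.le ht,
    D_split hd (by norm_num) hg hρ.le ht, T_trans 0 _ (T 0 (sg d ρ) fun z => u z 0),
    T_semi (σ := sg d (ρ+t)) _ (hu.sec 0) (fun y => hu.2 y 0)]
  · rw [show x + c*(ρ+t) = x + c*t + c*ρ by ring]; ring
  · rw [sg_sq hd (by positivity), sg_sq hd ht.le, sg_sq hd hρ.le]; ring

end RD

namespace RD

variable {d c B : ℝ} {h u f g : ℝ → ℝ → ℝ}

lemma BC.mono {B B' h} (hb : BC B h) (hB : B ≤ B') : BC B' h := ⟨hb.1, fun x t => (hb.2 x t).trans hB⟩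

lemma Mild.back (hm : Mild d c u f g) (hd : 0 < d) (hu : BC B u) (hf : BC B f) (hg : BC B g)
    {q t : ℝ} (hq : 0 ≤ q) (hqt : q < t) (x : ℝ) :
    u x t = T 0 (sg d q) (fun y => u y (t-q)) (x + c*q) + D 0 d c (sh (t-q) f) x q + D 1 d c (sh (t-q) g) x q := by
  have := hm.restart hd hu hf hg (ρ := t - q) (by linarith) x q hq
  simpa [sh, hq] using this

lemma Mild.hol (hm : Mild d c u f g) (hd : 0 < d) (hu : BC B u) (hf : BC B f) (hg : BC B g)
    {α : ℝ} (hα : 0 < α) (hα1 : α < 1) {ρ : ℝ} (hρ : 0 < ρ) : ∃ H, HU α H (sh ρ u) := by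
  obtain ⟨Q0, h0⟩ := D_hol (c := c) hd (k := 0) (by norm_num) hα hα1 B (t := ρ/2) (by positivity)
  obtain ⟨Q1, h1⟩ := D_hol (c := c) hd (k := 1) (by norm_num) hα hα1 B (t := ρ/2) (by positivity)
  refine ⟨2*(CE*B)*(sg d (ρ/2))^(-α) + Q0 + Q1, fun t x y => ?_⟩
  simp only [sh]
  set t' := ρ + max t 0 with ht'
  have ht : ρ ≤ t' := by simp [ht']
  have e := hm.back hd hu hf hg (q := ρ/2) (t := t') (by positivity) (by linarith)
  rw [e x, e y]
  have a0 := h0 _ (sh_bc (t'-ρ/2) hf) x y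
  have a1 := h1 _ (sh_bc (t'-ρ/2) hg) x y
  have a2 := T_hol (k := 0) (by norm_num) (sg_pos hd (half_pos hρ)) (hu.sec (t'-ρ/2)) hα hα1 (fun y => hu.2 y _)
    (x + c*(ρ/2)) (y + c*(ρ/2))
  rw [add_sub_add_right_eq_sub] at a2
  rw [abs_le] at *
  constructor <;> linarith [a0.1, a0.2, a1.1, a1.2, a2.1, a2.2]

/-- formula for the space derivative -/
lemma Mild.dx (hm : Mild d c u f g) (hd : 0 < d) (hu : BC B u) (hf : BC B f) (hg : BC B g)
    {α H : ℝ} (hα : 0 < α) (hα1 : α < 1) (hh : HU α H g) (x : ℝ) {t : ℝ} (ht : 0 < t) :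
    HasDerivAt (fun x => u x t) ((sg d t)⁻¹ * T 1 (sg d t) (fun y => u y 0) (x + c*t) + D 1 d c f x t + D 2 d c g x t) x := by
  have e : (fun x => u x t) = fun x => T 0 (sg d t) (fun y => u y 0) (x + c*t) + D 0 d c f x t + D 1 d c g x t := by
    ext x; exact hm x t ht.le
  rw [e]
  have h1 := (T_deriv (k := 0) (by norm_num) (sg_pos hd ht) (hu.sec 0) (fun y => hu.2 y _) (x + c*t)).comp_add_const x (c*t)
  exact (h1.fun_add (D_deriv0 hd hf x t)).fun_add (D_deriv1 hd hα hα1 hg hh x t)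

lemma T_cont_t (hd : 0 < d) (hu : BC B u) (k : ℕ) : 
    ContinuousOn (fun p : ℝ × ℝ => ((sg d p.2)⁻¹)^k * T k (sg d p.2) (fun y => u y 0) (p.1 + c*p.2)) {p | 0 < p.2} := by
  have h1 := T_cont k hu.1 hu.2
  have hs := sg_cont d
  have h2 : Continuous fun p : ℝ × ℝ => T k (sg d p.2) (fun y => u y 0) (p.1 + c * p.2) :=
    h1.comp (by fun_prop : Continuous fun p : ℝ × ℝ => (sg d p.2, p.1 + c * p.2, (0:ℝ)))
  refine ContinuousOn.mul (ContinuousOn.pow (ContinuousOn.inv₀ (by fun_prop) ?_) k) h2.continuousOn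
  intro p hp
  exact (sg_pos hd hp).ne'

lemma sh_HU {α H : ℝ} (ρ : ℝ) (hh : HU α H h) : HU α H (sh ρ h) := fun t x y => hh _ x y

lemma sh_cont {X : ℝ → ℝ → ℝ} {ρ : ℝ} (hρ : 0 < ρ) (hX : ContinuousOn (fun p : ℝ × ℝ => X p.1 p.2) {p | 0 < p.2}) :
    Continuous (fun p : ℝ × ℝ => sh ρ X p.1 p.2) := by
  unfold sh
  exact hX.comp_continuous (f := fun p : ℝ × ℝ => (p.1, ρ + max p.2 0)) (by fun_prop) fun p => by
    have := le_max_right p.2 0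
    show 0 < ρ + max p.2 0
    linarith

/-- stage B -/
lemma Mild.stageB (hm : Mild d c u f g) (hd : 0 < d) (hu : BC B u) (hf : BC B f) (hg : BC B g)
    {α H : ℝ} (hα : 0 < α) (hα1 : α < 1) (hh : HU α H g) {ρ : ℝ} (hρ : 0 < ρ) :
    ∃ X B', BC B' X ∧ ∀ x t, HasDerivAt (fun x => sh ρ u x t) (X x t) x := by
  set X : ℝ → ℝ → ℝ := fun x t => (sg d t)⁻¹ * T 1 (sg d t) (fun y => u y 0) (x + c*t) + D 1 d c f x t + D 2 d c g x t with hX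
  have cX : ContinuousOn (fun p : ℝ × ℝ => X p.1 p.2) {p | 0 < p.2} := by
    have := T_cont_t (c := c) hd hu 1
    simp only [pow_one] at this
    exact (this.add (D_cont hd (k := 1) (by norm_num) hf).continuousOn).add (adm2 hd hα hα1 hg hh).continuous.continuousOn
  refine ⟨sh ρ X, (sg d (ρ/2))⁻¹ * (CE*B) + CE*B*(2*d)^(-(1/2):ℝ) * ((ρ/2)^(1-1/2:ℝ)/(1-1/2)) + 
    CA*H*(2*d)^((α-2)/2) * ((ρ/2)^(1-(1-α/2))/(1-(1-α/2))), ⟨sh_cont hρ cX, fun x t => ?_⟩, fun x t => ?_⟩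
  · simp only [sh]
    set t' := ρ + max t 0 with ht'
    have ht : ρ ≤ t' := by simp [ht']
    have e1 := hm.dx hd hu hf hg hα hα1 hh x (t := t') (by linarith)
    have e2 := (hm.restart hd hu hf hg (ρ := t' - ρ/2) (by linarith)).dx hd (sh_bc _ hu) (sh_bc _ hf) (sh_bc _ hg) hα hα1 (sh_HU _ hh)
      x (t := ρ/2) (half_pos hρ)
    have e3 : (fun x => sh (t'-ρ/2) u x (ρ/2)) = fun x => u x t' := by
      ext x; simp [sh, (half_pos hρ).le]
    rw [e3] at e2
    have e4 := e1.unique e2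
    change |X x t'| ≤ _
    simp only [hX]
    rw [e4]
    refine (abs_add_le _ _).trans (add_le_add ((abs_add_le _ _).trans (add_le_add ?_ ?_)) ?_)
    · have := sg_pos hd (half_pos hρ)
      rw [abs_mul, abs_of_pos (inv_pos.2 this)]
      exact mul_le_mul_of_nonneg_left (T_le _ _ _ fun y => (sh_bc _ hu).2 _ _) (inv_pos.2 this).le
    · exact (adm1 hd (sh_bc _ hf)).le x (half_pos hρ).le
    · exact (adm2 hd hα hα1 (sh_bc _ hg) (sh_HU _ hh)).le x (half_pos hρ).le
  · simp only [sh]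
    exact hm.dx hd hu hf hg hα hα1 hh x (t := ρ + max t 0) (by have := le_max_right t 0; linarith)

lemma BC_zero (hB : 0 ≤ B) : BC B (fun _ _ => 0) := ⟨by fun_prop, by simpa⟩
lemma D_of_zero (k : ℕ) (x t : ℝ) : D k d c (fun _ _ => 0) x t = 0 := by simp [D, A, T]
lemma HU_zero {α H : ℝ} (hH : 0 ≤ H) : HU α H (fun _ _ => 0) := fun t x y => by simp; positivity
lemma BC.nn (hb : BC B h) : 0 ≤ B := (abs_nonneg _).trans (hb.2 0 0)

/-- conversion of divergence terms -/
lemma Mild.conv (hm : Mild d c u f g) (hd : 0 < d) (hf : BC B f) (hg : BC B g) {g' : ℝ → ℝ → ℝ} {B' : ℝ} (hg' : BC B' g')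
    (hgd : ∀ x t, HasDerivAt (fun x => g x t) (g' x t) x) :
    Mild d c u (fun x t => f x t + g' x t) (fun _ _ => 0) := by
  intro x t ht
  rw [hm x t ht, D_of_zero, add_zero, add_assoc]
  congr 1
  unfold D
  rw [← integral_add ((adm0 hd hf).integ x t t) ((adm1 hd hg).integ x t t)]
  refine setIntegral_congr_fun measurableSet_Ioc fun τ hτ => ?_
  simp only [A, pow_zero, one_mul, pow_one]
  rw [(T_ibp (sg_pos hd hτ.1) (fun x => hgd x (t-τ)) (hg'.sec _) (fun y => hg.2 y _) (fun y => hg'.2 y _) _).2,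
    T_add 0 _ _ (hf.sec _) (hg'.sec _) (fun y => hf.2 y _) (fun y => hg'.2 y _)]

/-- stage C -/
lemma Mild.stageC (hm : Mild d c u f (fun _ _ => 0)) (hd : 0 < d) (hu : BC B u) (hf : BC B f)
    {X : ℝ → ℝ → ℝ} (hX : ∀ x t, HasDerivAt (fun x => u x t) (X x t) x)
    {α : ℝ} (hα : 0 < α) (hα1 : α < 1) {ρ : ℝ} (hρ : 0 < ρ) : ∃ H, HU α H (sh ρ X) := by
  obtain ⟨Q1, h1⟩ := D_hol (c := c) hd (k := 1) (by norm_num) hα hα1 B (t := ρ/2) (by positivity)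
  refine ⟨(sg d (ρ/2))⁻¹*(2*(CE*B)*(sg d (ρ/2))^(-α)) + Q1, fun t x y => ?_⟩
  simp only [sh]
  set t' := ρ + max t 0 with ht'
  have ht : ρ ≤ t' := by simp [ht']
  have e : ∀ x, X x t' = (sg d (ρ/2))⁻¹ * T 1 (sg d (ρ/2)) (fun y => u y (t'-ρ/2)) (x + c*(ρ/2)) + D 1 d c (sh (t'-ρ/2) f) x (ρ/2) := by
    intro x
    have z : sh (t'-ρ/2) (fun _ _ => (0:ℝ)) = fun _ _ => 0 := rfl
    have e2 := (hm.restart hd hu hf (BC_zero hu.nn) (ρ := t' - ρ/2) (by linarith)).dx hd (sh_bc _ hu) (sh_bc _ hf)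
      (BC_zero hu.nn) hα hα1 (HU_zero (α := α) le_rfl) x (t := ρ/2) (half_pos hρ)
    have e3 : (fun x => sh (t'-ρ/2) u x (ρ/2)) = fun x => u x t' := by
      ext x; simp [sh, (half_pos hρ).le]
    rw [e3, z, D_of_zero, add_zero] at e2
    rw [(hX x t').unique e2]
    simp [sh]
  rw [e x, e y]
  have a1 := h1 _ (sh_bc (t'-ρ/2) hf) x y
  have s := sg_pos hd (half_pos hρ)
  have a2 := T_hol (k := 1) (by norm_num) s (hu.sec (t'-ρ/2)) hα hα1 (fun y => hu.2 y _)
    (x + c*(ρ/2)) (y + c*(ρ/2))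
  rw [add_sub_add_right_eq_sub] at a2
  have a3 := mul_le_mul_of_nonneg_left a2 (inv_pos.2 s).le
  rw [← abs_of_pos (inv_pos.2 s), ← abs_mul, abs_of_pos (inv_pos.2 s), mul_sub] at a3
  rw [abs_le] at *
  constructor <;> linarith [a1.1, a1.2, a3.1, a3.2]

/-- stage D, second space derivative -/
lemma Mild.stageD (hm : Mild d c u f (fun _ _ => 0)) (hd : 0 < d) (hu : BC B u) (hf : BC B f)
    {X : ℝ → ℝ → ℝ} (hX : ∀ x t, HasDerivAt (fun x => u x t) (X x t) x)
    {α H : ℝ} (hα : 0 < α) (hα1 : α < 1) (hh : HU α H f) :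
    ∃ Y : ℝ → ℝ → ℝ, ContinuousOn (fun p : ℝ × ℝ => Y p.1 p.2) {p | 0 < p.2} ∧ (∀ t, 0 < t → ∃ B', ∀ x, |Y x t| ≤ B') ∧
      ∀ x t, 0 < t → HasDerivAt (fun x => X x t) (Y x t) x := by
  refine ⟨fun x t => ((sg d t)⁻¹)^2 * T 2 (sg d t) (fun y => u y 0) (x + c*t) + D 2 d c f x t, ?_, ?_, ?_⟩
  · exact (T_cont_t (c := c) hd hu 2).add (adm2 hd hα hα1 hf hh).continuous.continuousOn
  · intro t ht
    refine ⟨((sg d t)⁻¹)^2 * (CE*B) + CA*H*(2*d)^((α-2)/2) * (t^(1-(1-α/2))/(1-(1-α/2))), fun x => ?_⟩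
    refine (abs_add_le _ _).trans (add_le_add ?_ ?_)
    · rw [abs_mul, abs_of_nonneg (sq_nonneg _)]
      exact mul_le_mul_of_nonneg_left (T_le _ _ _ fun y => hu.2 _ _) (sq_nonneg _)
    · exact (adm2 hd hα hα1 hf hh).le x ht.le
  · intro x t ht
    have e : (fun x => X x t) = fun x => (sg d t)⁻¹ * T 1 (sg d t) (fun y => u y 0) (x + c*t) + D 1 d c f x t := by
      ext x
      have e2 := hm.dx hd hu hf (BC_zero hu.nn) hα hα1 (HU_zero (α := α) le_rfl) x (t := t) ht
      rw [(hX x t).unique e2, D_of_zero, add_zero]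
    rw [e]
    have h1 := (T_deriv (k := 1) (by norm_num) (sg_pos hd ht) (hu.sec 0) (fun y => hu.2 y _) (x + c*t)).comp_add_const x (c*t)
    exact ((h1.const_mul _).fun_add (D_deriv1 hd hα hα1 hf hh x t)).congr_deriv (by ring)

end RD

namespace RD

variable {d c B : ℝ} {h u f g : ℝ → ℝ → ℝ}

lemma sg_deriv (hd : 0 < d) {η : ℝ} (hη : 0 < η) : HasDerivAt (sg d) (d * (sg d η)⁻¹) η := by
  have h1 : HasDerivAt (fun η : ℝ => 2*d*η) (2*d*1) η := (hasDerivAt_id η).const_mul (2*d)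
  have := h1.sqrt (by positivity)
  refine this.congr_deriv ?_
  have : 0 < Real.sqrt (2*d*η) := Real.sqrt_pos.2 (by positivity)
  unfold sg
  field_simp

lemma heat_deriv (hd : 0 < d) {w w1 w2 : ℝ → ℝ} {B B1 B2 : ℝ} (h1 : ∀ x, HasDerivAt w (w1 x) x) (h2 : ∀ x, HasDerivAt w1 (w2 x) x)
    (c2 : Continuous w2) (b0 : ∀ x, |w x| ≤ B) (b1 : ∀ x, |w1 x| ≤ B1) (b2 : ∀ x, |w2 x| ≤ B2) (x : ℝ) {η : ℝ} (hη : 0 < η) :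
    HasDerivAt (fun η => T 0 (sg d η) w (x + c*η)) (d * T 0 (sg d η) w2 (x+c*η) + c * T 0 (sg d η) w1 (x + c*η)) η := by
  have c0 : Continuous w := continuous_iff_continuousAt.2 fun x => (h1 x).continuousAt
  have c1 : Continuous w1 := continuous_iff_continuousAt.2 fun x => (h2 x).continuousAt
  have hs := sg_pos hd hη
  have p0 := psi_cont 0
  have p1 := psi_cont 1
  have hB1 : 0 ≤ B1 := (abs_nonneg _).trans (b1 0)
  have key := hasDerivAt_integral_of_dominated_loc_of_deriv_le (μ := volume)
    (F := fun η z => psi 0 z * w (x + c*η + sg d η * z)) (x₀ := η) (s := Ioi (η/2))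
    (F' := fun η z => psi 0 z * (w1 (x + c*η + sg d η * z) * (c + d*(sg d η)⁻¹*z)))
    (bound := fun z => 4 * E z * (1+|z|) * (B1 * (|c| + d*(sg d (η/2))⁻¹))) (Ioi_mem_nhds (by linarith))
    (Filter.Eventually.of_forall fun x => (by fun_prop : Continuous _).aestronglyMeasurable)
    (int_psi_mul 0 (q := fun z => w (x + c*η + sg d η * z)) (by fun_prop) (fun y => b0 _)) (by fun_prop : Continuous _).aestronglyMeasurable ?_ (CA_int.mul_const _) ?_
  · have k2 := key.2
    have e : (∫ z, psi 0 z * (w1 (x + c*η + sg d η * z) * (c + d*(sg d η)⁻¹*z))) = d * T 0 (sg d η) w2 (x+c*η) + c * T 0 (sg d η) w1 (x + c*η) := by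
      rw [← (T_ibp hs h2 c2 b1 b2 _).2]
      unfold T
      rw [← integral_const_mul, ← integral_const_mul, ← integral_const_mul, ← integral_add]
      · congr 1; ext z; simp only [psi]; ring
      · exact ((int_psi_mul 1 (q := fun z => w1 (x + c*η + sg d η * z)) (by fun_prop) (fun y => b1 _)).const_mul _).const_mul _
      · exact (int_psi_mul 0 (q := fun z => w1 (x + c*η + sg d η * z)) (by fun_prop) (fun y => b1 _)).const_mul _
    rw [e] at k2
    exact k2
  · refine Filter.Eventually.of_forall fun z s hs => ?_
    have hs' : η/2 < s := hs
    have q1 : 0 < sg d (η/2) := sg_pos hd (by linarith)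
    have q2 : sg d (η/2) ≤ sg d s := Real.sqrt_le_sqrt (by nlinarith)
    have q3 : (sg d s)⁻¹ ≤ (sg d (η/2))⁻¹ := inv_anti₀ q1 q2
    have q4 : 0 < (sg d s)⁻¹ := inv_pos.2 (q1.trans_le q2)
    simp only [norm_mul, Real.norm_eq_abs]
    have r1 : |c + d*(sg d s)⁻¹*z| ≤ (1+|z|) * (|c| + d*(sg d (η/2))⁻¹) := by
      refine (abs_add_le _ _).trans ?_
      rw [abs_mul, abs_of_pos (by positivity : 0 < d * (sg d s)⁻¹)]
      have := mul_le_mul_of_nonneg_left q3 hd.le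
      nlinarith [abs_nonneg z, abs_nonneg c, mul_nonneg (abs_nonneg z) (abs_nonneg c), mul_le_mul_of_nonneg_right this (abs_nonneg z), mul_pos hd (q4.trans_le q3)]
    calc _ ≤ (4*E z) * (B1 * ((1+|z|) * (|c| + d*(sg d (η/2))⁻¹))) :=
          mul_le_mul (psi_le 0 z) (mul_le_mul (b1 _) r1 (abs_nonneg _) hB1) (by positivity) (by have := E_nn z; positivity)
      _ = _ := by ring
  · refine Filter.Eventually.of_forall fun z s hs => ?_
    have hs' : 0 < s := by have : η/2 < s := hs; linarith
    have i1 : HasDerivAt (fun η => x + c*η + sg d η * z) (c*1 + d*(sg d s)⁻¹*z) s :=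
      (((hasDerivAt_id s).const_mul c).const_add x).add ((sg_deriv hd hs').mul_const z)
    have := ((h1 (x + c*s + sg d s*z)).comp s i1).const_mul (psi 0 z)
    exact this.congr_deriv (by ring)

lemma heat_right (hd : 0 < d) {w w1 w2 : ℝ → ℝ} {B B1 B2 : ℝ} (h1 : ∀ x, HasDerivAt w (w1 x) x) (h2 : ∀ x, HasDerivAt w1 (w2 x) x)
    (c2 : Continuous w2) (b0 : ∀ x, |w x| ≤ B) (b1 : ∀ x, |w1 x| ≤ B1) (b2 : ∀ x, |w2 x| ≤ B2) (x : ℝ) :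
    HasDerivWithinAt (fun η => T 0 (sg d η) w (x + c*η)) (d * w2 x + c * w1 x) (Ici 0) 0 := by
  have c0 : Continuous w := continuous_iff_continuousAt.2 fun x => (h1 x).continuousAt
  have c1 : Continuous w1 := continuous_iff_continuousAt.2 fun x => (h2 x).continuousAt
  have hs := sg_cont d
  have ct : ∀ {w : ℝ → ℝ} {B : ℝ}, Continuous w → (∀ x, |w x| ≤ B) → Continuous fun η => T 0 (sg d η) w (x + c*η) := by
    intro w B cw bw
    have := T_cont 0 (h := fun x _ => w x) (by fun_prop) (fun x _ => bw x)
    exact this.comp (by fun_prop : Continuous fun η : ℝ => (sg d η, x + c*η, (0:ℝ)))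
  have D := fun η (hη : 0 < η) => heat_deriv (c := c) hd h1 h2 c2 b0 b1 b2 x hη
  refine hasDerivWithinAt_Ici_of_tendsto_deriv (s := Ioi 0) (fun η hη => (D η hη).differentiableAt.differentiableWithinAt)
    (ct c0 b0).continuousWithinAt self_mem_nhdsWithin ?_
  have c3 : Continuous fun η => d * T 0 (sg d η) w2 (x+c*η) + c * T 0 (sg d η) w1 (x + c*η) :=
    ((ct c2 b2).const_mul d).add ((ct c1 b1).const_mul c)
  have c4 := c3.tendsto 0
  have z : sg d 0 = 0 := by simp [sg]
  simp only [z, T_zero, mul_zero, add_zero] at c4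
  refine (c4.mono_left nhdsWithin_le_nhds).congr' ?_
  filter_upwards [self_mem_nhdsWithin] with η hη
  exact (D η hη).deriv.symm

lemma D0_right (hf : BC B f) (x : ℝ) : HasDerivWithinAt (fun η => D 0 d c f x η) (f x 0) (Ici 0) 0 := by
  have hs := sg_cont d
  have cA : Continuous fun p : ℝ × ℝ => A 0 d c f x p.1 (p.1*p.2) := by
    simp only [A, pow_zero, one_mul]
    exact (T_cont 0 hf.1 hf.2).comp (by fun_prop : Continuous fun p : ℝ × ℝ => (sg d (p.1*p.2), x + c*(p.1*p.2), p.1-p.1*p.2))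
  have cm : Continuous fun η : ℝ => ∫ s in (0:ℝ)..1, A 0 d c f x η (η*s) :=
    intervalIntegral.continuous_parametric_intervalIntegral_of_continuous' cA 0 1
  have e : ∀ η ∈ Ici (0:ℝ), D 0 d c f x η = η * ∫ s in (0:ℝ)..1, A 0 d c f x η (η*s) := by
    intro η hη
    rw [intervalIntegral.mul_integral_comp_mul_left, mul_zero, mul_one, intervalIntegral.integral_of_le hη]; rfl
  have m0 : ∫ s in (0:ℝ)..1, A 0 d c f x 0 (0*s) = f x 0 := by
    simp [A, sg, T_zero]
  have h1 : HasDerivAt (fun η => η * ∫ s in (0:ℝ)..1, A 0 d c f x η (η*s)) (f x 0) 0 := by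
    rw [hasDerivAt_iff_tendsto_slope_zero]
    have := (cm.tendsto 0)
    rw [m0] at this
    refine (this.mono_left nhdsWithin_le_nhds).congr' ?_
    filter_upwards [self_mem_nhdsWithin] with η hη
    have : η ≠ 0 := hη
    simp only [zero_add, zero_mul, sub_zero, smul_eq_mul]
    field_simp
  exact h1.hasDerivWithinAt.congr e (e 0 self_mem_Ici)

lemma Mild.stageE (hm : Mild d c u f (fun _ _ => 0)) (hd : 0 < d) (hu : BC B u) (hf : BC B f)
    {X Y : ℝ → ℝ → ℝ} {B1 : ℝ} (bX : BC B1 X) (hX : ∀ x t, HasDerivAt (fun x => u x t) (X x t) x)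
    (cY : ContinuousOn (fun p : ℝ × ℝ => Y p.1 p.2) {p | 0 < p.2}) (bY : ∀ t, 0 < t → ∃ B', ∀ x, |Y x t| ≤ B')
    (hY : ∀ x t, 0 < t → HasDerivAt (fun x => X x t) (Y x t) x) (x : ℝ) {t : ℝ} (ht : 0 < t) :
    HasDerivAt (fun t => u x t) (d * Y x t + c * X x t + f x t) t := by
  have R : ∀ s, 0 < s → HasDerivWithinAt (fun t => u x t) (d * Y x s + c * X x s + f x s) (Ici s) s := by
    intro s hs
    obtain ⟨B2, hB2⟩ := bY s hs
    have e : ∀ η ∈ Ici (0:ℝ), u x (s+η) = T 0 (sg d η) (fun y => u y s) (x + c*η) + D 0 d c (sh s f) x η := by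
      intro η hη
      have := hm.restart hd hu hf (BC_zero hu.nn) hs x η hη
      have z : sh s (fun _ _ => (0:ℝ)) = fun _ _ => 0 := rfl
      rw [z, D_of_zero, add_zero] at this
      simpa [sh, max_eq_left (show (0:ℝ) ≤ η from hη)] using this
    have cYs : Continuous fun x => Y x s := cY.comp_continuous (f := fun x : ℝ => (x, s)) (by fun_prop) fun _ => hs
    have h1 := heat_right (c := c) hd (fun x => hX x s) (fun x => hY x s hs) cYs (fun y => hu.2 y s) (fun y => bX.2 y s) hB2 x
    have h2 := h1.fun_add (D0_right (d := d) (c := c) (sh_bc s hf) x)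
    have h3 := h2.congr (f₁ := fun η => u x (s+η)) e (e 0 self_mem_Ici)
    have z : sh s f x 0 = f x s := by simp [sh]
    rw [z] at h3
    have h4 : HasDerivWithinAt (fun t : ℝ => t - s) 1 (Ici s) s := ((hasDerivAt_id s).sub_const s).hasDerivWithinAt
    have h5 := HasDerivWithinAt.scomp_of_eq (h := fun t : ℝ => t - s) (g₁ := fun η => u x (s+η)) (t' := Ici 0) s h3 h4
      (fun t ht => by have : s ≤ t := ht; simpa using this) (by simp)
    have e5 : (fun η => u x (s+η)) ∘ (fun t : ℝ => t - s) = fun t => u x t := by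
      ext t; simp
    rw [e5, one_smul] at h5
    exact h5
  set r : ℝ → ℝ := fun s => d * Y x s + c * X x s + f x s with hr
  have cr : ContinuousOn r (Ioi 0) := by
    have i1 : ContinuousOn (fun s => Y x s) (Ioi 0) :=
      cY.comp (f := fun s : ℝ => (x, s)) (by fun_prop) fun s hs => hs
    have i2 : Continuous (fun s => X x s) := bX.1.comp (by fun_prop : Continuous fun s : ℝ => (x, s))
    have i3 : Continuous (fun s => f x s) := hf.1.comp (by fun_prop : Continuous fun s : ℝ => (x, s))
    fun_prop
  have ii : ∀ a b, 0 < a → a ≤ b → IntervalIntegrable r volume a b := fun a b ha hab =>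
    ContinuousOn.intervalIntegrable_of_Icc hab (cr.mono fun y hy => ha.trans_le hy.1)
  have ft : ∀ s, t/2 ≤ s → HasDerivAt (fun b => u x (t/2) + ∫ τ in (t/2)..b, r τ) (r s) s := by
    intro s hs
    have s0 : 0 < s := by linarith
    refine HasDerivAt.const_add _ (intervalIntegral.integral_hasDerivAt_right (ii _ _ (by linarith) hs) ?_ ?_)
    · exact cr.stronglyMeasurableAtFilter isOpen_Ioi s s0
    · exact cr.continuousAt (Ioi_mem_nhds s0)
  have i2 : Continuous (fun s => u x s) := hu.1.comp (by fun_prop : Continuous fun s : ℝ => (x, s))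
  have eq := eq_of_has_deriv_right_eq (a := t/2) (b := 2*t) (fun s hs => R s (by linarith [hs.1]))
    (fun s hs => (ft s hs.1).hasDerivWithinAt) i2.continuousOn
    (fun s hs => (ft s hs.1).continuousAt.continuousWithinAt) (by simp)
  refine (ft t (by linarith)).congr_of_eventuallyEq ?_
  filter_upwards [Icc_mem_nhds (show t/2 < t by linarith) (show t < 2*t by linarith)] with s hs
  exact eq s hs

end RD

namespace RD

lemma box_bd {h : ℝ × ℝ → ℝ} (hc : Continuous h) (B : ℝ) : ∃ K, 0 ≤ K ∧ ∀ a b, |a| ≤ B → |b| ≤ B → |h (a,b)| ≤ K := by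
  obtain ⟨K, hK⟩ := (isCompact_closedBall (0:ℝ×ℝ) B).exists_bound_of_continuousOn hc.continuousOn
  refine ⟨max K 0, le_max_right _ _, fun a b ha hb => (hK (a,b) ?_).trans (le_max_left _ _)⟩
  rw [mem_closedBall_zero_iff, Prod.norm_def]; exact max_le ha hb

lemma box_lip {h : ℝ × ℝ → ℝ} (hc : ContDiff ℝ 1 h) (B : ℝ) : ∃ L, 0 ≤ L ∧ ∀ a b a' b', |a| ≤ B → |b| ≤ B → |a'| ≤ B → |b'| ≤ B →
    |h (a,b) - h (a',b')| ≤ L * (|a-a'| + |b-b'|) := by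
  obtain ⟨K, hK⟩ := (isCompact_closedBall (0:ℝ×ℝ) B).exists_bound_of_continuousOn (hc.continuous_fderiv (by norm_num)).continuousOn
  refine ⟨max K 0, le_max_right _ _, fun a b a' b' ha hb ha' hb' => ?_⟩
  have m : ∀ {a b : ℝ}, |a| ≤ B → |b| ≤ B → ((a,b):ℝ×ℝ) ∈ Metric.closedBall (0:ℝ×ℝ) B := by
    intro a b ha hb
    rw [mem_closedBall_zero_iff, Prod.norm_def]; exact max_le ha hb
  have := (convex_closedBall (0:ℝ×ℝ) B).norm_image_sub_le_of_norm_fderiv_le (𝕜 := ℝ) (f := h) (C := max K 0)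
    (fun x _ => (hc.differentiable (by norm_num)) x) (fun x hx => (hK x hx).trans (le_max_left _ _)) (m ha' hb') (m ha hb)
  refine this.trans (mul_le_mul_of_nonneg_left ?_ (le_max_right _ _))
  rw [Prod.norm_def]
  exact max_le (by simp) (by simp)

variable {u v : ℝ → ℝ → ℝ} {B α : ℝ}

/-- composition with a function of two variables -/
def cp (h : ℝ × ℝ → ℝ) (u v : ℝ → ℝ → ℝ) : ℝ → ℝ → ℝ := fun x t => h (u x t, v x t)

lemma cp_BC {h : ℝ × ℝ → ℝ} (hc : Continuous h) (hu : BC B u) (hv : BC B v) : ∃ K, BC K (cp h u v) := by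
  obtain ⟨K, _, hK⟩ := box_bd hc B
  exact ⟨K, hc.comp (hu.1.prodMk hv.1), fun x t => hK _ _ (hu.2 _ _) (hv.2 _ _)⟩

lemma cp_HU {h : ℝ × ℝ → ℝ} (hc : ContDiff ℝ 1 h) (hu : BC B u) (hv : BC B v) {H H'} (h1 : HU α H u) (h2 : HU α H' v) :
    ∃ K, HU α K (cp h u v) := by
  obtain ⟨L, hL, hh⟩ := box_lip hc B
  refine ⟨L*(H+H'), fun t x y => (hh _ _ _ _ (hu.2 _ _) (hv.2 _ _) (hu.2 _ _) (hv.2 _ _)).trans ?_⟩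
  have := mul_le_mul_of_nonneg_left (add_le_add (h1 t x y) (h2 t x y)) hL
  linarith

lemma mul_BC {B B'} {u v} (hu : BC B u) (hv : BC B' v) : BC (B*B') (fun x t => u x t * v x t) :=
  ⟨hu.1.mul hv.1, fun x t => by rw [abs_mul]; exact mul_le_mul (hu.2 _ _) (hv.2 _ _) (abs_nonneg _) hu.nn⟩
lemma add_BC {B B'} {u v} (hu : BC B u) (hv : BC B' v) : BC (B+B') (fun x t => u x t + v x t) :=
  ⟨hu.1.add hv.1, fun x t => (abs_add_le _ _).trans (add_le_add (hu.2 _ _) (hv.2 _ _))⟩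
lemma add_HU {H H'} {u v} (hu : HU α H u) (hv : HU α H' v) : HU α (H+H') (fun x t => u x t + v x t) := by
  intro t x y
  have := (abs_add_le _ _).trans (add_le_add (hu t x y) (hv t x y))
  rw [add_mul]
  refine le_trans (le_of_eq ?_) this
  congr 1; ring
lemma mul_HU {B B' H H'} {u v} (bu : BC B u) (bv : BC B' v) (hu : HU α H u) (hv : HU α H' v) :
    HU α (B*H' + B'*H) (fun x t => u x t * v x t) := by
  intro t x y
  have e : u x t * v x t - u y t * v y t = u x t * (v x t - v y t) + v y t * (u x t - u y t) := by ring
  rw [e]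
  refine (abs_add_le _ _).trans ?_
  rw [abs_mul, abs_mul, add_mul, mul_assoc, mul_assoc]
  exact add_le_add (mul_le_mul (bu.2 _ _) (hv _ _ _) (abs_nonneg _) bu.nn) (mul_le_mul (bv.2 _ _) (hu _ _ _) (abs_nonneg _) bv.nn)

/-- partial derivatives -/
def p1 (h : ℝ × ℝ → ℝ) : ℝ × ℝ → ℝ := fun p => fderiv ℝ h p (1,0)
/-- partial derivatives -/
def p2 (h : ℝ × ℝ → ℝ) : ℝ × ℝ → ℝ := fun p => fderiv ℝ h p (0,1)

lemma p1_cd {h : ℝ × ℝ → ℝ} (hh : ContDiff ℝ 2 h) : ContDiff ℝ 1 (p1 h) :=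
  (hh.fderiv_right (m := 1) (by norm_num)).clm_apply contDiff_const
lemma p2_cd {h : ℝ × ℝ → ℝ} (hh : ContDiff ℝ 2 h) : ContDiff ℝ 1 (p2 h) :=
  (hh.fderiv_right (m := 1) (by norm_num)).clm_apply contDiff_const

lemma chain {h : ℝ × ℝ → ℝ} (hh : ContDiff ℝ 2 h) {a b : ℝ → ℝ} {a' b' x : ℝ} (ha : HasDerivAt a a' x) (hb : HasDerivAt b b' x) :
    HasDerivAt (fun x => h (a x, b x)) (p1 h (a x, b x) * a' + p2 h (a x, b x) * b') x := by
  have h1 := ((hh.differentiable (by norm_num)) (a x, b x)).hasFDerivAt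
  refine (h1.comp_hasDerivAt x (ha.prodMk hb)).congr_deriv ?_
  have : ((a', b') : ℝ × ℝ) = a' • (1,0) + b' • (0,1) := by simp
  rw [this, map_add, map_smul, map_smul]
  simp [p1, p2]; ring

/-- full nonlinearity -/
def FF (f g : ℝ × ℝ → ℝ) (u v X Y : ℝ → ℝ → ℝ) : ℝ → ℝ → ℝ :=
  fun x t => cp f u v x t + (cp (p1 g) u v x t * X x t + cp (p2 g) u v x t * Y x t)

lemma FF_BC {f g : ℝ × ℝ → ℝ} (hf : ContDiff ℝ 2 f) (hg : ContDiff ℝ 2 g) (hu : BC B u) (hv : BC B v) {X Y B1 B2} (hX : BC B1 X) (hY : BC B2 Y) :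
    ∃ K, BC K (FF f g u v X Y) := by
  obtain ⟨_, h1⟩ := cp_BC hf.continuous hu hv
  obtain ⟨_, h2⟩ := cp_BC (p1_cd hg).continuous hu hv
  obtain ⟨_, h3⟩ := cp_BC (p2_cd hg).continuous hu hv
  exact ⟨_, add_BC h1 (add_BC (mul_BC h2 hX) (mul_BC h3 hY))⟩

lemma FF_HU {f g : ℝ × ℝ → ℝ} (hf : ContDiff ℝ 2 f) (hg : ContDiff ℝ 2 g) (hu : BC B u) (hv : BC B v) {X Y B1 B2} (hX : BC B1 X) (hY : BC B2 Y)
    {H H' H1 H2} (ku : HU α H u) (kv : HU α H' v) (kX : HU α H1 X) (kY : HU α H2 Y) :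
    ∃ K, HU α K (FF f g u v X Y) := by
  obtain ⟨_, k1⟩ := cp_HU (hf.of_le (by norm_num)) hu hv ku kv
  obtain ⟨_, h2⟩ := cp_BC (p1_cd hg).continuous hu hv
  obtain ⟨_, h3⟩ := cp_BC (p2_cd hg).continuous hu hv
  obtain ⟨_, k2⟩ := cp_HU (p1_cd hg) hu hv ku kv
  obtain ⟨_, k3⟩ := cp_HU (p2_cd hg) hu hv ku kv
  exact ⟨_, add_HU k1 (add_HU (mul_HU h2 hX k2 kX) (mul_HU h3 hY k3 kY))⟩

lemma sh_sh {ρ ρ' : ℝ} (hρ' : 0 ≤ ρ') (u : ℝ → ℝ → ℝ) : sh ρ' (sh ρ u) = sh (ρ+ρ') u := by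
  ext x t
  have : 0 ≤ ρ' + max t 0 := by positivity
  simp only [sh]
  rw [max_eq_left this, add_assoc]

/-- regularity output for one equation -/
structure Reg (d c : ℝ) (f g : ℝ × ℝ → ℝ) (u v X Y XX : ℝ → ℝ → ℝ) : Prop where
  cX : Continuous fun p : ℝ × ℝ => X p.1 p.2
  cXX : ContinuousOn (fun p : ℝ × ℝ => XX p.1 p.2) {p | 0 < p.2}
  dX : ∀ x t, HasDerivAt (fun x => u x t) (X x t) x
  dXX : ∀ x t, 0 < t → HasDerivAt (fun x => X x t) (XX x t) x
  dt : ∀ x t, 0 < t → HasDerivAt (fun t => u x t) (d * XX x t + c * X x t + FF f g u v X Y x t) t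

lemma Mild.mild2 {d c : ℝ} {f g : ℝ × ℝ → ℝ} (hd : 0 < d) (hf : ContDiff ℝ 2 f) (hg : ContDiff ℝ 2 g) (hu : BC B u) (hv : BC B v)
    {w} (hm : Mild d c w (cp f u v) (cp g u v)) {X Y B1 B2} (hX : BC B1 X) (hY : BC B2 Y)
    (dX : ∀ x t, HasDerivAt (fun x => u x t) (X x t) x) (dY : ∀ x t, HasDerivAt (fun x => v x t) (Y x t) x) :
    Mild d c w (FF f g u v X Y) (fun _ _ => 0) := by
  obtain ⟨K1, h1⟩ := cp_BC hf.continuous hu hv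
  obtain ⟨K0, h0⟩ := cp_BC hg.continuous hu hv
  obtain ⟨_, h2⟩ := cp_BC (p1_cd hg).continuous hu hv
  obtain ⟨_, h3⟩ := cp_BC (p2_cd hg).continuous hu hv
  exact hm.conv hd (h1.mono (le_max_left K1 K0)) (h0.mono (le_max_right K1 K0)) (add_BC (mul_BC h2 hX) (mul_BC h3 hY))
    fun x t => chain hg (dX x t) (dY x t)

lemma core {d₁ d₂ c₁ c₂ : ℝ} {f₁ f₂ g₁ g₂ : ℝ × ℝ → ℝ} (hd₁ : 0 < d₁) (hd₂ : 0 < d₂)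
    (hf₁ : ContDiff ℝ 2 f₁) (hf₂ : ContDiff ℝ 2 f₂) (hg₁ : ContDiff ℝ 2 g₁) (hg₂ : ContDiff ℝ 2 g₂) 
    (hα : 0 < α) (hα1 : α < 1) (hu : BC B u) (hv : BC B v)
    (mu : Mild d₁ c₁ u (cp f₁ u v) (cp g₁ u v)) (mv : Mild d₂ c₂ v (cp f₂ u v) (cp g₂ u v)) {ρ : ℝ} (hρ : 0 < ρ) :
    ∃ X Y XX YY : ℝ → ℝ → ℝ, Reg d₁ c₁ f₁ g₁ (sh ρ u) (sh ρ v) X Y XX ∧ 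
      Continuous (fun p : ℝ × ℝ => Y p.1 p.2) ∧ ContinuousOn (fun p : ℝ × ℝ => YY p.1 p.2) {p | 0 < p.2} ∧ 
      (∀ x t, HasDerivAt (fun x => sh ρ v x t) (Y x t) x) ∧ (∀ x t, 0 < t → HasDerivAt (fun x => Y x t) (YY x t) x) ∧
      (∀ x t, 0 < t → HasDerivAt (fun t => sh ρ v x t) (d₂ * YY x t + c₂ * Y x t + FF f₂ g₂ (sh ρ u) (sh ρ v) X Y x t) t) := by
  set q := ρ/3 with hq
  have q0 : 0 < q := by positivity
  -- common bound
  have step0 : ∃ K, BC K u ∧ BC K v ∧ BC K (cp f₁ u v) ∧ BC K (cp f₂ u v) ∧ BC K (cp g₁ u v) ∧ BC K (cp g₂ u v) := by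
    obtain ⟨K1, h1⟩ := cp_BC hf₁.continuous hu hv
    obtain ⟨K2, h2⟩ := cp_BC hf₂.continuous hu hv
    obtain ⟨K3, h3⟩ := cp_BC hg₁.continuous hu hv
    obtain ⟨K4, h4⟩ := cp_BC hg₂.continuous hu hv
    have := hu.nn; have := h1.nn; have := h2.nn; have := h3.nn; have := h4.nn
    exact ⟨B+K1+K2+K3+K4, hu.mono (by linarith), hv.mono (by linarith), h1.mono (by linarith), h2.mono (by linarith),
      h3.mono (by linarith), h4.mono (by linarith)⟩
  obtain ⟨K, ku, kv, kf1, kf2, kg1, kg2⟩ := step0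
  -- stage A
  obtain ⟨Hu, hHu⟩ := mu.hol hd₁ ku kf1 kg1 hα hα1 q0
  obtain ⟨Hv, hHv⟩ := mv.hol hd₂ kv kf2 kg2 hα hα1 q0
  have mu1 := mu.restart hd₁ ku kf1 kg1 q0
  have mv1 := mv.restart hd₂ kv kf2 kg2 q0
  -- stage B
  obtain ⟨_, hg1⟩ := cp_HU (hg₁.of_le (by norm_num)) (sh_bc q ku) (sh_bc q kv) hHu hHv
  obtain ⟨_, hg2⟩ := cp_HU (hg₂.of_le (by norm_num)) (sh_bc q ku) (sh_bc q kv) hHu hHv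
  obtain ⟨X, B1, bX, dX⟩ := mu1.stageB hd₁ (sh_bc q ku) (sh_bc q kf1) (sh_bc q kg1) hα hα1 hg1 q0
  obtain ⟨Y, B2, bY, dY⟩ := mv1.stageB hd₂ (sh_bc q kv) (sh_bc q kf2) (sh_bc q kg2) hα hα1 hg2 q0
  have mu2 := mu1.restart hd₁ (sh_bc q ku) (sh_bc q kf1) (sh_bc q kg1) q0
  have mv2 := mv1.restart hd₂ (sh_bc q kv) (sh_bc q kf2) (sh_bc q kg2) q0
  have bu2 := sh_bc q (sh_bc q ku)
  have bv2 := sh_bc q (sh_bc q kv)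
  -- stage C
  have nu := Mild.mild2 hd₁ hf₁ hg₁ bu2 bv2 mu2 bX bY dX dY
  have nv := Mild.mild2 hd₂ hf₂ hg₂ bu2 bv2 mv2 bX bY dX dY
  obtain ⟨K1, b1⟩ := FF_BC hf₁ hg₁ bu2 bv2 bX bY
  obtain ⟨K2, b2⟩ := FF_BC hf₂ hg₂ bu2 bv2 bX bY
  have n0 := ku.nn; have n1 := b1.nn; have n2 := b2.nn
  replace bu2 := bu2.mono (show K ≤ K + K1 + K2 by linarith)
  replace bv2 := bv2.mono (show K ≤ K + K1 + K2 by linarith)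
  replace b1 := b1.mono (show K1 ≤ K + K1 + K2 by linarith)
  replace b2 := b2.mono (show K2 ≤ K + K1 + K2 by linarith)
  obtain ⟨_, hX⟩ := nu.stageC hd₁ bu2 b1 dX hα hα1 q0
  obtain ⟨_, hY⟩ := nv.stageC hd₂ bv2 b2 dY hα hα1 q0
  have nu3 := nu.restart hd₁ bu2 b1 (BC_zero bu2.nn) q0
  have nv3 := nv.restart hd₂ bv2 b2 (BC_zero bu2.nn) q0
  have e : ∀ u, sh q (sh q (sh q u)) = sh ρ u := by
    intro u
    rw [sh_sh q0.le, sh_sh (by positivity)]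
    congr 1; rw [hq]; ring
  -- stage D
  have bu3 := sh_bc q bu2
  have bv3 := sh_bc q bv2
  have hu3 := sh_HU q (sh_HU q hHu)
  have hv3 := sh_HU q (sh_HU q hHv)
  obtain ⟨_, k1⟩ := FF_HU hf₁ hg₁ bu3 bv3 (sh_bc q bX) (sh_bc q bY) hu3 hv3 hX hY
  obtain ⟨_, k2⟩ := FF_HU hf₂ hg₂ bu3 bv3 (sh_bc q bX) (sh_bc q bY) hu3 hv3 hX hY
  obtain ⟨XX, cXX, bXX, dXX⟩ := nu3.stageD hd₁ bu3 (sh_bc q b1) (fun x t => dX x _) hα hα1 k1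
  obtain ⟨YY, cYY, bYY, dYY⟩ := nv3.stageD hd₂ bv3 (sh_bc q b2) (fun x t => dY x _) hα hα1 k2
  have tu := fun x t ht => nu3.stageE hd₁ bu3 (sh_bc q b1) (sh_bc q bX) (fun x t => dX x _) cXX bXX dXX x (t := t) ht
  have tv := fun x t ht => nv3.stageE hd₂ bv3 (sh_bc q b2) (sh_bc q bY) (fun x t => dY x _) cYY bYY dYY x (t := t) ht
  rw [← e u, ← e v]
  exact ⟨sh q X, sh q Y, XX, YY, ⟨(sh_bc q bX).1, cXX, fun x t => dX x _, dXX, tu⟩, (sh_bc q bY).1, cYY, fun x t => dY x _, dYY, tv⟩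

end RD

namespace RD
variable {u v : ℝ → ℝ → ℝ} {B α : ℝ}

lemma classical {d₁ d₂ c₁ c₂ : ℝ} {f₁ f₂ g₁ g₂ : ℝ × ℝ → ℝ} (hd₁ : 0 < d₁) (hd₂ : 0 < d₂)
    (hf₁ : ContDiff ℝ 2 f₁) (hf₂ : ContDiff ℝ 2 f₂) (hg₁ : ContDiff ℝ 2 g₁) (hg₂ : ContDiff ℝ 2 g₂) 
    (hα : 0 < α) (hα1 : α < 1) (hu : BC B u) (hv : BC B v)
    (mu : Mild d₁ c₁ u (cp f₁ u v) (cp g₁ u v)) (mv : Mild d₂ c₂ v (cp f₂ u v) (cp g₂ u v)) :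
    IsClassicalSolution d₁ d₂ c₁ c₂ f₁ f₂ g₁ g₂ ⊤ (fun x => u x 0) (fun x => v x 0) u v := by
  refine ⟨fun x => rfl, fun x => rfl, (hu.1.prodMk hv.1).continuousOn,
    fun t₁ _ _ => ⟨B + B, fun x t _ _ => add_le_add (hu.2 _ _) (hv.2 _ _)⟩, ?_⟩
  set ux : ℝ → ℝ → ℝ := fun x t => deriv (fun x => u x t) x with hux
  set vx : ℝ → ℝ → ℝ := fun x t => deriv (fun x => v x t) x with hvx
  set uxx : ℝ → ℝ → ℝ := fun x t => deriv (fun x => ux x t) x with huxx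
  set vxx : ℝ → ℝ → ℝ := fun x t => deriv (fun x => vx x t) x with hvxx
  set G : (ℝ × ℝ → ℝ) → ℝ → ℝ → ℝ := fun g x t => p1 g (u x t, v x t) * ux x t + p2 g (u x t, v x t) * vx x t with hG
  have main : ∀ ρ, 0 < ρ → (∀ x t, ρ < t → 
      HasDerivAt (fun τ => u x τ) (d₁ * uxx x t + c₁ * ux x t + f₁ (u x t, v x t) + G g₁ x t) t ∧
      HasDerivAt (fun ξ => u ξ t) (ux x t) x ∧
      HasDerivAt (fun ξ => ux ξ t) (uxx x t) x ∧
      HasDerivAt (fun τ => v x τ) (d₂ * vxx x t + c₂ * vx x t + f₂ (u x t, v x t) + G g₂ x t) t ∧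
      HasDerivAt (fun ξ => v ξ t) (vx x t) x ∧
      HasDerivAt (fun ξ => vx ξ t) (vxx x t) x) ∧
      ContinuousOn (fun p : ℝ × ℝ => (ux p.1 p.2, uxx p.1 p.2, vx p.1 p.2, vxx p.1 p.2)) {p | ρ < p.2} := by
    intro ρ hρ
    obtain ⟨X, Y, XX, YY, ⟨cX, cXX, dX, dXX, tX⟩, cY, cYY, dY, dYY, tY⟩ := core hd₁ hd₂ hf₁ hf₂ hg₁ hg₂ hα hα1 hu hv mu mv hρ
    have e : ∀ (w : ℝ → ℝ → ℝ) x t, ρ ≤ t → sh ρ w x (t-ρ) = w x t := by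
      intro w x t ht
      simp [sh, max_eq_left (show 0 ≤ t - ρ by linarith)]
    have dX' : ∀ x t, ρ ≤ t → HasDerivAt (fun x => u x t) (X x (t-ρ)) x := by
      intro x t ht
      have := dX x (t-ρ)
      simp only [e u _ _ ht] at this
      exact this
    have dY' : ∀ x t, ρ ≤ t → HasDerivAt (fun x => v x t) (Y x (t-ρ)) x := by
      intro x t ht
      have := dY x (t-ρ)
      simp only [e v _ _ ht] at this
      exact this
    have eX : ∀ x t, ρ ≤ t → ux x t = X x (t-ρ) := fun x t ht => (dX' x t ht).deriv
    have eY : ∀ x t, ρ ≤ t → vx x t = Y x (t-ρ) := fun x t ht => (dY' x t ht).deriv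
    have dXX' : ∀ x t, ρ < t → HasDerivAt (fun x => ux x t) (XX x (t-ρ)) x := by
      intro x t ht
      have := dXX x (t-ρ) (by linarith)
      simp only [← eX _ _ ht.le] at this
      exact this
    have dYY' : ∀ x t, ρ < t → HasDerivAt (fun x => vx x t) (YY x (t-ρ)) x := by
      intro x t ht
      have := dYY x (t-ρ) (by linarith)
      simp only [← eY _ _ ht.le] at this
      exact this
    have eXX : ∀ x t, ρ < t → uxx x t = XX x (t-ρ) := fun x t ht => (dXX' x t ht).deriv
    have eYY : ∀ x t, ρ < t → vxx x t = YY x (t-ρ) := fun x t ht => (dYY' x t ht).deriv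
    refine ⟨fun x t ht => ⟨?_, ?_, ?_, ?_, ?_, ?_⟩, ?_⟩
    · have h1 := (tX x (t-ρ) (by linarith)).comp_sub_const t ρ
      rw [← eX _ _ ht.le, ← eXX _ _ ht] at h1
      simp only [FF, cp, e _ _ _ ht.le] at h1
      rw [← eX _ _ ht.le, ← eY _ _ ht.le] at h1
      refine (h1.congr_of_eventuallyEq ?_).congr_deriv (by simp only [hG]; ring)
      filter_upwards [Ioi_mem_nhds ht] with s hs
      exact (e u x s (le_of_lt hs)).symm
    · rw [eX _ _ ht.le]; exact dX' x t ht.le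
    · rw [eXX _ _ ht]; exact dXX' x t ht
    · have h1 := (tY x (t-ρ) (by linarith)).comp_sub_const t ρ
      rw [← eY _ _ ht.le, ← eYY _ _ ht] at h1
      simp only [FF, cp, e _ _ _ ht.le] at h1
      rw [← eX _ _ ht.le, ← eY _ _ ht.le] at h1
      refine (h1.congr_of_eventuallyEq ?_).congr_deriv (by simp only [hG]; ring)
      filter_upwards [Ioi_mem_nhds ht] with s hs
      exact (e v x s (le_of_lt hs)).symm
    · rw [eY _ _ ht.le]; exact dY' x t ht.le
    · rw [eYY _ _ ht]; exact dYY' x t ht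
    · have m : MapsTo (fun p : ℝ × ℝ => (p.1, p.2 - ρ)) {p | ρ < p.2} {p | 0 < p.2} := fun p hp => by
        have : ρ < p.2 := hp
        show 0 < p.2 - ρ
        linarith
      have cm : Continuous (fun p : ℝ × ℝ => (p.1, p.2 - ρ)) := by fun_prop
      refine ContinuousOn.prodMk ?_ (ContinuousOn.prodMk ?_ (ContinuousOn.prodMk ?_ ?_))
      · exact (cX.comp cm).continuousOn.congr fun p hp => eX _ _ (le_of_lt hp)
      · exact (cXX.comp cm.continuousOn m).congr fun p hp => eXX _ _ hp
      · exact (cY.comp cm).continuousOn.congr fun p hp => eY _ _ (le_of_lt hp)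
      · exact (cYY.comp cm.continuousOn m).congr fun p hp => eYY _ _ hp
  refine ⟨fun x t => d₁ * uxx x t + c₁ * ux x t + f₁ (u x t, v x t) + G g₁ x t, 
    fun x t => d₂ * vxx x t + c₂ * vx x t + f₂ (u x t, v x t) + G g₂ x t, ux, vx, uxx, vxx, G g₁, G g₂, fun x t ht _ => ?_, ?_⟩
  · obtain ⟨a1, a2, a3, a4, a5, a6⟩ := (main (t/2) (by linarith)).1 x t (by linarith)
    exact ⟨a1, a2, a3, chain hg₁ a2 a5, a4, a5, a6, chain hg₂ a2 a5, rfl, rfl⟩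
  · have cc : ContinuousOn (fun p : ℝ × ℝ => (ux p.1 p.2, uxx p.1 p.2, vx p.1 p.2, vxx p.1 p.2)) {p | 0 < p.2} := by
      intro p hp
      have hp' : 0 < p.2 := hp
      have := (main (p.2/2) (by linarith)).2.continuousAt (x := p) ((isOpen_lt continuous_const continuous_snd).mem_nhds (show p.2/2 < p.2 by linarith))
      exact this.continuousWithinAt
    have c1 := cc.fst
    have c2 := cc.snd.fst
    have c3 := cc.snd.snd.fst
    have c4 := cc.snd.snd.snd
    have cg : ∀ {h : ℝ × ℝ → ℝ}, Continuous h → ContinuousOn (fun p : ℝ × ℝ => h (u p.1 p.2, v p.1 p.2)) {p | 0 < p.2} :=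
      fun hh => (hh.comp (hu.1.prodMk hv.1)).continuousOn
    have f1 := cg hf₁.continuous
    have f2 := cg hf₂.continuous
    have a1 := cg (p1_cd hg₁).continuous
    have a2 := cg (p2_cd hg₁).continuous
    have a3 := cg (p1_cd hg₂).continuous
    have a4 := cg (p2_cd hg₂).continuous
    have sub : {p : ℝ × ℝ | 0 < p.2 ∧ ENNReal.ofReal p.2 < ⊤} ⊆ {p | 0 < p.2} := fun p hp => hp.1
    refine ContinuousOn.mono ?_ sub
    refine ContinuousOn.prodMk ?_ (ContinuousOn.prodMk c1 (ContinuousOn.prodMk c2 (ContinuousOn.prodMk ?_ (ContinuousOn.prodMk c3 c4))))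
    · exact (((c2.const_mul d₁).add (c1.const_mul c₁)).add f1).add ((a1.mul c1).add (a2.mul c3))
    · exact (((c4.const_mul d₂).add (c3.const_mul c₂)).add f2).add ((a3.mul c1).add (a4.mul c3))
end RD

namespace RD

lemma gam_int {a l : ℝ} (ha : 0 < a) (hl : 0 < l) : IntegrableOn (fun t : ℝ => t^(a-1) * Real.exp (-(l*t))) (Ioi 0) := by
  by_contra hn
  have h1 := Real.integral_rpow_mul_exp_neg_mul_Ioi ha hl
  rw [integral_undef hn] at h1
  have : 0 < (1/l)^a * Real.Gamma a := mul_pos (by positivity) (Real.Gamma_pos_of_pos ha)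
  linarith

/-- Laplace integral -/
def mk (k : ℕ) (d l : ℝ) : ℝ := CE*(2*d)^(-(k:ℝ)/2)*((1/l)^(1-(k:ℝ)/2)*Real.Gamma (1-(k:ℝ)/2))

lemma D_contr {d c K M l : ℝ} (hd : 0 < d) {k : ℕ} (hk : k < 2) {h h' : ℝ → ℝ → ℝ} (hb : BC K h) (hb' : BC K h') (hl : 0 < l)
    (hM : ∀ y s, 0 ≤ s → |h y s - h' y s| ≤ M * Real.exp (l*s)) (x : ℝ) {t : ℝ} (_ht : 0 ≤ t) :
    |D k d c h x t - D k d c h' x t| ≤ mk k d l * M * Real.exp (l*t) := by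
  obtain ⟨K1, β1, h1⟩ := adm01 (c := c) hd hk hb
  obtain ⟨K2, β2, h2⟩ := adm01 (c := c) hd hk hb'
  have hM0 : 0 ≤ M := by have := (abs_nonneg _).trans (hM 0 0 le_rfl); simpa using this
  have hk' : (k:ℝ) ≤ 1 := by exact_mod_cast Nat.lt_succ_iff.1 hk
  have ha : 0 < 1 - (k:ℝ)/2 := by linarith
  have gi := gam_int ha hl
  have ge := Real.integral_rpow_mul_exp_neg_mul_Ioi ha hl
  unfold D
  rw [← integral_sub (h1.integ x t t) (h2.integ x t t), ← Real.norm_eq_abs]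
  set Q := CE * M * (2*d)^(-(k:ℝ)/2) * Real.exp (l*t) with hQ
  have hQ0 : 0 ≤ Q := by have := CE_nn; positivity
  have b : ∀ τ ∈ Ioc 0 t, ‖A k d c h x t τ - A k d c h' x t τ‖ ≤ Q * (τ^(1-(k:ℝ)/2-1) * Real.exp (-(l*τ))) := by
    intro τ hτ
    have hs := sg_pos hd hτ.1
    simp only [A]
    rw [Real.norm_eq_abs, ← mul_sub, abs_mul, abs_of_pos (by positivity),
      ← T_sub k _ _ (hb.sec _) (hb'.sec _) (fun y => hb.2 y _) (fun y => hb'.2 y _)]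
    have e1 : (sg d τ)⁻¹^k = (2*d)^(-(k:ℝ)/2) * τ^(1-(k:ℝ)/2-1) := by
      rw [← Real.rpow_natCast, ← Real.rpow_neg_one, ← Real.rpow_mul hs.le, sg_rpow hd hτ.1]
      congr 2 <;> ring
    have e2 := T_le k (sg d τ) (x+c*τ) (h := fun y => h y (t-τ) - h' y (t-τ)) (fun y => hM y (t-τ) (by linarith [hτ.2]))
    have e3 : Real.exp (l*(t-τ)) = Real.exp (l*t) * Real.exp (-(l*τ)) := by rw [← Real.exp_add]; congr 1; ring
    calc _ ≤ (sg d τ)⁻¹^k * (CE * (M * Real.exp (l*(t-τ)))) := mul_le_mul_of_nonneg_left e2 (by positivity)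
      _ = _ := by rw [e1, e3, hQ]; ring
  refine (norm_integral_le_of_norm_le (g := fun τ => Q * (τ^(1-(k:ℝ)/2-1) * Real.exp (-(l*τ))))
    ((gi.mono_set Ioc_subset_Ioi_self).const_mul _) ((ae_restrict_iff' measurableSet_Ioc).2 (Filter.Eventually.of_forall b))).trans ?_
  rw [integral_const_mul]
  have : ∫ τ in Ioc 0 t, τ^(1-(k:ℝ)/2-1) * Real.exp (-(l*τ)) ≤ ∫ τ in Ioi 0, τ^(1-(k:ℝ)/2-1) * Real.exp (-(l*τ)) := by
    refine setIntegral_mono_set gi ?_ Ioc_subset_Ioi_self.eventuallyLE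
    refine (ae_restrict_iff' measurableSet_Ioi).2 (Filter.Eventually.of_forall fun τ hτ => ?_)
    have : 0 < τ := hτ
    simp only [Pi.zero_apply]; positivity
  refine (mul_le_mul_of_nonneg_left this hQ0).trans (le_of_eq ?_)
  rw [ge, hQ]; unfold mk; ring

lemma mk_small {k : ℕ} (hk : k < 2) (d : ℝ) : Filter.Tendsto (fun l => mk k d l) Filter.atTop (nhds 0) := by
  have hk' : (k:ℝ) ≤ 1 := by exact_mod_cast Nat.lt_succ_iff.1 hk
  have ha : 0 < 1 - (k:ℝ)/2 := by linarith
  have h1 : Filter.Tendsto (fun l : ℝ => 1/l) Filter.atTop (nhds 0) := by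
    simpa using tendsto_inv_atTop_zero (𝕜 := ℝ)
  have h2 : Filter.Tendsto (fun l : ℝ => (1/l)^(1-(k:ℝ)/2)) Filter.atTop (nhds 0) := by
    have := h1.rpow_const (p := 1-(k:ℝ)/2) (Or.inr ha.le)
    rwa [Real.zero_rpow ha.ne'] at this
  unfold mk
  have := (h2.mul_const (Real.Gamma (1-(k:ℝ)/2))).const_mul (CE*(2*d)^(-(k:ℝ)/2))
  simpa using this

/-- Picard map, one component -/
def Pic (d c : ℝ) (f g : ℝ × ℝ → ℝ) (u₀ : ℝ → ℝ) (u v : ℝ → ℝ → ℝ) (x t : ℝ) : ℝ :=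
  T 0 (sg d t) u₀ (x + c*t) + D 0 d c (cp f u v) x t + D 1 d c (cp g u v) x t

lemma Pic_cont {d c B : ℝ} {f g : ℝ × ℝ → ℝ} (hd : 0 < d) (hf : Continuous f) (hg : Continuous g)
    {u₀ : ℝ → ℝ} (c0 : Continuous u₀) {K : ℝ} (b0 : ∀ x, |u₀ x| ≤ K) {u v : ℝ → ℝ → ℝ} (hu : BC B u) (hv : BC B v) :
    Continuous fun p : ℝ × ℝ => Pic d c f g u₀ u v p.1 p.2 := by
  obtain ⟨_, h1⟩ := cp_BC hf hu hv
  obtain ⟨_, h2⟩ := cp_BC hg hu hv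
  have hs := sg_cont d
  have := T_cont 0 (h := fun x _ => u₀ x) (by fun_prop) (fun x _ => b0 x)
  have := this.comp (by fun_prop : Continuous fun p : ℝ × ℝ => (sg d p.2, p.1 + c*p.2, (0:ℝ)))
  exact (this.add (D_cont hd (by norm_num) h1)).add (D_cont hd (by norm_num) h2)

lemma Pic_contr {d c B : ℝ} {f g : ℝ × ℝ → ℝ} (hd : 0 < d) (hf : ContDiff ℝ 1 f) (hg : ContDiff ℝ 1 g) :
    ∃ m : ℝ → ℝ, Filter.Tendsto m Filter.atTop (nhds 0) ∧ ∀ l, 0 < l → ∀ (u₀ : ℝ → ℝ) (u v u' v' : ℝ → ℝ → ℝ),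
      BC B u → BC B v → BC B u' → BC B v' → ∀ M, (∀ y s, 0 ≤ s → |u y s - u' y s| ≤ M * Real.exp (l*s)) → 
      (∀ y s, 0 ≤ s → |v y s - v' y s| ≤ M * Real.exp (l*s)) → ∀ x t, 0 ≤ t → 
      |Pic d c f g u₀ u v x t - Pic d c f g u₀ u' v' x t| ≤ m l * M * Real.exp (l*t) := by
  obtain ⟨L1, hL1, h1⟩ := box_lip hf B
  obtain ⟨L2, hL2, h2⟩ := box_lip hg B
  refine ⟨fun l => mk 0 d l * (2*L1) + mk 1 d l * (2*L2), ?_, ?_⟩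
  · have := ((mk_small (k := 0) (by norm_num) d).mul_const (2*L1)).add ((mk_small (k := 1) (by norm_num) d).mul_const (2*L2))
    simpa using this
  intro l hl u₀ u v u' v' hu hv hu' hv' M hM hM' x t ht
  obtain ⟨K1, a1⟩ := cp_BC hf.continuous hu hv
  obtain ⟨K2, a2⟩ := cp_BC hf.continuous hu' hv'
  obtain ⟨K3, a3⟩ := cp_BC hg.continuous hu hv
  obtain ⟨K4, a4⟩ := cp_BC hg.continuous hu' hv'
  have q1 := D_contr (c := c) hd (k := 0) (by norm_num) (a1.mono (le_max_left K1 K2)) (a2.mono (le_max_right K1 K2)) hl (M := 2*L1*M) (fun y s hs => by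
    refine (h1 _ _ _ _ (hu.2 _ _) (hv.2 _ _) (hu'.2 _ _) (hv'.2 _ _)).trans ?_
    have := mul_le_mul_of_nonneg_left (add_le_add (hM y s hs) (hM' y s hs)) hL1
    linarith) x ht
  have q2 := D_contr (c := c) hd (k := 1) (by norm_num) (a3.mono (le_max_left K3 K4)) (a4.mono (le_max_right K3 K4)) hl (M := 2*L2*M) (fun y s hs => by
    refine (h2 _ _ _ _ (hu.2 _ _) (hv.2 _ _) (hu'.2 _ _) (hv'.2 _ _)).trans ?_
    have := mul_le_mul_of_nonneg_left (add_le_add (hM y s hs) (hM' y s hs)) hL2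
    linarith) x ht
  unfold Pic
  rw [abs_le] at *
  constructor <;> linarith [q1.1, q1.2, q2.1, q2.2]

open BoundedContinuousFunction in
lemma fixpt {d₁ d₂ c₁ c₂ B : ℝ} {f₁ f₂ g₁ g₂ : ℝ × ℝ → ℝ} (hd₁ : 0 < d₁) (hd₂ : 0 < d₂)
    (hf₁ : ContDiff ℝ 1 f₁) (hf₂ : ContDiff ℝ 1 f₂) (hg₁ : ContDiff ℝ 1 g₁) (hg₂ : ContDiff ℝ 1 g₂)
    {u₀ v₀ : ℝ → ℝ} (cu : Continuous u₀) (cv : Continuous v₀) {K : ℝ} (bu : ∀ x, |u₀ x| ≤ K) (bv : ∀ x, |v₀ x| ≤ K)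
    {W₁ W₂ : ℝ → ℝ → ℝ} (n1 : ∀ x t, 0 ≤ t → 0 ≤ W₁ x t) (n2 : ∀ x t, 0 ≤ t → 0 ≤ W₂ x t)
    (w1 : ∀ x t, 0 ≤ t → W₁ x t ≤ B) (w2 : ∀ x t, 0 ≤ t → W₂ x t ≤ B)
    (inv : ∀ u v, BC B u → BC B v → (∀ x t, 0 ≤ t → |u x t| ≤ W₁ x t) → (∀ x t, 0 ≤ t → |v x t| ≤ W₂ x t) →
      ∀ x t, 0 ≤ t → |Pic d₁ c₁ f₁ g₁ u₀ u v x t| ≤ W₁ x t ∧ |Pic d₂ c₂ f₂ g₂ v₀ u v x t| ≤ W₂ x t) :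
    ∃ u v, BC B u ∧ BC B v ∧ (∀ x, u x 0 = u₀ x) ∧ (∀ x, v x 0 = v₀ x) ∧ 
      (∀ x t, 0 ≤ t → |u x t| ≤ W₁ x t) ∧ (∀ x t, 0 ≤ t → |v x t| ≤ W₂ x t) ∧
      Mild d₁ c₁ u (cp f₁ u v) (cp g₁ u v) ∧ Mild d₂ c₂ v (cp f₂ u v) (cp g₂ u v) := by
  obtain ⟨m1, t1, k1⟩ := Pic_contr (c := c₁) (B := B) hd₁ hf₁ hg₁
  obtain ⟨m2, t2, k2⟩ := Pic_contr (c := c₂) (B := B) hd₂ hf₂ hg₂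
  obtain ⟨l, hl, e1, e2⟩ : ∃ l, 0 < l ∧ m1 l ≤ 1/2 ∧ m2 l ≤ 1/2 := by
    have := ((Filter.eventually_gt_atTop (0:ℝ)).and (t1.eventually (ge_mem_nhds (show (0:ℝ) < 1/2 by norm_num)))).and
      (t2.eventually (ge_mem_nhds (show (0:ℝ) < 1/2 by norm_num)))
    obtain ⟨l, h⟩ := this.exists
    exact ⟨l, h.1.1, h.1.2, h.2⟩
  have hB : 0 ≤ B := (n1 0 0 le_rfl).trans (w1 0 0 le_rfl)
  let ex : ℝ → ℝ := fun t => Real.exp (l * max t 0)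
  have exc : Continuous ex := by simp only [ex]; fun_prop
  have ex1 : ∀ t, 1 ≤ ex t := fun t => Real.one_le_exp (by positivity)
  have ex0 : ∀ t, 0 < ex t := fun t => Real.exp_pos _
  let W : Type := (ℝ × ℝ →ᵇ ℝ) × (ℝ × ℝ →ᵇ ℝ)
  let U : (ℝ × ℝ →ᵇ ℝ) → ℝ → ℝ → ℝ := fun a x t => ex t * a (x, t)
  let S : Set ((ℝ × ℝ →ᵇ ℝ) × (ℝ × ℝ →ᵇ ℝ)) := {a | ∀ x t, |U a.1 x t| ≤ W₁ x (max t 0) ∧ |U a.2 x t| ≤ W₂ x (max t 0)}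
  have cS : IsClosed S := by
    simp only [S, Set.ofPred_forall]
    refine isClosed_iInter fun x => isClosed_iInter fun t => ?_
    have i1 : Continuous fun a : (ℝ × ℝ →ᵇ ℝ) × (ℝ × ℝ →ᵇ ℝ) => a.1 (x,t) := (continuous_eval_const (x,t)).comp continuous_fst
    have i2 : Continuous fun a : (ℝ × ℝ →ᵇ ℝ) × (ℝ × ℝ →ᵇ ℝ) => a.2 (x,t) := (continuous_eval_const (x,t)).comp continuous_snd
    have j1 : IsClosed {a : (ℝ × ℝ →ᵇ ℝ) × (ℝ × ℝ →ᵇ ℝ) | |ex t * a.1 (x,t)| ≤ W₁ x (max t 0)} :=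
      isClosed_le (continuous_const.mul i1).abs continuous_const
    have j2 : IsClosed {a : (ℝ × ℝ →ᵇ ℝ) × (ℝ × ℝ →ᵇ ℝ) | |ex t * a.2 (x,t)| ≤ W₂ x (max t 0)} :=
      isClosed_le (continuous_const.mul i2).abs continuous_const
    exact j1.inter j2
  have : CompleteSpace S := cS.completeSpace_coe
  have : Nonempty S := ⟨⟨0, fun x t => by simp [U, n1 x _ (le_max_right t 0), n2 x _ (le_max_right t 0)]⟩⟩
  have bc1 : ∀ a : S, BC B (U a.1.1) := fun a => ⟨by
    have := a.1.1.continuous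
    simp only [U]; fun_prop, fun x t => ((a.2 x t).1).trans (w1 _ _ (le_max_right _ _))⟩
  have bc2 : ∀ a : S, BC B (U a.1.2) := fun a => ⟨by
    have := a.1.2.continuous
    simp only [U]; fun_prop, fun x t => ((a.2 x t).2).trans (w2 _ _ (le_max_right _ _))⟩
  have bd1 : ∀ (a : S) x t, 0 ≤ t → |U a.1.1 x t| ≤ W₁ x t := fun a x t ht => by
    have := (a.2 x t).1; rwa [max_eq_left ht] at this
  have bd2 : ∀ (a : S) x t, 0 ≤ t → |U a.1.2 x t| ≤ W₂ x t := fun a x t ht => by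
    have := (a.2 x t).2; rwa [max_eq_left ht] at this
  have mkb : ∀ P : ℝ → ℝ → ℝ, Continuous (fun p : ℝ × ℝ => P p.1 p.2) → (∀ x t, 0 ≤ t → |P x t| ≤ B) → 
      ∃ b : ℝ × ℝ →ᵇ ℝ, ∀ x t, b (x,t) = (ex t)⁻¹ * P x (max t 0) := by
    intro P cP bP
    have i1 : Continuous fun p : ℝ × ℝ => (ex p.2)⁻¹ * P p.1 (max p.2 0) :=
      ((exc.comp continuous_snd).inv₀ fun p => (ex0 _).ne').mul (cP.comp (by fun_prop : Continuous fun p : ℝ × ℝ => (p.1, max p.2 0)))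
    refine ⟨BoundedContinuousFunction.ofNormedAddCommGroup _ i1 B fun p => ?_, fun x t => rfl⟩
    rw [norm_mul, norm_inv, Real.norm_eq_abs, abs_of_pos (ex0 _), Real.norm_eq_abs]
    calc _ ≤ 1 * B := mul_le_mul (inv_le_one_of_one_le₀ (ex1 _)) (bP _ _ (le_max_right _ _)) (abs_nonneg _) zero_le_one
      _ = B := one_mul B
  have step : ∀ a : S, ∃ b : S, ∀ x t, b.1.1 (x,t) = (ex t)⁻¹ * Pic d₁ c₁ f₁ g₁ u₀ (U a.1.1) (U a.1.2) x (max t 0) ∧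
      b.1.2 (x,t) = (ex t)⁻¹ * Pic d₂ c₂ f₂ g₂ v₀ (U a.1.1) (U a.1.2) x (max t 0) := by
    intro a
    have hi := inv _ _ (bc1 a) (bc2 a) (bd1 a) (bd2 a)
    obtain ⟨b1, hb1⟩ := mkb _ (Pic_cont (c := c₁) hd₁ hf₁.continuous hg₁.continuous cu bu (bc1 a) (bc2 a))
      fun x t ht => (hi x t ht).1.trans (w1 _ _ ht)
    obtain ⟨b2, hb2⟩ := mkb _ (Pic_cont (c := c₂) hd₂ hf₂.continuous hg₂.continuous cv bv (bc1 a) (bc2 a))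
      fun x t ht => (hi x t ht).2.trans (w2 _ _ ht)
    refine ⟨⟨(b1, b2), fun x t => ?_⟩, fun x t => ⟨hb1 x t, hb2 x t⟩⟩
    simp only [U, hb1, hb2, mul_inv_cancel_left₀ (ex0 t).ne']
    exact hi x _ (le_max_right _ _)
  choose Φ hΦ using step
  have con : ContractingWith (1/2) Φ := by
    refine ⟨by rw [one_div]; exact NNReal.inv_lt_one_iff (by norm_num) |>.2 (by norm_num), LipschitzWith.of_dist_le_mul fun a b => ?_⟩
    set M := dist a b with hM
    have hM0 : 0 ≤ M := dist_nonneg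
    have dab : dist a.1 b.1 = M := rfl
    have d1 : ∀ y s, 0 ≤ s → |U a.1.1 y s - U b.1.1 y s| ≤ M * Real.exp (l*s) := by
      intro y s hs
      simp only [U, ex, max_eq_left hs]
      rw [← mul_sub, abs_mul, abs_of_pos (Real.exp_pos _), mul_comm]
      refine mul_le_mul_of_nonneg_right ?_ (Real.exp_pos _).le
      exact (dist_coe_le_dist (y,s)).trans ((le_max_left _ _).trans dab.le)
    have d2 : ∀ y s, 0 ≤ s → |U a.1.2 y s - U b.1.2 y s| ≤ M * Real.exp (l*s) := by
      intro y s hs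
      simp only [U, ex, max_eq_left hs]
      rw [← mul_sub, abs_mul, abs_of_pos (Real.exp_pos _), mul_comm]
      refine mul_le_mul_of_nonneg_right ?_ (Real.exp_pos _).le
      exact (dist_coe_le_dist (y,s)).trans ((le_max_right _ _).trans dab.le)
    have fin : ∀ (m : ℝ) t p q, m ≤ 1/2 → |p - q| ≤ m * M * Real.exp (l * max t 0) → |(ex t)⁻¹ * p - (ex t)⁻¹ * q| ≤ 1/2 * M := by
      intro m t p q hm h
      rw [← mul_sub, abs_mul, abs_of_pos (inv_pos.2 (ex0 t)), inv_mul_le_iff₀ (ex0 t), mul_comm]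
      refine h.trans (mul_le_mul_of_nonneg_right (mul_le_mul_of_nonneg_right hm hM0) (Real.exp_pos _).le)
    have c2 : ((1/2 : NNReal) : ℝ) = 1/2 := by simp
    rw [c2]
    refine max_le ((dist_le (by positivity)).2 fun p => ?_) ((dist_le (by positivity)).2 fun p => ?_)
    · rw [Real.dist_eq, (hΦ a p.1 p.2).1, (hΦ b p.1 p.2).1]
      exact fin _ _ _ _ e1 (k1 l hl _ _ _ _ _ (bc1 a) (bc2 a) (bc1 b) (bc2 b) M d1 d2 _ _ (le_max_right _ _))
    · rw [Real.dist_eq, (hΦ a p.1 p.2).2, (hΦ b p.1 p.2).2]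
      exact fin _ _ _ _ e2 (k2 l hl _ _ _ _ _ (bc1 a) (bc2 a) (bc1 b) (bc2 b) M d1 d2 _ _ (le_max_right _ _))
  set a := con.fixedPoint with ha
  have fx : Φ a = a := con.fixedPoint_isFixedPt
  have q1 : ∀ x t, 0 ≤ t → U a.1.1 x t = Pic d₁ c₁ f₁ g₁ u₀ (U a.1.1) (U a.1.2) x t := by
    intro x t ht
    have := (hΦ a x t).1
    rw [fx, max_eq_left ht] at this
    conv_lhs => simp only [U]
    rw [this, mul_inv_cancel_left₀ (ex0 t).ne']
  have q2 : ∀ x t, 0 ≤ t → U a.1.2 x t = Pic d₂ c₂ f₂ g₂ v₀ (U a.1.1) (U a.1.2) x t := by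
    intro x t ht
    have := (hΦ a x t).2
    rw [fx, max_eq_left ht] at this
    conv_lhs => simp only [U]
    rw [this, mul_inv_cancel_left₀ (ex0 t).ne']
  have i1 : ∀ x, U a.1.1 x 0 = u₀ x := fun x => by
    rw [q1 x 0 le_rfl]; simp [Pic, D_zero, sg, T_zero]
  have i2 : ∀ x, U a.1.2 x 0 = v₀ x := fun x => by
    rw [q2 x 0 le_rfl]; simp [Pic, D_zero, sg, T_zero]
  refine ⟨U a.1.1, U a.1.2, bc1 a, bc2 a, i1, i2, bd1 a, bd2 a, fun x t ht => ?_, fun x t ht => ?_⟩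
  · simp only [i1]; exact q1 x t ht
  · simp only [i2]; exact q2 x t ht

end RD

namespace RD

/-- Gaussian average -/
def NN (σ : ℝ) (q : ℝ → ℝ) (a : ℝ) : ℝ := ∫ z, E z * q (a + σ * z)

/-- bounded continuous -/
def NB (q : ℝ → ℝ) : Prop := Continuous q ∧ ∃ B, ∀ y, |q y| ≤ B

lemma NB.add {q q'} (h : NB q) (h' : NB q') : NB (fun y => q y + q' y) := by
  obtain ⟨c, B, hB⟩ := h
  obtain ⟨c', B', hB'⟩ := h'
  exact ⟨by fun_prop, B + B', fun y => (abs_add_le _ _).trans (add_le_add (hB y) (hB' y))⟩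

lemma NB.mul {q q'} (h : NB q) (h' : NB q') : NB (fun y => q y * q' y) := by
  obtain ⟨c, B, hB⟩ := h
  obtain ⟨c', B', hB'⟩ := h'
  exact ⟨by fun_prop, B * B', fun y => by
    rw [abs_mul]; exact mul_le_mul (hB y) (hB' y) (abs_nonneg _) ((abs_nonneg _).trans (hB y))⟩

lemma NB.const (b : ℝ) : NB (fun _ => b) := ⟨continuous_const, |b|, fun _ => le_rfl⟩

lemma NB.int {q} (h : NB q) (σ a : ℝ) : Integrable (fun z => E z * q (a + σ * z)) := by
  obtain ⟨c, B, hB⟩ := h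
  exact int_E_mul (q := fun z => q (a + σ * z)) (by fun_prop) (fun y => hB _)

lemma NN_mono {q q'} (h : NB q) (h' : NB q') (le : ∀ y, q y ≤ q' y) (σ a : ℝ) : NN σ q a ≤ NN σ q' a :=
  integral_mono (h.int σ a) (h'.int σ a) fun z => mul_le_mul_of_nonneg_left (le _) (E_nn z)

lemma NN_add {q q'} (h : NB q) (h' : NB q') (σ a : ℝ) : NN σ (fun y => q y + q' y) a = NN σ q a + NN σ q' a := by
  unfold NN; rw [← integral_add (h.int σ a) (h'.int σ a)]
  congr 1; ext z; ring

lemma NN_cmul (b : ℝ) (q) (σ a : ℝ) : NN σ (fun y => b * q y) a = b * NN σ q a := by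
  unfold NN; rw [← integral_const_mul]
  congr 1; ext z; ring

lemma NN_const (b σ a : ℝ) : NN σ (fun _ => b) a = (∫ z, E z) * b := by
  unfold NN; rw [integral_mul_const]

lemma NN_nn {q : ℝ → ℝ} (h : ∀ y, 0 ≤ q y) (σ a : ℝ) : 0 ≤ NN σ q a :=
  integral_nonneg fun z => mul_nonneg (E_nn z) (h _)

lemma NN_shift (q : ℝ → ℝ) (b σ a : ℝ) : NN σ (fun y => q (y + b)) a = NN σ q (a + b) := by
  unfold NN; congr 1; ext z; ring_nf

/-- Gaussian times Gaussian -/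
lemma NN_gauss {B : ℝ} (hB : 0 < B) (σ a : ℝ) : NN σ (fun y => Real.exp (-y^2/B)) a =
    Real.sqrt (Real.pi / (1/4+σ^2/B)) * Real.exp (-a^2/(B+4*σ^2)) := by
  have hk : 0 < B + 4*σ^2 := by positivity
  rw [← integral_gaussian (1/4+σ^2/B), ← integral_mul_const, 
    ← integral_add_right_eq_self _ (4*a*σ/(B+4*σ^2))]
  unfold NN E
  congr 1; ext z
  rw [← Real.exp_add, ← Real.exp_add]
  congr 1
  field_simp
  ring

/-- algebraic weight -/
def pp (r z t : ℝ) : ℝ := (1 + |z| + Real.sqrt t) ^ (-r)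
/-- Gaussian weight -/
def GG (M z t : ℝ) : ℝ := Real.exp (-z^2/(M*(1+t))) / Real.sqrt (1+t)
/-- full weight -/
def ww (M r z t : ℝ) : ℝ := pp r z t + GG M z t
/-- decay -/
def qq (t : ℝ) : ℝ := (Real.sqrt (1+t))⁻¹

lemma qq_pos {t : ℝ} (ht : 0 ≤ t) : 0 < qq t := by unfold qq; positivity
lemma qq_le {t : ℝ} (ht : 0 ≤ t) : qq t ≤ 1 := inv_le_one_of_one_le₀ (Real.one_le_sqrt.2 (by linarith))
lemma qq_sq {t : ℝ} (ht : 0 ≤ t) : qq t ^ 2 = (1+t)⁻¹ := by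
  unfold qq; rw [inv_pow, Real.sq_sqrt (by linarith)]
lemma qq_anti {s t K : ℝ} (hs : 0 ≤ s) (hK : 1 ≤ K) (h : 1 + t ≤ K^2*(1+s)) (ht : 0 ≤ t) : qq s ≤ K * qq t := by
  unfold qq
  rw [← div_eq_mul_inv, inv_eq_one_div, div_le_div_iff₀ (by positivity) (by positivity), one_mul]
  calc Real.sqrt (1+t) ≤ Real.sqrt (K^2*(1+s)) := Real.sqrt_le_sqrt h
    _ = K * Real.sqrt (1+s) := by rw [Real.sqrt_mul (by positivity), Real.sqrt_sq (by linarith)]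

lemma pp_nn (r z t : ℝ) : 0 ≤ pp r z t := by unfold pp; positivity
lemma GG_nn (M z t : ℝ) : 0 ≤ GG M z t := by unfold GG; positivity
lemma ww_nn (M r z t : ℝ) : 0 ≤ ww M r z t := add_nonneg (pp_nn _ _ _) (GG_nn _ _ _)
lemma GG_eq (M z t : ℝ) : GG M z t = qq t * Real.exp (-z^2/(M*(1+t))) := by
  unfold GG qq; rw [div_eq_mul_inv, mul_comm]

section
variable {M r : ℝ} (hM : 1 ≤ M) (hr : 3 ≤ r)
include hM in
lemma GG_le {t : ℝ} (z : ℝ) (ht : 0 ≤ t) : GG M z t ≤ qq t := by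
  rw [GG_eq]
  refine mul_le_of_le_one_right (qq_pos ht).le (Real.exp_le_one_iff.2 ?_)
  have : 0 ≤ z^2/(M*(1+t)) := by positivity
  rw [neg_div]; linarith

lemma sqrt_bd {t : ℝ} (ht : 0 ≤ t) : Real.sqrt (1+t) ≤ 1 + Real.sqrt t := by
  rw [Real.sqrt_le_left (by positivity)]
  nlinarith [Real.sq_sqrt ht, Real.sqrt_nonneg t]

include hr in
lemma pp_le3 {t : ℝ} (z : ℝ) (ht : 0 ≤ t) : pp r z t ≤ qq t ^ 3 := by
  have h1 := sqrt_bd ht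
  have h0 : 1 ≤ Real.sqrt (1+t) := Real.one_le_sqrt.2 (by linarith)
  unfold pp qq
  calc (1 + |z| + Real.sqrt t) ^ (-r) ≤ (Real.sqrt (1+t))^(-r) :=
        Real.rpow_le_rpow_of_nonpos (by positivity) (by have := abs_nonneg z; linarith) (by linarith)
    _ ≤ (Real.sqrt (1+t))^(-(3:ℝ)) := Real.rpow_le_rpow_of_exponent_le h0 (by linarith)
    _ = _ := by rw [Real.rpow_neg (by positivity), inv_pow]; norm_cast

include hr in
lemma pp_le {t : ℝ} (z : ℝ) (ht : 0 ≤ t) : pp r z t ≤ qq t := 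
  (pp_le3 hr z ht).trans (by
    have := qq_le ht; have := qq_pos ht
    exact pow_le_of_le_one this.le (by linarith) (by norm_num))

include hM hr in
lemma ww_le {t : ℝ} (z : ℝ) (ht : 0 ≤ t) : ww M r z t ≤ 2 * qq t := by
  have := pp_le hr z ht; have := GG_le hM z ht
  unfold ww; linarith

include hr in
lemma pp_p0 {t : ℝ} (z : ℝ)  : pp r z t ≤ pp r z 0 := by
  unfold pp
  exact Real.rpow_le_rpow_of_nonpos (by positivity) (by have := Real.sqrt_nonneg t; simp) (by linarith)

include hr in
lemma p0_pp {z t : ℝ} (h : Real.sqrt (1+t) ≤ |z|) : pp r z 0 ≤ 2^r * pp r z t := by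
  unfold pp
  have h1 : Real.sqrt t ≤ Real.sqrt (1+t) := Real.sqrt_le_sqrt (by linarith)
  have : (2:ℝ)^r * (2*(1 + |z|))^(-r) = (1+|z|)^(-r) := by
    rw [Real.mul_rpow (by norm_num) (by positivity), ← mul_assoc, ← Real.rpow_add (by norm_num), add_neg_cancel, Real.rpow_zero, one_mul]
  rw [Real.sqrt_zero, add_zero, ← this]
  gcongr _ * ?_
  exact Real.rpow_le_rpow_of_nonpos (by positivity) (by linarith [abs_nonneg z]) (by linarith)

lemma pp_cont (r b t : ℝ) : Continuous fun y => pp r (y+b) t := by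
  unfold pp
  refine Continuous.rpow_const (by fun_prop) fun y => Or.inl (by positivity)

include hr in
lemma pp_NB {t : ℝ} (ht : 0 ≤ t) (b : ℝ) : NB (fun y => pp r (y+b) t) :=
  ⟨pp_cont r b t, 1, fun y => by rw [abs_of_nonneg (pp_nn _ _ _)]; exact (pp_le hr _ ht).trans (qq_le ht)⟩

include hM in
lemma GG_NB {t : ℝ} (ht : 0 ≤ t) (b : ℝ) : NB (fun y => GG M (y+b) t) :=
  ⟨by unfold GG; fun_prop, 1, fun y => by rw [abs_of_nonneg (GG_nn _ _ _)]; exact (GG_le hM _ ht).trans (qq_le ht)⟩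

include hM hr in
lemma ww_NB {t : ℝ} (ht : 0 ≤ t) (b : ℝ) : NB (fun y => ww M r (y+b) t) := (pp_NB hr ht b).add (GG_NB hM ht b)

lemma exp_NB {B : ℝ} (hB : 0 ≤ B) : NB (fun y => Real.exp (-y^2/B)) :=
  ⟨by fun_prop, 1, fun y => by
    rw [Real.abs_exp, Real.exp_le_one_iff, neg_div]; have : 0 ≤ y^2/B := by positivity
    linarith⟩

include hr in
lemma p_int : Integrable (fun y : ℝ => pp r y 0) := by
  have := integrable_one_add_norm (E := ℝ) (μ := volume) (r := r) (by simp; linarith)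
  refine this.congr (Filter.Eventually.of_forall fun y => ?_)
  simp [pp]

include hM in
lemma ww_low {z t : ℝ} (ht : 0 ≤ t) (h : |z| ≤ Real.sqrt (1+t)) : qq t ≤ Real.exp 1 * ww M r z t := by
  have : qq t ≤ Real.exp 1 * GG M z t := by
    rw [GG_eq, mul_left_comm, ← Real.exp_add]
    refine le_mul_of_one_le_right (qq_pos ht).le (Real.one_le_exp ?_)
    have : z^2/(M*(1+t)) ≤ 1 := by
      rw [div_le_one (by positivity)]
      have h2 : |z|^2 ≤ (Real.sqrt (1+t))^2 := pow_le_pow_left₀ (abs_nonneg z) h 2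
      rw [sq_abs, Real.sq_sqrt (by linarith)] at h2
      nlinarith
    rw [neg_div]; linarith
  have h2 := mul_nonneg (Real.exp_pos 1).le (pp_nn r z t)
  unfold ww; linarith
end
end RD

namespace RD
section
variable {M r d : ℝ} (hM : 1 ≤ M) (hr : 3 ≤ r) (hd : 0 < d) (hMd : 64*d ≤ M)

lemma sqrt_exp {a x : ℝ} (ha : 0 < a) (hx : 0 ≤ x) : Real.sqrt x * Real.exp (-x/a) ≤ 1 + a := by
  have h1 : x/a + 1 ≤ Real.exp (x/a) := Real.add_one_le_exp _
  have h2 : Real.sqrt x ≤ 1 + x := by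
    rw [Real.sqrt_le_left (by linarith)]; nlinarith
  have h3 : 1 + x ≤ (1+a) * Real.exp (x/a) := by
    calc 1 + x ≤ (1+a)*(x/a+1) := by
          rw [show (1+a)*(x/a+1) = x/a + 1 + x + a by field_simp; ring]
          have : 0 ≤ x/a := by positivity
          linarith
      _ ≤ _ := by gcongr
  rw [neg_div, Real.exp_neg, ← div_eq_mul_inv, div_le_iff₀ (Real.exp_pos _)]
  linarith

include hM hd in
lemma LG : ∃ C, 0 ≤ C ∧ ∀ B s τ z : ℝ, 0 ≤ s → 0 < τ → M*(1+s) ≤ B → B ≤ 2*(M*(1+s)) →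
    qq s * NN (sg d τ) (fun y => Real.exp (-y^2/B)) z ≤ C * (qq (s+τ) * Real.exp (-z^2/(B+8*d*τ))) := by
  have hM0 : 0 < M := by linarith
  obtain ⟨c, hc0, hc1, hc2⟩ : ∃ c : ℝ, 0 < c ∧ c ≤ 1/4 ∧ c ≤ d/M :=
    ⟨min (1/4) (d/M), lt_min (by norm_num) (by positivity), min_le_left _ _, min_le_right _ _⟩
  refine ⟨Real.sqrt (Real.pi/c), Real.sqrt_nonneg _, fun B s τ z hs hτ h1 h2 => ?_⟩
  have hB : 0 < B := lt_of_lt_of_le (by positivity) h1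
  rw [NN_gauss hB, sg_sq hd hτ.le, show B+4*(2*d*τ) = B+8*d*τ by ring, ← mul_assoc, ← mul_assoc]
  refine mul_le_mul_of_nonneg_right ?_ (Real.exp_pos _).le
  unfold qq
  rw [inv_mul_eq_div, div_le_iff₀ (by positivity), ← Real.sqrt_inv, ← Real.sqrt_mul (by positivity), ← Real.sqrt_mul (by have := Real.pi_pos; positivity)]
  apply Real.sqrt_le_sqrt
  have h3 : c*τ/(1+s) ≤ 2*d*τ/B := by
    rw [div_le_div_iff₀ (by positivity) hB]
    have : c * M ≤ d := by rwa [le_div_iff₀ hM0] at hc2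
    calc c*τ*B ≤ c*τ*(2*(M*(1+s))) := by gcongr
      _ = (c*M)*(2*τ*(1+s)) := by ring
      _ ≤ d*(2*τ*(1+s)) := by gcongr
      _ = _ := by ring
  have h4 : c*(1+s+τ)/(1+s) ≤ 1/4 + 2*d*τ/B := by
    have : c*(1+s+τ)/(1+s) = c + c*τ/(1+s) := by field_simp
    linarith
  calc Real.pi/(1/4+2*d*τ/B) ≤ Real.pi/(c*(1+s+τ)/(1+s)) := by
        have := Real.pi_pos
        gcongr
    _ = _ := by field_simp; ring

/-- split bound for the algebraic weight -/
lemma NNp_far {σ : ℝ} (hr : 3 ≤ r) (hσ : 0 < σ) (z : ℝ) : NN σ (fun y => pp r y 0) z ≤ 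
    2^r * (∫ z, E z) * pp r z 0 + σ⁻¹ * (∫ y, pp r y 0) * Real.exp (-z^2/(16*σ^2)) := by
  have i1 : Integrable fun ζ : ℝ => pp r (z+σ*ζ) 0 := ((p_int hr).comp_add_left z).comp_mul_left' hσ.ne'
  have e1 : ∫ ζ : ℝ, pp r (z+σ*ζ) 0 = σ⁻¹ * ∫ y, pp r y 0 := by
    rw [MeasureTheory.Measure.integral_comp_mul_left (fun y => pp r (z+y) 0) σ, integral_add_left_eq_self (fun y => pp r y 0) z,
      abs_of_pos (by positivity), smul_eq_mul]
  have nb : NB fun y => pp r y 0 := by simpa using pp_NB hr (t := 0) le_rfl 0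
  rw [mul_assoc, mul_comm _ (pp r z 0), ← integral_const_mul, ← integral_const_mul, ← e1, mul_comm (∫ ζ : ℝ, pp r (z+σ*ζ) 0), ← integral_const_mul,
    ← integral_add ((E_int.const_mul _).const_mul _) (i1.const_mul _)]
  refine integral_mono (nb.int σ z) (((E_int.const_mul _).const_mul _).add (i1.const_mul _)) fun ζ => ?_
  have n1 := pp_nn r z 0
  have n2 := pp_nn r (z+σ*ζ) 0
  have n3 := E_nn ζ
  rcases le_total (|z|/2) (|z+σ*ζ|) with h | h
  · have : pp r (z+σ*ζ) 0 ≤ 2^r * pp r z 0 := by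
      have : (2:ℝ)^r * (2*((1 + |z|)/2))^(-r) = ((1+|z|)/2)^(-r) := by
        rw [Real.mul_rpow (by norm_num) (by positivity), ← mul_assoc, ← Real.rpow_add (by norm_num), add_neg_cancel, Real.rpow_zero, one_mul]
      unfold pp
      rw [Real.sqrt_zero, add_zero, add_zero]
      rw [mul_div_cancel₀ _ (by norm_num)] at this
      rw [this]
      exact Real.rpow_le_rpow_of_nonpos (by positivity) (by linarith) (by linarith)
    have h5 := mul_le_mul_of_nonneg_left this n3
    have h6 : 0 ≤ Real.exp (-z^2/(16*σ^2)) * pp r (z+σ*ζ) 0 := by positivity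
    simp only
    linarith
  · have : E ζ ≤ Real.exp (-z^2/(16*σ^2)) := by
      unfold E
      apply Real.exp_le_exp.2
      rw [neg_div, neg_div, neg_le_neg_iff, div_le_div_iff₀ (by positivity) (by norm_num)]
      have h7 : |z|/2 ≤ |σ*ζ| := by
        have := abs_sub_abs_le_abs_sub z (z+σ*ζ)
        rw [show z - (z+σ*ζ) = -(σ*ζ) by ring, abs_neg] at this
        linarith
      have h8 := pow_le_pow_left₀ (by positivity) h7 2
      rw [div_pow, sq_abs, sq_abs] at h8
      nlinarith
    have h5 := mul_le_mul_of_nonneg_right this n2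
    have h6 : 0 ≤ 2^r * (pp r z 0 * E ζ) := by positivity
    simp only
    linarith

include hM hr hd hMd in
lemma L1p : ∃ C, 0 ≤ C ∧ ∀ s τ z : ℝ, 0 ≤ s → 0 < τ → 
    NN (sg d τ) (fun y => pp r y s) z ≤ C * ww M r z (s+τ) := by
  set I := ∫ z, E z with hI
  set J := ∫ y, pp r y 0 with hJ
  have I0 : 0 ≤ I := integral_nonneg E_nn
  have J0 : 0 ≤ J := integral_nonneg fun y => pp_nn _ _ _
  set K := (Real.sqrt (2*d))⁻¹ with hK
  have K0 : 0 ≤ K := by positivity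
  have sgi : ∀ τ : ℝ, 0 < τ → (sg d τ)⁻¹ = K * (Real.sqrt τ)⁻¹ := fun τ hτ => by
    unfold sg; rw [Real.sqrt_mul (by positivity), mul_inv]
  have nb : ∀ s : ℝ, 0 ≤ s → NB fun y => pp r y s := fun s hs => by simpa using pp_NB hr hs 0
  refine ⟨2*(I + K*J)*2*Real.exp 1 + 2^r*I*2^r + K*J*(1+64*d), by positivity, fun s τ z hs hτ => ?_⟩
  have st : 0 ≤ s+τ := by linarith
  have w0 := ww_nn M r z (s+τ)
  have hle : NN (sg d τ) (fun y => pp r y s) z ≤ NN (sg d τ) (fun y => pp r y 0) z :=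
    NN_mono (nb s hs) (nb 0 le_rfl) (fun y => pp_p0 hr y) _ _
  rcases le_total |z| (Real.sqrt (1+(s+τ))) with hz | hz
  · have hl := ww_low (r := r) hM st hz
    suffices NN (sg d τ) (fun y => pp r y s) z ≤ 2*(I + K*J)*2*qq (s+τ) by
      calc _ ≤ 2*(I + K*J)*2*qq (s+τ) := this
        _ ≤ 2*(I + K*J)*2*(Real.exp 1 * ww M r z (s+τ)) := by gcongr
        _ ≤ _ := by
          have : 0 ≤ (2^r*I*2^r + K*J*(1+64*d)) * ww M r z (s+τ) := by positivity
          linarith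
    have q0 := qq_pos st
    by_cases hc : τ ≤ s ∨ τ ≤ 1
    · have h1 : NN (sg d τ) (fun y => pp r y s) z ≤ I * qq s := by
        rw [← NN_const (qq s) (sg d τ) z]
        exact NN_mono (nb s hs) (NB.const _) (fun y => pp_le hr y hs) _ _
      have h2 : qq s ≤ 2 * qq (s+τ) := qq_anti hs (by norm_num) (by rcases hc with h | h <;> nlinarith) st
      have : 0 ≤ K*J*qq (s+τ) := by positivity
      have : 0 ≤ I*qq (s+τ) := by positivity
      nlinarith
    · push Not at hc
      have h1 := NNp_far (r := r) hr (sg_pos hd hτ) 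
      have h3 : NN (sg d τ) (fun y => pp r y 0) z ≤ (sg d τ)⁻¹ * J := by
        have i1 : Integrable fun ζ : ℝ => pp r (z+(sg d τ)*ζ) 0 := ((p_int hr).comp_add_left z).comp_mul_left' (sg_pos hd hτ).ne'
        have e1 : ∫ ζ : ℝ, pp r (z+(sg d τ)*ζ) 0 = (sg d τ)⁻¹ * J := by
          rw [MeasureTheory.Measure.integral_comp_mul_left (fun y => pp r (z+y) 0), integral_add_left_eq_self (fun y => pp r y 0) z,
            abs_of_pos (by have := sg_pos hd hτ; positivity), smul_eq_mul]
        rw [← e1]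
        refine integral_mono ((nb 0 le_rfl).int _ z) i1 fun ζ => ?_
        refine mul_le_of_le_one_left (pp_nn _ _ _) ?_
        unfold E
        rw [Real.exp_le_one_iff, neg_div]; have : 0 ≤ ζ^2/4 := by positivity
        linarith
      have h4 : (Real.sqrt τ)⁻¹ ≤ 2 * qq (s+τ) := by
        unfold qq
        rw [← div_eq_mul_inv, inv_eq_one_div, div_le_div_iff₀ (by positivity) (by positivity), one_mul]
        calc Real.sqrt (1+(s+τ)) ≤ Real.sqrt (2^2*τ) := Real.sqrt_le_sqrt (by linarith)
          _ = 2 * Real.sqrt τ := by rw [Real.sqrt_mul (by positivity), Real.sqrt_sq (by norm_num)]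
      rw [sgi τ hτ] at h3
      have h5 : K * (Real.sqrt τ)⁻¹ * J ≤ K * (2*qq (s+τ)) * J := by gcongr
      have : 0 ≤ K*J*qq (s+τ) := by positivity
      have : 0 ≤ I*qq (s+τ) := by positivity
      linarith
  · have h1 := NNp_far (r := r) hr (sg_pos hd hτ) z
    have h2 := p0_pp hr hz
    have h3 : (Real.sqrt τ)⁻¹ * Real.exp (-z^2/(16*(sg d τ)^2)) ≤ (1+64*d) * GG M z (s+τ) := by
      rw [sg_sq hd hτ.le, GG_eq]
      have hz2 : 1+(s+τ) ≤ z^2 := by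
        rw [← sq_abs, ← Real.sqrt_le_left (abs_nonneg z)]; exact hz
      have e1 : Real.exp (-z^2/(16*(2*d*τ))) = Real.exp (-z^2/(64*d*τ)) * Real.exp (-z^2/(64*d*τ)) := by
        rw [← Real.exp_add]; congr 1; field_simp; ring
      have e2 : Real.exp (-z^2/(64*d*τ)) ≤ Real.exp (-z^2/(M*(1+(s+τ)))) := by
        apply Real.exp_le_exp.2
        rw [neg_div, neg_div, neg_le_neg_iff]
        have : 64*d*τ ≤ M*(1+(s+τ)) := by nlinarith
        gcongr
      have e3 : Real.exp (-z^2/(64*d*τ)) ≤ Real.exp (-((1+(s+τ))/τ)/(64*d)) := by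
        apply Real.exp_le_exp.2
        rw [neg_div, neg_div, neg_le_neg_iff, div_div, mul_comm τ]
        gcongr
      have e4 := sqrt_exp (a := 64*d) (x := (1+(s+τ))/τ) (by positivity) (by positivity)
      rw [Real.sqrt_div (by positivity)] at e4
      rw [e1]
      have e5 : (Real.sqrt τ)⁻¹ * Real.exp (-((1+(s+τ))/τ)/(64*d)) ≤ (1+64*d) * qq (s+τ) := by
        unfold qq
        rw [← div_eq_mul_inv (1+64*d), le_div_iff₀ (by positivity)]
        refine le_of_eq_of_le ?_ e4
        ring
      calc _ ≤ (Real.sqrt τ)⁻¹ * (Real.exp (-((1+(s+τ))/τ)/(64*d)) * Real.exp (-z^2/(M*(1+(s+τ))))) := by gcongr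
        _ = ((Real.sqrt τ)⁻¹ * Real.exp (-((1+(s+τ))/τ)/(64*d))) * Real.exp (-z^2/(M*(1+(s+τ)))) := by ring
        _ ≤ ((1+64*d) * qq (s+τ)) * Real.exp (-z^2/(M*(1+(s+τ)))) := by gcongr
        _ = _ := by ring
    rw [sgi τ hτ] at h1
    have g0 := GG_nn M z (s+τ)
    have p0 := pp_nn r z (s+τ)
    calc _ ≤ _ := hle
      _ ≤ _ := h1
      _ = 2^r * I * pp r z 0 + K*J*((Real.sqrt τ)⁻¹ * Real.exp (-z^2/(16*(sg d τ)^2))) := by ring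
      _ ≤ 2^r * I * (2^r * pp r z (s+τ)) + K*J*((1+64*d) * GG M z (s+τ)) := by gcongr
      _ ≤ _ := by
        unfold ww
        have : 0 ≤ (2*(I + K*J)*2*Real.exp 1) * (pp r z (s+τ) + GG M z (s+τ)) := by positivity
        have : 0 ≤ (2^r*I*2^r) * (GG M z (s+τ)) := by positivity
        have : 0 ≤ K*J*(1+64*d) * (pp r z (s+τ)) := by positivity
        linarith

include hM hr hd hMd in
lemma L1 : ∃ C, 0 ≤ C ∧ ∀ s τ z : ℝ, 0 ≤ s → 0 < τ → 
    NN (sg d τ) (fun y => ww M r y s) z ≤ C * ww M r z (s+τ) := by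
  obtain ⟨C1, h1, k1⟩ := L1p (r := r) hM hr hd hMd
  obtain ⟨C2, h2, k2⟩ := LG hM hd
  refine ⟨C1 + C2, by positivity, fun s τ z hs hτ => ?_⟩
  have nb1 : NB fun y => pp r y s := by simpa using pp_NB hr hs 0
  have nb2 : NB fun y => GG M y s := by simpa using GG_NB hM hs 0
  have e : NN (sg d τ) (fun y => ww M r y s) z = NN (sg d τ) (fun y => pp r y s) z + NN (sg d τ) (fun y => GG M y s) z :=
    NN_add nb1 nb2 _ _
  have k3 := k2 (M*(1+s)) s τ z hs hτ le_rfl (by nlinarith)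
  rw [← NN_cmul] at k3
  simp only [← GG_eq] at k3
  have k4 : qq (s+τ) * Real.exp (-z^2/(M*(1+s)+8*d*τ)) ≤ GG M z (s+τ) := by
    rw [GG_eq]
    have := (qq_pos (show 0 ≤ s + τ by linarith)).le
    gcongr ?_ * Real.exp ?_
    rw [neg_div, neg_div, neg_le_neg_iff]
    have : M*(1+s)+8*d*τ ≤ M*(1+(s+τ)) := by nlinarith
    gcongr
  have k5 : GG M z (s+τ) ≤ ww M r z (s+τ) := by unfold ww; linarith [pp_nn r z (s+τ)]
  have k6 := k1 s τ z hs hτ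
  have k7 := mul_le_mul_of_nonneg_left (k4.trans k5) h2
  rw [e]; linarith
end
end RD

namespace RD
section
variable {M r d γ : ℝ} (hM : 1 ≤ M) (hr : 3 ≤ r) (hd : 0 < d) (hMd : 64*d ≤ M) (hγ : γ ≠ 0)

lemma exp_poly {k : ℝ} (hr : 3 ≤ r) (hk : 0 < k) : ∃ C, 0 ≤ C ∧ ∀ x : ℝ, 0 ≤ x → Real.exp (-(k*x)) ≤ C * (1+x)^(-r) := by
  refine ⟨Real.exp (k - r + r * Real.log (r/k)), (Real.exp_pos _).le, fun x hx => ?_⟩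
  have h0 : 0 < 1+x := by linarith
  rw [Real.rpow_def_of_pos h0, ← Real.exp_add]
  apply Real.exp_le_exp.2
  have r0 : 0 < r := by linarith
  have h1 : Real.log (1+x) ≤ (1+x)*(k/r) - 1 + Real.log (r/k) := by
    have := Real.log_le_sub_one_of_pos (show 0 < (1+x)*(k/r) by positivity)
    have e : Real.log (1+x) = Real.log ((1+x)*(k/r)) + Real.log (r/k) := by
      rw [← Real.log_mul (by positivity) (by positivity)]; congr 1; field_simp
    linarith
  have h2 := mul_le_mul_of_nonneg_left h1 r0.le
  have e : r * ((1+x)*(k/r) - 1 + Real.log (r/k)) = (1+x)*k - r + r * Real.log (r/k) := by field_simp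
  linarith

lemma rpow_cmp {c a b : ℝ} (hr : 3 ≤ r) (hc : 0 < c) (ha : 0 < a) (h : c*a ≤ b) : b^(-r) ≤ c^(-r) * a^(-r) := by
  rw [← Real.mul_rpow hc.le ha.le]
  exact Real.rpow_le_rpow_of_nonpos (by positivity) h (by linarith)

include hr in
lemma pow_qq {s : ℝ} (hs : 0 ≤ s) : (1+s)^(-r) ≤ qq s ^ 3 := by
  calc (1+s)^(-r) ≤ (1+s)^(-(3:ℝ)) := Real.rpow_le_rpow_of_exponent_le (by linarith) (by linarith)
    _ = (qq s^2)^3 := by rw [Real.rpow_neg (by positivity), qq_sq hs, inv_pow]; norm_cast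
    _ = qq s^3 * qq s^3 := by ring
    _ ≤ qq s^3 := mul_le_of_le_one_right (pow_nonneg (qq_pos hs).le _) (pow_le_one₀ (qq_pos hs).le (qq_le hs))

lemma qq_anti' {s t : ℝ} (hs : 0 ≤ s) (h : s ≤ t) : qq t ≤ qq s := by
  unfold qq
  gcongr

include hM hγ in
lemma m1 : ∃ C, 0 ≤ C ∧ ∀ s a : ℝ, 0 ≤ s → |γ| *s/2 ≤ |a| → GG M a s ≤ C * qq s^3 := by
  have g0 : 0 < γ^2 := by positivity
  refine ⟨2+16*M/γ^2, by positivity, fun s a hs ha => ?_⟩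
  rw [GG_eq, show qq s^3 = qq s * qq s^2 by ring, mul_left_comm, qq_sq hs]
  have := (qq_pos hs).le
  gcongr
  have ha2 := pow_le_pow_left₀ (by positivity) ha 2
  rw [sq_abs, div_pow, mul_pow, sq_abs] at ha2
  set x := a^2/(M*(1+s)) with hx
  have x0 : 0 ≤ x := by positivity
  rw [neg_div, Real.exp_neg, ← div_eq_mul_inv, inv_eq_one_div, div_le_div_iff₀ (Real.exp_pos _) (by positivity), one_mul]
  have h1 : 1+s ≤ (2+16*M/γ^2)*(1+x) := by
    rcases le_total s 1 with h | h
    · have : 0 ≤ 16*M/γ^2 := by positivity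
      nlinarith
    · have h3 : γ^2*s/(8*M) ≤ x := by
        rw [hx, div_le_div_iff₀ (by positivity) (by positivity)]
        have h5 : γ^2*s^2 ≤ 4*a^2 := by linarith
        have h4 : γ^2*s*(1+s) ≤ 8*a^2 := by
          have : γ^2*(s*(1+s)) ≤ γ^2*(2*s^2) := mul_le_mul_of_nonneg_left (by nlinarith) g0.le
          linarith
        nlinarith
      have h4 : 2*s ≤ 16*M/γ^2*x := by
        calc 2*s = 16*M/γ^2*(γ^2*s/(8*M)) := by field_simp; ring
          _ ≤ _ := by gcongr
      have : 0 ≤ 16*M/γ^2 := by positivity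
      nlinarith
  have h2 := Real.add_one_le_exp x
  calc 1 + s ≤ _ := h1
    _ ≤ _ := by gcongr; linarith

include hr hγ in
lemma m2 : ∃ C, 0 ≤ C ∧ ∀ s y : ℝ, 0 ≤ s → |γ| *s/2 ≤ |y| → pp r y s ≤ C * (1+s)^(-r) := by
  have g0 : 0 < |γ| := by positivity
  obtain ⟨c, hc0, hc1, hc2⟩ : ∃ c : ℝ, 0 < c ∧ c ≤ 1 ∧ c ≤ |γ|/2 :=
    ⟨min 1 (|γ|/2), lt_min (by norm_num) (by positivity), min_le_left _ _, min_le_right _ _⟩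
  refine ⟨c^(-r), by positivity, fun s y hs hy => ?_⟩
  refine rpow_cmp hr hc0 (by positivity) ?_
  have := Real.sqrt_nonneg s
  nlinarith

include hM hγ in
lemma m3 : ∃ C, 0 ≤ C ∧ ∀ s τ y : ℝ, 0 ≤ s → 0 < τ → |γ| *s/2 ≤ |y| → 
    GG M y s ≤ C * ((qq s^3 + qq τ^3) * (qq s * Real.exp (-y^2/(M*(1+s)+M/4*min (1+s) τ)))) := by
  have g0 : 0 < γ^2 := by positivity
  refine ⟨(3+256*M/γ^2)^2, by positivity, fun s τ y hs hτ hy => ?_⟩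
  obtain ⟨m, hm⟩ : ∃ m, m = min (1+s) τ := ⟨_, rfl⟩
  have m0 : 0 < m := by rw [hm]; exact lt_min (by linarith) hτ
  have m1 : m ≤ 1+s := by rw [hm]; exact min_le_left _ _
  rw [GG_eq, ← hm]
  have hqs := (qq_pos hs).le
  have hqt := (qq_pos hτ.le).le
  have hy2 := pow_le_pow_left₀ (by positivity) hy 2
  rw [sq_abs, div_pow, mul_pow, sq_abs] at hy2
  set X := y^2*m/(8*M*(1+s)^2) with hX
  have X0 : 0 ≤ X := by positivity
  have e1 : Real.exp (-y^2/(M*(1+s))) ≤ Real.exp (-X) * Real.exp (-y^2/(M*(1+s)+M/4*m)) := by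
    rw [← Real.exp_add]; apply Real.exp_le_exp.2
    have : X ≤ y^2/(M*(1+s)) - y^2/(M*(1+s)+M/4*m) := by
      have e : y^2/(M*(1+s)) - y^2/(M*(1+s)+M/4*m) = y^2*m/(4*M*(1+s)*(1+s+m/4)) := by
        field_simp; ring
      rw [e, hX]
      refine div_le_div_of_nonneg_left (by positivity) (by positivity) ?_
      have : 4*M*(1+s)*(1+s+m/4) ≤ 4*M*(1+s)*(2*(1+s)) := by gcongr; linarith
      linarith
    rw [neg_div, neg_div]; linarith
  have e2 : Real.exp (-X) ≤ (3+256*M/γ^2)^2 * (qq s^3 + qq τ^3) := by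
    have h1 : 1+m ≤ (3+256*M/γ^2)*(1+X/2) := by
      have k0 : 0 ≤ 256*M/γ^2 := by positivity
      rcases le_total s 1 with h | h
      · nlinarith
      · have h3 : γ^2*m/(128*M) ≤ X := by
          rw [hX, div_le_div_iff₀ (by positivity) (by positivity)]
          have h5 : γ^2*(1+s)^2 ≤ 16*y^2 := by
            have : γ^2*(1+s)^2 ≤ γ^2*(4*s^2) := by gcongr; nlinarith
            linarith
          have : γ^2*(1+s)^2*(8*M*m) ≤ 16*y^2*(8*M*m) := by gcongr
          linarith
        have h4 : 2*m ≤ 256*M/γ^2*X := by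
          calc 2*m = 256*M/γ^2*(γ^2*m/(128*M)) := by field_simp; ring
            _ ≤ _ := by gcongr
        nlinarith
    have h2 : (1+m)^2 ≤ (3+256*M/γ^2)^2 * Real.exp X := by
      have e : Real.exp X = (Real.exp (X/2))^2 := by rw [← Real.exp_nat_mul]; congr 1; push_cast; ring
      rw [e, ← mul_pow]
      refine pow_le_pow_left₀ (by positivity) (h1.trans ?_) 2
      have := Real.add_one_le_exp (X/2)
      gcongr; linarith
    have h3 : Real.exp (-X) ≤ (3+256*M/γ^2)^2 * ((1+m)^2)⁻¹ := by
      rw [Real.exp_neg, ← div_eq_mul_inv, inv_eq_one_div, div_le_div_iff₀ (Real.exp_pos _) (by positivity), one_mul]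
      exact h2
    refine h3.trans ?_
    gcongr
    have h4 : ((1+m)^2)⁻¹ ≤ qq m^3 := by
      rw [← inv_pow, ← qq_sq m0.le]
      have a := (qq_pos m0.le).le
      have b := qq_le m0.le
      calc (qq m^2)^2 = qq m^3 * qq m := by ring
        _ ≤ qq m^3 := mul_le_of_le_one_right (by positivity) b
    refine h4.trans ?_
    rcases le_total (1+s) τ with h | h
    · rw [min_eq_left h] at hm
      have := pow_le_pow_left₀ (qq_pos m0.le).le (qq_anti' hs (show s ≤ m by linarith)) 3
      have : 0 ≤ qq τ^3 := by positivity
      linarith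
    · rw [min_eq_right h] at hm
      rw [hm]
      have : 0 ≤ qq s^3 := by positivity
      linarith
  calc qq s * Real.exp (-y^2/(M*(1+s))) ≤ qq s * (Real.exp (-X) * Real.exp (-y^2/(M*(1+s)+M/4*m))) := by gcongr
    _ ≤ qq s * (((3+256*M/γ^2)^2 * (qq s^3 + qq τ^3)) * Real.exp (-y^2/(M*(1+s)+M/4*m))) := by gcongr
    _ = _ := by ring

include hM hr hγ in
lemma mixed : ∃ C, 0 ≤ C ∧ ∀ s τ y : ℝ, 0 ≤ s → 0 < τ → ww M r y s * ww M r (y+γ*s) s ≤ 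
    C * (qq s^3 * ww M r y s + (1+s)^(-r) * GG M (y+γ*s) s +
      (qq s^3 + qq τ^3) * (qq s * Real.exp (-y^2/(M*(1+s)+M/4*min (1+s) τ)))) := by
  obtain ⟨C1, p1, k1⟩ := m1 hM hγ
  obtain ⟨C2, p2, k2⟩ := m2 hr hγ
  obtain ⟨C3, p3, k3⟩ := m3 hM hγ
  refine ⟨1+C1+C2+C3, by positivity, fun s τ y hs hτ => ?_⟩
  have hqs := (qq_pos hs).le
  have hqt := (qq_pos hτ.le).le
  have w1 := ww_nn M r y s
  have G2 := GG_nn M (y+γ*s) s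
  have P2 := pp_le3 hr (y+γ*s) hs
  have z0 : 0 ≤ (1+s)^(-r) := by positivity
  obtain ⟨Z, hZ⟩ : ∃ Z, Z = (qq s^3 + qq τ^3) * (qq s * Real.exp (-y^2/(M*(1+s)+M/4*min (1+s) τ))) := ⟨_, rfl⟩
  have Z0 : 0 ≤ Z := by rw [hZ]; positivity
  have k3 := k3 s τ y hs hτ
  rw [← hZ] at k3 ⊢
  have e : ww M r (y+γ*s) s = pp r (y+γ*s) s + GG M (y+γ*s) s := rfl
  have b1 := mul_le_mul_of_nonneg_left P2 w1
  suffices ww M r y s * GG M (y+γ*s) s ≤ C1 * (qq s^3 * ww M r y s) + C2*((1+s)^(-r) * GG M (y+γ*s) s) + C3*Z by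
    have a1 : 0 ≤ (C2+C3)*(qq s^3 * ww M r y s) := by positivity
    have a2 : 0 ≤ (1+C1+C3)*((1+s)^(-r) * GG M (y+γ*s) s) := by positivity
    have a3 : 0 ≤ (1+C1+C2)*Z := by positivity
    rw [e]; linarith
  rcases le_total (|γ| *s/2) |y| with h | h
  · have h1 := mul_le_mul_of_nonneg_right (k2 s y hs h) G2
    have h2 := k3 h
    have h3 : GG M y s * GG M (y+γ*s) s ≤ GG M y s := 
      mul_le_of_le_one_right (GG_nn _ _ _) ((GG_le hM _ hs).trans (qq_le hs))
    have : 0 ≤ C1 * (qq s^3 * ww M r y s) := by positivity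
    have e' : ww M r y s = pp r y s + GG M y s := rfl
    rw [e'] at this ⊢
    linarith
  · have h1 : |γ| *s/2 ≤ |y+γ*s| := by
      have := abs_sub_abs_le_abs_sub (γ*s) (-y)
      rw [abs_neg, abs_mul, abs_of_nonneg hs, show γ*s - -y = y+γ*s by ring] at this
      linarith
    have h2 := mul_le_mul_of_nonneg_left (k1 s _ hs h1) w1
    have : 0 ≤ C2*((1+s)^(-r) * GG M (y+γ*s) s) := by positivity
    have : 0 ≤ C3*Z := by positivity
    linarith

include hM hr hd hMd hγ in
lemma Q1 : ∃ C, 0 ≤ C ∧ ∀ s τ z : ℝ, 0 ≤ s → 0 < τ → 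
    (1+s)^(-r) * (qq (s+τ) * Real.exp (-(z+γ*s)^2/(M*(1+s)+8*d*τ))) ≤
    C * (ww M r z (s+τ) * (qq s^3 + qq (s+τ) * Real.exp (-(z+γ*s)^2/(M*(1+(s+τ)))))) := by
  have g0 : 0 < |γ| := by positivity
  have hM0 : 0 < M := by linarith
  obtain ⟨C1, p1, k1⟩ := exp_poly (r := r) (k := 9/(32*M*(1+1/(4*|γ|)))) hr (by positivity)
  obtain ⟨c, hc0, hc1, hc2⟩ : ∃ c : ℝ, 0 < c ∧ c ≤ 1 ∧ c ≤ 1/(4*|γ|) :=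
    ⟨min 1 (1/(4*|γ|)), lt_min (by norm_num) (by positivity), min_le_left _ _, min_le_right _ _⟩
  refine ⟨Real.exp 1 + 1 + C1*2^r + c^(-r)*2^r, by positivity, fun s τ z hs hτ => ?_⟩
  have st : 0 ≤ s+τ := by linarith
  have hqs := (qq_pos hs).le
  have hqt := (qq_pos st).le
  have hq1 := qq_le st
  have w1 := ww_nn M r z (s+τ)
  have G1 := GG_nn M z (s+τ)
  have P1 := pp_nn r z (s+τ)
  have rq := pow_qq hr hs
  have z0 : 0 ≤ (1+s)^(-r) := by positivity
  have ew : ww M r z (s+τ) = pp r z (s+τ) + GG M z (s+τ) := rfl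
  obtain ⟨Y, hY⟩ : ∃ Y, Y = Real.exp (-(z+γ*s)^2/(M*(1+(s+τ)))) := ⟨_, rfl⟩
  have Y0 : 0 ≤ Y := by rw [hY]; positivity
  rw [← hY]
  have den : M*(1+s)+8*d*τ ≤ M*(1+(s+τ)) := by nlinarith
  have den0 : 0 < M*(1+s)+8*d*τ := by positivity
  obtain ⟨X, hX⟩ : ∃ X, X = Real.exp (-(z+γ*s)^2/(M*(1+s)+8*d*τ)) := ⟨_, rfl⟩
  have XY : X ≤ Y := by
    rw [hX, hY]; apply Real.exp_le_exp.2
    rw [neg_div, neg_div, neg_le_neg_iff]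
    gcongr
  have X0 : 0 ≤ X := by rw [hX]; positivity
  have Y1 : Y ≤ 1 := by
    rw [hY, Real.exp_le_one_iff, neg_div]
    have : 0 ≤ (z+γ*s)^2/(M*(1+(s+τ))) := by positivity
    linarith
  rw [← hX]
  have hb : 0 ≤ ww M r z (s+τ) * (qq (s+τ) * Y) := by positivity
  have ha : 0 ≤ ww M r z (s+τ) * qq s^3 := by positivity
  rcases le_total |z| (Real.sqrt (1+(s+τ))) with hz | hz
  · have hl := ww_low (r := r) hM st hz
    calc (1+s)^(-r) * (qq (s+τ) * X) ≤ qq s^3 * ((Real.exp 1 * ww M r z (s+τ)) * 1) := by gcongr; linarith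
      _ = Real.exp 1 * (ww M r z (s+τ) * qq s^3) := by ring
      _ ≤ _ := by
        have : 0 ≤ (1 + C1*2^r + c^(-r)*2^r)*(ww M r z (s+τ) * qq s^3) := by positivity
        have : 0 ≤ (Real.exp 1 + 1 + C1*2^r + c^(-r)*2^r)*(ww M r z (s+τ) * (qq (s+τ) * Y)) := by positivity
        linarith
  have pz := p0_pp hr hz
  have pw : pp r z 0 ≤ 2^r * ww M r z (s+τ) := pz.trans (by rw [ew]; gcongr; linarith)
  have z1 : 1 ≤ |z| := le_trans (Real.one_le_sqrt.2 (by linarith)) hz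
  rcases le_total (|γ| *s) (|z|/4) with h | h
  · have h1 : 3/4*|z| ≤ |z+γ*s| := by
      have := abs_sub_abs_le_abs_sub z (-(γ*s))
      rw [abs_neg, abs_mul, abs_of_nonneg hs, show z - -(γ*s) = z+γ*s by ring] at this
      linarith
    have h2 := pow_le_pow_left₀ (by positivity) h1 2
    rw [mul_pow, sq_abs, sq_abs] at h2
    rcases le_total (2*(1+s)) (1+(s+τ)) with h3 | h3
    · have h4 : X ≤ Real.exp (-z^2/(M*(1+(s+τ)))) := by
        rw [hX]; apply Real.exp_le_exp.2
        rw [neg_div, neg_div, neg_le_neg_iff, div_le_div_iff₀ (by positivity) den0]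
        have h5 : M*(1+s)+8*d*τ ≤ 9/16*(M*(1+(s+τ))) := by nlinarith
        calc z^2*(M*(1+s)+8*d*τ) ≤ z^2*(9/16*(M*(1+(s+τ)))) := by gcongr
          _ = (9/16*z^2)*(M*(1+(s+τ))) := by ring
          _ ≤ _ := by gcongr; linarith
      have h6 : qq (s+τ) * X ≤ ww M r z (s+τ) := by
        rw [ew, GG_eq]
        have := mul_le_mul_of_nonneg_left h4 hqt
        linarith
      calc (1+s)^(-r) * (qq (s+τ) * X) ≤ qq s^3 * ww M r z (s+τ) := by gcongr
        _ ≤ _ := by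
          have : 0 ≤ (Real.exp 1 + C1*2^r + c^(-r)*2^r)*(ww M r z (s+τ) * qq s^3) := by positivity
          have : 0 ≤ (Real.exp 1 + 1 + C1*2^r + c^(-r)*2^r)*(ww M r z (s+τ) * (qq (s+τ) * Y)) := by positivity
          linarith
    · have h4 : X ≤ C1 * pp r z 0 := by
        have k := k1 |z| (abs_nonneg z)
        have e : (1+|z|)^(-r) = pp r z 0 := by simp [pp]
        rw [e] at k
        refine le_trans ?_ k
        rw [hX]; apply Real.exp_le_exp.2
        rw [neg_div, neg_le_neg_iff, le_div_iff₀ den0]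
        have h5 : M*(1+s)+8*d*τ ≤ 2*M*((1+1/(4*|γ|))*|z|) := by
          have h6 : s ≤ 1/(4*|γ|)*|z| := by
            rw [div_mul_eq_mul_div, one_mul, le_div_iff₀ (by positivity)]; linarith
          calc _ ≤ M*(1+(s+τ)) := den
            _ ≤ M*(2*(1+s)) := by gcongr
            _ = 2*M*(1+s) := by ring
            _ ≤ _ := by gcongr; linarith
        calc 9/(32*M*(1+1/(4*|γ|)))*|z| *(M*(1+s)+8*d*τ) ≤ 9/(32*M*(1+1/(4*|γ|)))*|z| *(2*M*((1+1/(4*|γ|))*|z|)) := by gcongr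
          _ = 9/16*|z|^2 := by field_simp; ring
          _ = 9/16*z^2 := by rw [sq_abs]
          _ ≤ _ := by linarith
      calc (1+s)^(-r) * (qq (s+τ) * X) ≤ qq s^3 * (1 * (C1 * (2^r*ww M r z (s+τ)))) := by
            gcongr; exact h4.trans (by gcongr)
        _ = C1*2^r*(ww M r z (s+τ) * qq s^3) := by ring
        _ ≤ _ := by
          have : 0 ≤ (Real.exp 1 + 1 + c^(-r)*2^r)*(ww M r z (s+τ) * qq s^3) := by positivity
          have : 0 ≤ (Real.exp 1 + 1 + C1*2^r + c^(-r)*2^r)*(ww M r z (s+τ) * (qq (s+τ) * Y)) := by positivity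
          linarith
  · have h1 : (1+s)^(-r) ≤ c^(-r) * pp r z 0 := by
      have e : (1+|z|)^(-r) = pp r z 0 := by simp [pp]
      rw [← e]
      refine rpow_cmp hr hc0 (by positivity) ?_
      have h6 : 1/(4*|γ|)*|z| ≤ s := by
        rw [div_mul_eq_mul_div, one_mul, div_le_iff₀ (by positivity)]; linarith
      nlinarith
    calc (1+s)^(-r) * (qq (s+τ) * X) ≤ (c^(-r) * (2^r * ww M r z (s+τ))) * (qq (s+τ) * Y) := by
          gcongr; exact h1.trans (by gcongr)
      _ = c^(-r)*2^r*(ww M r z (s+τ) * (qq (s+τ) * Y)) := by ring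
      _ ≤ _ := by
          have : 0 ≤ (Real.exp 1 + 1 + C1*2^r)*(ww M r z (s+τ) * (qq (s+τ) * Y)) := by positivity
          have : 0 ≤ (Real.exp 1 + 1 + C1*2^r + c^(-r)*2^r)*(ww M r z (s+τ) * qq s^3) := by positivity
          linarith
end
end RD

namespace RD
section
variable {M r d γ : ℝ} (hM : 1 ≤ M) (hr : 3 ≤ r) (hd : 0 < d) (hMd : 64*d ≤ M) (hγ : γ ≠ 0)

include hM hr hd hMd hγ in
lemma KEY : ∃ C, 0 ≤ C ∧ ∀ s τ z : ℝ, 0 ≤ s → 0 < τ → 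
    NN (sg d τ) (fun y => ww M r y s * ww M r (y+γ*s) s) z ≤
    C * (ww M r z (s+τ) * (qq s^3 + qq τ^3 + qq (s+τ) * Real.exp (-(z+γ*s)^2/(M*(1+(s+τ)))))) := by
  obtain ⟨C1, p1, k1⟩ := mixed (r := r) hM hr hγ
  obtain ⟨C2, p2, k2⟩ := L1 (r := r) hM hr hd hMd
  obtain ⟨C3, p3, k3⟩ := LG hM hd
  obtain ⟨C4, p4, k4⟩ := Q1 (r := r) hM hr hd hMd hγ
  refine ⟨C1*(C2+C3*C4+C3), by positivity, fun s τ z hs hτ => ?_⟩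
  have st : 0 ≤ s+τ := by linarith
  have hqs := (qq_pos hs).le
  have hqt := (qq_pos hτ.le).le
  have hqst := (qq_pos st).le
  have w0 := ww_nn M r z (s+τ)
  have nbw : NB fun y => ww M r y s := by simpa using ww_NB hM hr hs 0
  have nbw' : NB fun y => ww M r (y+γ*s) s := ww_NB hM hr hs _
  have nbG : NB fun y => GG M y s := by simpa using GG_NB hM hs 0
  have nbG' : NB fun y => GG M (y+γ*s) s := GG_NB hM hs _
  obtain ⟨B, hB⟩ : ∃ B, B = M*(1+s)+M/4*min (1+s) τ := ⟨_, rfl⟩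
  have mn0 : 0 < min (1+s) τ := lt_min (by linarith) hτ
  have b1 : M*(1+s) ≤ B := by
    have : 0 ≤ M/4*min (1+s) τ := by positivity
    linarith
  have b2 : B ≤ 2*(M*(1+s)) := by
    have : M/4*min (1+s) τ ≤ M/4*(1+s) := by gcongr; exact min_le_left _ _
    nlinarith
  have b3 : B + 8*d*τ ≤ M*(1+(s+τ)) := by
    have : M/4*min (1+s) τ ≤ M/4*τ := by gcongr; exact min_le_right _ _
    nlinarith
  have B0 : 0 < B := lt_of_lt_of_le (by positivity) b1
  have nbE := exp_NB B0.le
  obtain ⟨Y, hY⟩ : ∃ Y, Y = Real.exp (-(z+γ*s)^2/(M*(1+(s+τ)))) := ⟨_, rfl⟩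
  have Y0 : 0 ≤ Y := by rw [hY]; positivity
  have z0 : 0 ≤ (1+s)^(-r) := by positivity
  rw [← hY]
  have i1 : NN (sg d τ) (fun y => ww M r y s * ww M r (y+γ*s) s) z ≤ NN (sg d τ) 
      (fun y => C1 * ((qq s^3 * ww M r y s + (1+s)^(-r) * GG M (y+γ*s) s) + ((qq s^3 + qq τ^3)*qq s) * Real.exp (-y^2/B))) z := by
    refine NN_mono (nbw.mul nbw') ((NB.const _).mul ((((NB.const _).mul nbw).add ((NB.const _).mul nbG')).add ((NB.const _).mul nbE))) (fun y => ?_) _ _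
    have := k1 s τ y hs hτ
    rw [← hB] at this
    linarith
  rw [NN_cmul, NN_add (((NB.const _).mul nbw).add ((NB.const _).mul nbG')) ((NB.const _).mul nbE), 
    NN_add ((NB.const _).mul nbw) ((NB.const _).mul nbG'), NN_cmul, NN_cmul, NN_cmul,
    NN_shift (fun y => GG M y s)] at i1
  have j1 : NN (sg d τ) (fun y => ww M r y s) z ≤ C2 * ww M r z (s+τ) := k2 s τ z hs hτ
  have j2 : NN (sg d τ) (fun y => GG M y s) (z+γ*s) ≤ C3 * (qq (s+τ) * Real.exp (-(z+γ*s)^2/(M*(1+s)+8*d*τ))) := by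
    have := k3 (M*(1+s)) s τ (z+γ*s) hs hτ le_rfl (by nlinarith)
    rw [← NN_cmul] at this
    simpa only [← GG_eq] using this
  have j3 : qq s * NN (sg d τ) (fun y => Real.exp (-y^2/B)) z ≤ C3 * ww M r z (s+τ) := by
    refine (k3 B s τ z hs hτ b1 b2).trans ?_
    gcongr
    have : qq (s+τ) * Real.exp (-z^2/(B+8*d*τ)) ≤ GG M z (s+τ) := by
      rw [GG_eq]
      gcongr ?_ * Real.exp ?_
      rw [neg_div, neg_div, neg_le_neg_iff]
      gcongr
    unfold ww; linarith [pp_nn r z (s+τ)]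
  have j4 := k4 s τ z hs hτ
  rw [← hY] at j4
  have l1 : qq s^3 * NN (sg d τ) (fun y => ww M r y s) z ≤ qq s^3 * (C2 * ww M r z (s+τ)) := by gcongr
  have l2 : (1+s)^(-r) * NN (sg d τ) (fun y => GG M y s) (z+γ*s) ≤ C3 * (C4 * (ww M r z (s+τ) * (qq s^3 + qq (s+τ) * Y))) := by
    calc _ ≤ (1+s)^(-r) * (C3 * (qq (s+τ) * Real.exp (-(z+γ*s)^2/(M*(1+s)+8*d*τ)))) := by gcongr
      _ = C3 * ((1+s)^(-r) * (qq (s+τ) * Real.exp (-(z+γ*s)^2/(M*(1+s)+8*d*τ)))) := by ring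
      _ ≤ _ := by gcongr
  have l3 : (qq s^3 + qq τ^3) * qq s * NN (sg d τ) (fun y => Real.exp (-y^2/B)) z ≤ (qq s^3 + qq τ^3) * (C3 * ww M r z (s+τ)) := by
    rw [mul_assoc]; gcongr
  refine i1.trans ?_
  rw [mul_assoc C1 (C2+C3*C4+C3)]
  refine mul_le_mul_of_nonneg_left ?_ p1
  have a1 : 0 ≤ ww M r z (s+τ) * qq s^3 := by positivity
  have a2 : 0 ≤ ww M r z (s+τ) * qq τ^3 := by positivity
  have a3 : 0 ≤ ww M r z (s+τ) * (qq (s+τ) * Y) := by positivity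
  have c1 : 0 ≤ C3*C4 := by positivity
  have q1 := mul_nonneg c1 a2
  have q2 := mul_nonneg p2 a2
  have q3 := mul_nonneg p2 a3
  have q4 := mul_nonneg p3 a3
  linarith

/-- time kernel -/
def mm (M γ z t τ : ℝ) : ℝ := (1 + (Real.sqrt τ)⁻¹) * (qq (t-τ)^3 + qq τ^3 + qq t * Real.exp (-(z+γ*(t-τ))^2/(M*(1+t)))) + (Real.sqrt τ)⁻¹ * qq (t-τ)

/-- dominating kernel -/
def dm (M γ z t τ : ℝ) : ℝ := 2*qq (t-τ)^3 + 2*qq τ^3 + 2*(Ioc (0:ℝ) 1).indicator (fun τ => τ^(-(1/2):ℝ)) τ 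
  + (Real.sqrt (t/2))⁻¹ * τ^(-(1/2):ℝ) + (Real.sqrt (t/2))⁻¹ * qq (t-τ) + qq t * Real.exp (-(z+γ*(t-τ))^2/(M*(1+t))) + qq t * τ^(-(1/2):ℝ)

lemma sqrt_inv_rpow {τ : ℝ} (hτ : 0 < τ) : (Real.sqrt τ)⁻¹ = τ^(-(1/2):ℝ) := by
  rw [Real.rpow_neg hτ.le, Real.sqrt_eq_rpow]

include hM in
lemma mm_le {z t τ : ℝ} (h0 : 0 < τ) (h1 : τ ≤ t) : mm M γ z t τ ≤ dm M γ z t τ := by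
  unfold mm dm
  rw [← sqrt_inv_rpow h0]
  have s0 : 0 ≤ t - τ := by linarith
  have t0 : 0 < t := by linarith
  have qs := qq_pos s0
  have qt := qq_pos h0.le
  have qT := qq_pos t0.le
  have qs1 := qq_le s0
  have qt1 := qq_le h0.le
  obtain ⟨Y, hY⟩ : ∃ Y, Y = Real.exp (-(z+γ*(t-τ))^2/(M*(1+t))) := ⟨_, rfl⟩
  have Y0 : 0 ≤ Y := by rw [hY]; positivity
  have Y1 : Y ≤ 1 := by
    rw [hY, Real.exp_le_one_iff, neg_div]
    have : 0 ≤ (z+γ*(t-τ))^2/(M*(1+t)) := by positivity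
    linarith
  rw [← hY]
  obtain ⟨q, hq⟩ : ∃ q, q = (Real.sqrt τ)⁻¹ := ⟨_, rfl⟩
  have q0 : 0 < q := by rw [hq]; positivity
  obtain ⟨I, hI⟩ : ∃ I, I = (Ioc (0:ℝ) 1).indicator (fun τ : ℝ => τ^(-(1/2):ℝ)) τ := ⟨_, rfl⟩
  have key : ∀ h : ℝ, 0 ≤ h → h ≤ 1 → q * h ≤ h + I := by
    intro h k0 k1
    rcases le_total τ 1 with e | e
    · rw [hI, indicator_of_mem (show τ ∈ Ioc (0:ℝ) 1 from ⟨h0, e⟩), ← sqrt_inv_rpow h0, ← hq]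
      nlinarith
    · have : q ≤ 1 := by rw [hq]; exact inv_le_one_of_one_le₀ (Real.one_le_sqrt.2 e)
      have : 0 ≤ I := by rw [hI]; exact indicator_nonneg (fun x hx => by have := hx.1; positivity) _
      nlinarith
  have k1 := key _ (pow_nonneg qs.le 3) (pow_le_one₀ qs.le qs1)
  have k2 := key _ (pow_nonneg qt.le 3) (pow_le_one₀ qt.le qt1)
  have k3 : q * qq (t-τ) ≤ (Real.sqrt (t/2))⁻¹ * q + (Real.sqrt (t/2))⁻¹ * qq (t-τ) := by
    have T0 : 0 ≤ (Real.sqrt (t/2))⁻¹ := by positivity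
    rcases le_total (t/2) τ with e | e
    · have : q ≤ (Real.sqrt (t/2))⁻¹ := by rw [hq]; gcongr
      have := mul_le_mul_of_nonneg_right this qs.le
      nlinarith
    · have : qq (t-τ) ≤ (Real.sqrt (t/2))⁻¹ := by unfold qq; gcongr; linarith
      have := mul_le_mul_of_nonneg_left this q0.le
      nlinarith
  have k4 : q * (qq t * Y) ≤ qq t * q := by
    have := mul_le_mul_of_nonneg_left Y1 (mul_pos q0 qT).le
    linarith
  rw [← hq, ← hI]
  linarith

lemma qq_cont3 (n : ℕ) : ContinuousOn (fun τ => qq τ^n) (Ici 0) := by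
  unfold qq
  refine ContinuousOn.pow (ContinuousOn.inv₀ (by fun_prop) fun τ hτ => ?_) n
  have : (0:ℝ) ≤ τ := hτ
  positivity

lemma qq_refl (n : ℕ) {t : ℝ} (ht : 0 ≤ t) : IntegrableOn (fun τ => qq (t-τ)^n) (Ioc 0 t) ∧
    ∫ τ in Ioc 0 t, qq (t-τ)^n = ∫ τ in Ioc 0 t, qq τ^n := by
  constructor
  · refine (ContinuousOn.integrableOn_Icc ?_).mono_set Ioc_subset_Icc_self
    exact ContinuousOn.comp (g := fun τ => qq τ^n) (f := fun τ => t-τ) (t := Ici 0) (qq_cont3 n) (by fun_prop) fun τ hτ => (show (0:ℝ) ≤ t - τ by linarith [hτ.2])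
  · rw [← intervalIntegral.integral_of_le ht, ← intervalIntegral.integral_of_le ht,
      intervalIntegral.integral_comp_sub_left (fun τ => qq τ^n) t]
    simp

lemma qq_intOn (n : ℕ) (t : ℝ) : IntegrableOn (fun τ => qq τ^n) (Ioc 0 t) :=
  (((qq_cont3 n).mono Icc_subset_Ici_self).integrableOn_Icc).mono_set Ioc_subset_Icc_self

lemma qq3_int : IntegrableOn (fun τ => qq τ^3) (Ioi 0) := by
  have := integrableOn_add_rpow_Ioi_of_lt (a := -(3/2)) (c := 0) (m := 1) (by norm_num) (by norm_num)
  refine this.congr_fun (fun τ hτ => ?_) measurableSet_Ioi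
  have : (0:ℝ) < τ := hτ
  simp only [qq]
  rw [← Real.sqrt_inv, Real.sqrt_eq_rpow, ← Real.rpow_natCast, ← Real.rpow_mul (by positivity), Real.rpow_neg (by positivity), 
    Real.inv_rpow (by positivity), add_comm]
  norm_num

include hM hγ in
lemma dm_int : ∃ C, 0 ≤ C ∧ ∀ z t : ℝ, 0 ≤ t → IntegrableOn (dm M γ z t) (Ioc 0 t) ∧ ∫ τ in Ioc 0 t, dm M γ z t τ ≤ C := by
  set H := ∫ τ in Ioi 0, qq τ^3 with hH
  set K := ∫ τ : ℝ, (Ioc (0:ℝ) 1).indicator (fun τ => τ^(-(1/2):ℝ)) τ with hK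
  have H0 : 0 ≤ H := setIntegral_nonneg measurableSet_Ioi fun τ hτ => pow_nonneg (qq_pos (le_of_lt hτ)).le 3
  have ind0 : ∀ τ : ℝ, 0 ≤ (Ioc (0:ℝ) 1).indicator (fun τ => τ^(-(1/2):ℝ)) τ := 
    fun τ => indicator_nonneg (fun x hx => by have := hx.1; positivity) _
  have K0 : 0 ≤ K := integral_nonneg ind0
  have hhalf : (1/2:ℝ) < 1 := by norm_num
  have Kint : Integrable ((Ioc (0:ℝ) 1).indicator (fun τ : ℝ => τ^(-(1/2):ℝ))) := 
    (integrable_indicator_iff measurableSet_Ioc).2 (pow_int hhalf 1)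
  refine ⟨4*H + 2*K + 2*Real.sqrt 2 + 2*Real.sqrt 2 + |γ|⁻¹ * Real.sqrt (Real.pi*M) + 2, by positivity, fun z t ht => ?_⟩
  have q3 := qq_refl 3 ht
  have q1 := qq_refl 1 ht
  simp only [pow_one] at q1
  have i3 := qq_intOn 3 t
  have ip := pow_int hhalf t
  have ep := pow_int_eq hhalf ht
  have hB : 0 < M*(1+t) := by positivity
  have iY : Integrable fun τ : ℝ => Real.exp (-(z+γ*(t-τ))^2/(M*(1+t))) := by
    have h1 : Integrable fun x : ℝ => Real.exp (-(M*(1+t))⁻¹ * x^2) := integrable_exp_neg_mul_sq (by positivity)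
    have h2 := (h1.comp_add_left (z+γ*t)).comp_mul_left' (neg_ne_zero.2 hγ)
    refine h2.congr (Filter.Eventually.of_forall fun τ => ?_)
    simp only; congr 1; field_simp; ring
  have eY : ∫ τ : ℝ, Real.exp (-(z+γ*(t-τ))^2/(M*(1+t))) = |γ|⁻¹ * Real.sqrt (Real.pi*(M*(1+t))) := by
    have h2 := MeasureTheory.Measure.integral_comp_mul_left (fun x => Real.exp (-(M*(1+t))⁻¹ * ((z+γ*t) + x)^2)) (-γ)
    rw [integral_add_left_eq_self (fun x => Real.exp (-(M*(1+t))⁻¹ * x^2)) (z+γ*t), integral_gaussian, inv_neg, abs_neg, abs_inv, smul_eq_mul, div_inv_eq_mul] at h2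
    rw [← h2]
    congr 1; ext τ; congr 1; field_simp; ring
  have a1 := q3.1.const_mul 2
  have a2 := i3.const_mul 2
  have a3 := (Kint.integrableOn (s := Ioc 0 t)).const_mul 2
  have a4 := ip.const_mul (Real.sqrt (t/2))⁻¹
  have a5 := q1.1.const_mul (Real.sqrt (t/2))⁻¹
  have a6 := (iY.integrableOn (s := Ioc 0 t)).const_mul (qq t)
  have a7 := ip.const_mul (qq t)
  refine ⟨((((((a1.add a2).add a3).add a4).add a5).add a6).add a7), ?_⟩
  have e : ∫ τ in Ioc 0 t, dm M γ z t τ = 2*(∫ τ in Ioc 0 t, qq τ^3) + 2*(∫ τ in Ioc 0 t, qq τ^3) + 2*(∫ τ in Ioc 0 t, (Ioc (0:ℝ) 1).indicator (fun τ => τ^(-(1/2):ℝ)) τ)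
     + (Real.sqrt (t/2))⁻¹ * (∫ τ in Ioc 0 t, τ^(-(1/2):ℝ)) + (Real.sqrt (t/2))⁻¹ * (∫ τ in Ioc 0 t, qq τ) + 
     qq t * (∫ τ in Ioc 0 t, Real.exp (-(z+γ*(t-τ))^2/(M*(1+t)))) + qq t * (∫ τ in Ioc 0 t, τ^(-(1/2):ℝ)) := by
    rw [← q1.2]
    nth_rw 1 [← q3.2]
    simp only [← integral_const_mul]
    have b2 := a1.fun_add a2
    have b3 := b2.fun_add a3
    have b4 := b3.fun_add a4
    have b5 := b4.fun_add a5
    have b6 := b5.fun_add a6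
    rw [← integral_add a1 a2, ← integral_add b2 a3, ← integral_add b3 a4, ← integral_add b4 a5, ← integral_add b5 a6, ← integral_add b6 a7]
    rfl
  have g1 : ∫ τ in Ioc 0 t, qq τ^3 ≤ H := setIntegral_mono_set qq3_int 
    (by filter_upwards [ae_restrict_mem measurableSet_Ioi] with τ hτ using pow_nonneg (qq_pos (le_of_lt hτ)).le 3) (Filter.Eventually.of_forall Ioc_subset_Ioi_self)
  have g2 : ∫ τ in Ioc 0 t, (Ioc (0:ℝ) 1).indicator (fun τ => τ^(-(1/2):ℝ)) τ ≤ K := 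
    setIntegral_le_integral Kint (Filter.Eventually.of_forall ind0)
  have ep' : ∫ τ in Ioc 0 t, τ^(-(1/2):ℝ) = 2 * Real.sqrt t := by
    rw [ep, Real.sqrt_eq_rpow]; norm_num; ring
  have g3 : ∫ τ in Ioc 0 t, qq τ ≤ 2 * Real.sqrt t := by
    rw [← ep']
    have := qq_intOn 1 t
    simp only [pow_one] at this
    refine setIntegral_mono_on this ip measurableSet_Ioc fun τ hτ => ?_
    have h0 : 0 < τ := hτ.1
    rw [← sqrt_inv_rpow h0]; unfold qq; gcongr; linarith
  have g4 : ∫ τ in Ioc 0 t, Real.exp (-(z+γ*(t-τ))^2/(M*(1+t))) ≤ |γ|⁻¹ * Real.sqrt (Real.pi*(M*(1+t))) := by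
    rw [← eY]; exact setIntegral_le_integral iY (Filter.Eventually.of_forall fun τ => (Real.exp_pos _).le)
  have qT := qq_pos ht
  have g5 : qq t * (|γ|⁻¹ * Real.sqrt (Real.pi*(M*(1+t)))) = |γ|⁻¹ * Real.sqrt (Real.pi*M) := by
    unfold qq
    rw [← mul_assoc Real.pi, Real.sqrt_mul (by have := Real.pi_pos; positivity)]
    have : 0 < Real.sqrt (1+t) := by positivity
    field_simp
  have g6 : qq t * (2 * Real.sqrt t) ≤ 2 := by
    unfold qq
    have : Real.sqrt t ≤ Real.sqrt (1+t) := Real.sqrt_le_sqrt (by linarith)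
    rw [inv_mul_le_iff₀ (by positivity)]; linarith
  have g7 : (Real.sqrt (t/2))⁻¹ * (2 * Real.sqrt t) ≤ 2*Real.sqrt 2 := by
    rcases ht.eq_or_lt with h | h
    · rw [← h]; simp
    · rw [Real.sqrt_div ht]
      have : 0 < Real.sqrt t := by positivity
      have : 0 < Real.sqrt 2 := by positivity
      apply le_of_eq; field_simp
  have T0 : 0 ≤ (Real.sqrt (t/2))⁻¹ := by positivity
  have g8 := mul_le_mul_of_nonneg_left g3 T0
  have g9 := mul_le_mul_of_nonneg_left g4 qT.le
  rw [e, ep']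
  linarith
end
end RD

namespace RD
section
variable {M r d c c' : ℝ} (hM : 1 ≤ M) (hr : 3 ≤ r) (hd : 0 < d) (hMd : 64*d ≤ M) (hc : c' - c ≠ 0)

lemma NB.shift {q} (h : NB q) (b : ℝ) : NB (fun y => q (y+b)) := by
  obtain ⟨c, B, hB⟩ := h
  exact ⟨by fun_prop, B, fun y => hB _⟩

lemma A_le (k : ℕ) (hd : 0 < d) {h : ℝ → ℝ → ℝ} {Q : ℝ → ℝ} (nb : NB Q) {x t τ : ℝ} (hτ : 0 < τ)
    (hq : ∀ y, |h y (t-τ)| ≤ Q (y+c*(t-τ))) : |A k d c h x t τ| ≤ ((sg d τ)⁻¹)^k * (4 * NN (sg d τ) Q (x+c*t)) := by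
  have h0 := sg_pos hd hτ
  unfold A
  rw [abs_mul, abs_of_nonneg (by positivity)]
  gcongr
  have h1 := T_abs_le k (sg d τ) (x+c*τ) hq ((nb.shift (c*(t-τ))).int _ _)
  have h2 := NN_shift Q (c*(t-τ)) (sg d τ) (x+c*τ)
  rw [show x+c*τ+c*(t-τ) = x+c*t by ring] at h2
  rw [← h2]; exact h1

include hM hr in
lemma NN_pow {C s z σ t : ℝ} (n : ℕ) (hs : 0 ≤ s) (hC : NN σ (fun y => ww M r y s) z ≤ C * ww M r z t) :
    NN σ (fun y => ww M r y s^(n+1)) z ≤ (2*qq s)^n * (C * ww M r z t) := by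
  have nbw : NB fun y => ww M r y s := by simpa using ww_NB hM hr hs 0
  have nbp : ∀ n : ℕ, NB fun y => ww M r y s^n := by
    intro n
    induction n with
    | zero => simpa using NB.const 1
    | succ n ih => simpa only [pow_succ] using ih.mul nbw
  have hq := (qq_pos hs).le
  have : NN σ (fun y => ww M r y s^(n+1)) z ≤ NN σ (fun y => (2*qq s)^n * ww M r y s) z := by
    refine NN_mono (nbp _) ((NB.const _).mul nbw) (fun y => ?_) _ _
    rw [pow_succ]
    have := ww_nn M r y s
    have := ww_le hM hr y hs
    gcongr
  rw [NN_cmul] at this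
  exact this.trans (by gcongr)

include hM hr hd hMd hc in
lemma Dbd (c₀ : ℝ) (n k : ℕ) (hnk : (n = 3 ∧ k = 0) ∨ (n = 1 ∧ k = 1)) (hcc : c₀ = c) : ∃ C, 0 ≤ C ∧ ∀ (h : ℝ → ℝ → ℝ) (L : ℝ), 0 ≤ L → 
    (∀ y s, 0 ≤ s → |h y s| ≤ L*(ww M r (y+c*s) s^(n+1) + ww M r (y+c*s) s * ww M r (y+c'*s) s)) →
    ∀ x t, 0 ≤ t → |D k d c h x t| ≤ C*L*ww M r (x+c*t) t := by
  obtain ⟨C1, p1, k1⟩ := L1 (r := r) hM hr hd hMd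
  obtain ⟨C2, p2, k2⟩ := KEY (r := r) hM hr hd hMd hc
  obtain ⟨C3, p3, k3⟩ := dm_int hM hc
  set K := (Real.sqrt (2*d))⁻¹ with hK
  have K0 : 0 ≤ K := by positivity
  have sgi : ∀ τ : ℝ, 0 < τ → (sg d τ)⁻¹ = K * (Real.sqrt τ)⁻¹ := fun τ hτ => by
    unfold sg; rw [Real.sqrt_mul (by positivity), mul_inv]
  refine ⟨(1+K)*(4*(8*C1+C2))*C3, by positivity, fun h L L0 hh x t ht => ?_⟩
  set z := x+c*t with hz
  have w0 := ww_nn M r z t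
  have main : ∀ τ ∈ Ioc 0 t, |A k d c h x t τ| ≤ (1+K)*(4*(8*C1+C2))*L*ww M r z t * dm M (c'-c) z t τ := by
    intro τ hτ
    obtain ⟨s, hs⟩ : ∃ s, s = t - τ := ⟨_, rfl⟩
    have s0 : 0 ≤ s := by rw [hs]; linarith [hτ.2]
    have est : s + τ = t := by rw [hs]; ring
    have nbw : NB fun y => ww M r y s := by simpa using ww_NB hM hr s0 0
    have nbw' : NB fun y => ww M r (y+(c'-c)*s) s := ww_NB hM hr s0 _
    have nbp : ∀ n : ℕ, NB fun y => ww M r y s^n := by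
      intro n
      induction n with
      | zero => simpa using NB.const 1
      | succ n ih => simpa only [pow_succ] using ih.mul nbw
    have a1 := A_le (h := h) (c := c) (Q := fun y => L * (ww M r y s^(n+1) + ww M r y s * ww M r (y+(c'-c)*s) s)) (x := x) (t := t) k hd 
      ((NB.const L).mul ((nbp _).add (nbw.mul nbw'))) hτ.1 (fun y => by
        have := hh y s s0
        rw [← hs]
        simpa only [show y+c*s+(c'-c)*s = y+c'*s by ring] using this)
    rw [NN_cmul, NN_add (nbp _) (nbw.mul nbw'), ← hz] at a1
    have b1 := NN_pow hM hr n s0 (k1 s τ z s0 hτ.1)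
    have b2 := k2 s τ z s0 hτ.1
    rw [est] at b1 b2
    have qs := qq_pos s0
    have qt := qq_pos hτ.1.le
    have qT := qq_pos ht
    obtain ⟨Y, hY⟩ : ∃ Y, Y = Real.exp (-(z+(c'-c)*s)^2/(M*(1+t))) := ⟨_, rfl⟩
    have Y0 : 0 ≤ Y := by rw [hY]; positivity
    have mle := mm_le (M := M) (γ := c'-c) (z := z) hM hτ.1 hτ.2
    unfold mm at mle
    rw [← hs, ← hY] at mle
    rw [← hY] at b2
    obtain ⟨q, hq⟩ : ∃ q, q = (Real.sqrt τ)⁻¹ := ⟨_, rfl⟩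
    have q0 : 0 ≤ q := by rw [hq]; positivity
    rw [← hq] at mle
    obtain ⟨Z, hZ⟩ : ∃ Z, Z = qq s^3 + qq τ^3 + qq t * Y := ⟨_, rfl⟩
    have Z0 : 0 ≤ Z := by rw [hZ]; positivity
    have Z1 : qq s^3 ≤ Z := by
      have : 0 ≤ qq τ^3 + qq t * Y := by positivity
      rw [hZ]; linarith
    rw [← hZ] at mle b2
    have fin : ((sg d τ)⁻¹)^k * ((2*qq s)^n * C1 + C2*Z) ≤ (1+K)*(8*C1+C2)*((1+q)*Z + q*qq s) := by
      rw [sgi τ hτ.1, ← hq]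
      rcases hnk with ⟨rfl, rfl⟩ | ⟨rfl, rfl⟩
      · rw [pow_zero, one_mul]
        have e1 : (2*qq s)^3*C1 ≤ 8*C1*Z := by
          rw [mul_pow]; nlinarith
        have e2 : 0 ≤ (8*C1+C2)*(K*((1+q)*Z + q*qq s) + (q*Z+q*qq s)) := by positivity
        linarith
      · rw [pow_one, pow_one]
        have e0 : 0 ≤ (8*C1+C2)*((1+q)*Z+q*qq s) := by positivity
        have e1 : 0 ≤ K*((8*C1+C2)*Z) := by positivity
        have e2 : 0 ≤ K*(8*C1*(q*Z)) := by positivity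
        have e3 : 0 ≤ K*((6*C1+C2)*(q*qq s)) := by positivity
        linarith
    have sgk : 0 ≤ ((sg d τ)⁻¹)^k := by have := sg_pos hd hτ.1; positivity
    calc _ ≤ _ := a1
      _ ≤ ((sg d τ)⁻¹)^k * (4*(L*((2*qq s)^n * (C1 * ww M r z t) + C2*(ww M r z t * Z)))) := by gcongr
      _ = 4*L*ww M r z t * (((sg d τ)⁻¹)^k * ((2*qq s)^n * C1 + C2*Z)) := by ring
      _ ≤ 4*L*ww M r z t * ((1+K)*(8*C1+C2)*((1+q)*Z + q*qq s)) := by gcongr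
      _ ≤ 4*L*ww M r z t * ((1+K)*(8*C1+C2)*dm M (c'-c) z t τ) := by gcongr
      _ = _ := by ring
  obtain ⟨i1, i2⟩ := k3 z t ht
  have : |D k d c h x t| ≤ ∫ τ in Ioc 0 t, (1+K)*(4*(8*C1+C2))*L*ww M r z t * dm M (c'-c) z t τ := by
    unfold D
    rw [← Real.norm_eq_abs]
    refine norm_integral_le_of_norm_le (i1.const_mul _) ?_
    filter_upwards [ae_restrict_mem measurableSet_Ioc] with τ hτ using main τ hτ
  rw [integral_const_mul] at this
  calc _ ≤ _ := this
    _ ≤ (1+K)*(4*(8*C1+C2))*L*ww M r z t * C3 := by gcongr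
    _ = _ := by ring

include hM hr hd hMd hc in
lemma Inv : ∃ C, 0 ≤ C ∧ ∀ (u₀ : ℝ → ℝ) (h0 h1 : ℝ → ℝ → ℝ) (δ L : ℝ), 0 ≤ δ → 0 ≤ L → 
    (∀ x, |u₀ x| ≤ δ * pp r x 0) →
    (∀ y s, 0 ≤ s → |h0 y s| ≤ L*(ww M r (y+c*s) s^4 + ww M r (y+c*s) s * ww M r (y+c'*s) s)) →
    (∀ y s, 0 ≤ s → |h1 y s| ≤ L*(ww M r (y+c*s) s^2 + ww M r (y+c*s) s * ww M r (y+c'*s) s)) →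
    ∀ x t, 0 ≤ t → |T 0 (sg d t) u₀ (x+c*t) + D 0 d c h0 x t + D 1 d c h1 x t| ≤ C*(δ+L)*ww M r (x+c*t) t := by
  obtain ⟨C0, p0, k0⟩ := Dbd (r := r) hM hr hd hMd hc c 3 0 (Or.inl ⟨rfl, rfl⟩) rfl
  obtain ⟨C1, p1, k1⟩ := Dbd (r := r) hM hr hd hMd hc c 1 1 (Or.inr ⟨rfl, rfl⟩) rfl
  obtain ⟨C2, p2, k2⟩ := L1p (r := r) hM hr hd hMd
  refine ⟨C0 + C1 + 4*C2 + 1, by positivity, fun u₀ h0 h1 δ L d0 L0 hu b0 b1 x t ht => ?_⟩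
  have e0 := k0 h0 L L0 b0 x t ht
  have e1 := k1 h1 L L0 b1 x t ht
  set w := ww M r (x+c*t) t with hw
  have w0 : 0 ≤ w := ww_nn _ _ _ _
  have e2 : |T 0 (sg d t) u₀ (x+c*t)| ≤ (4*C2+1)*δ*w := by
    rcases ht.eq_or_lt with h | h
    · rw [hw, ← h]
      simp only [sg, mul_zero, Real.sqrt_zero, T_zero, add_zero]
      have a1 : pp r x 0 ≤ ww M r x 0 := by unfold ww; linarith [GG_nn M x 0]
      have a2 := mul_le_mul_of_nonneg_left a1 d0
      have a3 : 0 ≤ 4*C2*δ*ww M r x 0 := by have := ww_nn M r x 0; positivity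
      linarith [hu x]
    · have nb : NB fun y => pp r y 0 := by simpa using pp_NB hr (t := 0) le_rfl 0
      have a1 := T_abs_le 0 (sg d t) (x+c*t) hu (((NB.const δ).mul nb).int _ _)
      have a1' : |T 0 (sg d t) u₀ (x+c*t)| ≤ 4 * NN (sg d t) (fun y => δ * pp r y 0) (x+c*t) := a1
      rw [NN_cmul] at a1'
      have a3 := k2 0 t (x+c*t) le_rfl h
      rw [zero_add, ← hw] at a3
      have a4 := mul_le_mul_of_nonneg_left a3 d0
      have a5 : 0 ≤ δ*w := by positivity
      linarith
  have t1 := abs_add_le (T 0 (sg d t) u₀ (x+c*t) + D 0 d c h0 x t) (D 1 d c h1 x t)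
  have t2 := abs_add_le (T 0 (sg d t) u₀ (x+c*t)) (D 0 d c h0 x t)
  have f1 : 0 ≤ (C0+C1)*δ*w := by positivity
  have f2 : 0 ≤ (4*C2+1)*L*w := by positivity
  linarith

include hM hr in
lemma ww_mass : ∃ C, 0 ≤ C ∧ ∀ b t : ℝ, 0 ≤ t → Integrable (fun x => ww M r (x+b) t) ∧ ∫ x, ww M r (x+b) t ≤ C := by
  have J0 : 0 ≤ ∫ y, pp r y 0 := integral_nonneg fun y => pp_nn _ _ _
  refine ⟨(∫ y, pp r y 0) + Real.sqrt (Real.pi*M), by positivity, fun b t ht => ?_⟩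
  rw [integral_add_right_eq_self (fun x => ww M r x t) b]
  have i1 : Integrable fun x => pp r x t := (p_int hr).mono' 
    (by simpa using (pp_cont r 0 t).aestronglyMeasurable) (Filter.Eventually.of_forall fun x => by
      rw [Real.norm_eq_abs, abs_of_nonneg (pp_nn _ _ _)]; exact pp_p0 hr x)
  have hB : 0 < M*(1+t) := by positivity
  have eG : (fun x => GG M x t) = fun x => qq t * Real.exp (-(M*(1+t))⁻¹ * x^2) := by
    ext x; rw [GG_eq]; congr 2; field_simp
  have i2 : Integrable fun x => GG M x t := by
    rw [eG]; exact (integrable_exp_neg_mul_sq (by positivity)).const_mul _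
  have e2 : ∫ x, GG M x t = Real.sqrt (Real.pi*M) := by
    rw [eG, integral_const_mul, integral_gaussian, div_inv_eq_mul]
    unfold qq
    rw [← mul_assoc Real.pi, Real.sqrt_mul (by have := Real.pi_pos; positivity)]
    have : 0 < Real.sqrt (1+t) := by positivity
    field_simp
  refine ⟨Integrable.comp_add_right (f := fun x => ww M r x t) (i1.add i2) b, ?_⟩
  have : ∫ x, ww M r x t = (∫ x, pp r x t) + ∫ x, GG M x t := integral_add i1 i2
  rw [this, e2]
  gcongr ?_ + _
  exact integral_mono i1 (p_int hr) fun x => pp_p0 hr x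
end

lemma HolderCont_cont {α : ℝ} (hα : 0 < α) {f : ℝ → ℝ} (h : HolderCont α f) : Continuous f := by
  obtain ⟨C, hC⟩ := h
  rw [continuous_iff_continuousAt]
  intro x
  rw [ContinuousAt, tendsto_iff_dist_tendsto_zero]
  have : Filter.Tendsto (fun y : ℝ => C * |y - x|^α) (nhds x) (nhds 0) := by
    have h1 : Continuous fun y : ℝ => C * |y - x|^α := 
      continuous_const.mul (Continuous.rpow_const (by fun_prop) fun y => Or.inr hα.le)
    have := h1.tendsto x
    simpa [Real.zero_rpow hα.ne'] using this
  exact squeeze_zero (fun _ => dist_nonneg) (fun y => by rw [Real.dist_eq]; exact hC y x) this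
end RD
open RD

set_option maxHeartbeats 1000000 in
/-- Theorem 1.2 (algebraically localized initial data, with the pointwise bounds of
Remark 4.1). -/
theorem global_existence_mix_terms_algebraic
    (α d₁ d₂ c₁ c₂ : ℝ) (hα : α ∈ Set.Ioo (0 : ℝ) 1)
    (hd₁ : 0 < d₁) (hd₂ : 0 < d₂) (hc : c₁ ≠ c₂)
    (f₁ f₂ g₁ g₂ : ℝ × ℝ → ℝ)
    (hf₁ : IsC2Holder α f₁) (hf₂ : IsC2Holder α f₂)
    (hg₁ : IsC2Holder α g₁) (hg₂ : IsC2Holder α g₂)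
    (C₀ r₀ : ℝ) (hC₀ : 1 < C₀) (hr₀ : 0 < r₀)
    (hnl : ∀ u v : ℝ, |u| ≤ r₀ → |v| ≤ r₀ →
      |f₁ (u, v)| ≤ C₀ * (|u| ^ 4 + |u| * |v|) ∧
      |g₁ (u, v)| ≤ C₀ * (|u| ^ 2 + |u| * |v|) ∧
      |f₂ (u, v)| ≤ C₀ * (|v| ^ 4 + |u| * |v|) ∧
      |g₂ (u, v)| ≤ C₀ * (|v| ^ 2 + |u| * |v|)) :
    ∃ M₀ : ℝ, 1 ≤ M₀ ∧
      ∀ M : ℝ, M₀ ≤ M → ∀ r : ℝ, 3 ≤ r → ∀ ε : ℝ, 0 < ε → ∃ δ : ℝ, 0 < δ ∧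
        ∀ u₀ v₀ : ℝ → ℝ,
          (∃ B : ℝ, ∀ x : ℝ, |u₀ x| ≤ B) → (∃ B : ℝ, ∀ x : ℝ, |v₀ x| ≤ B) →
          HolderCont α u₀ → HolderCont α v₀ →
          (∀ x : ℝ, |u₀ x| * (1 + |x|) ^ r < δ) →
          (∀ x : ℝ, |v₀ x| * (1 + |x|) ^ r < δ) →
          ∃ u v : ℝ → ℝ → ℝ,
            IsClassicalSolution d₁ d₂ c₁ c₂ f₁ f₂ g₁ g₂ ⊤ u₀ v₀ u v ∧
            ∀ t : ℝ, 0 ≤ t →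
              (∀ x : ℝ, |u x t| ≤
                ε * ((1 + |x + c₁ * t| + Real.sqrt t) ^ (-r) +
                  Real.exp (-(x + c₁ * t) ^ 2 / (M * (1 + t))) / Real.sqrt (1 + t))) ∧
              (∀ x : ℝ, |v x t| ≤
                ε * ((1 + |x + c₂ * t| + Real.sqrt t) ^ (-r) +
                  Real.exp (-(x + c₂ * t) ^ 2 / (M * (1 + t))) / Real.sqrt (1 + t))) ∧
              (∀ x : ℝ, |u x t| + |v x t| ≤ ε / Real.sqrt (1 + t)) ∧
              Integrable (fun x : ℝ => |u x t| + |v x t|) ∧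
              (∫ x : ℝ, (|u x t| + |v x t|)) ≤ ε := by
  refine ⟨max 1 (max (64*d₁) (64*d₂)), le_max_left _ _, fun M hMM r hr ε hε => ?_⟩
  have hM : 1 ≤ M := (le_max_left _ _).trans hMM
  have hM1 : 64*d₁ ≤ M := ((le_max_left _ _).trans (le_max_right _ _)).trans hMM
  have hM2 : 64*d₂ ≤ M := ((le_max_right _ _).trans (le_max_right _ _)).trans hMM
  obtain ⟨A1, a1, I1⟩ := Inv (r := r) (c := c₁) (c' := c₂) hM hr hd₁ hM1 (sub_ne_zero.2 hc.symm)
  obtain ⟨A2, a2, I2⟩ := Inv (r := r) (c := c₂) (c' := c₁) hM hr hd₂ hM2 (sub_ne_zero.2 hc)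
  obtain ⟨A3, a3, I3⟩ := ww_mass (r := r) hM hr
  set S := A1 + A2 + 1 with hS
  have S0 : 0 < S := by positivity
  have C0 : 0 < C₀ := by linarith
  obtain ⟨η, η0, η1, η2, η3, η4, η5⟩ : ∃ η : ℝ, 0 < η ∧ η ≤ 1 ∧ η ≤ r₀/2 ∧ η ≤ ε/4 ∧ η ≤ ε/(2*A3+1) ∧ η ≤ 1/(2*S*C₀) := by
    refine ⟨min 1 (min (r₀/2) (min (ε/4) (min (ε/(2*A3+1)) (1/(2*S*C₀))))), by positivity, min_le_left _ _, ?_, ?_, ?_, ?_⟩ <;> simp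
  refine ⟨η/(2*S), by positivity, fun u₀ v₀ hbu hbv hu₀ hv₀ su sv => ?_⟩
  have hpp : ∀ h : ℝ → ℝ, (∀ x : ℝ, |h x| * (1 + |x|) ^ r < η/(2*S)) → ∀ x, |h x| ≤ η/(2*S) * pp r x 0 := by
    intro h hh x
    have e : pp r x 0 = ((1+|x|)^r)⁻¹ := by unfold pp; rw [Real.sqrt_zero, add_zero, Real.rpow_neg (by positivity)]
    rw [e, ← div_eq_mul_inv, le_div_iff₀ (by positivity)]
    exact (hh x).le
  have hpp1 : ∀ h : ℝ → ℝ, (∀ x : ℝ, |h x| * (1 + |x|) ^ r < η/(2*S)) → ∀ x, |h x| ≤ η/(2*S) := fun h hh x => 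
    (hpp h hh x).trans (mul_le_of_le_one_right (by positivity) ((pp_le hr x le_rfl).trans (qq_le le_rfl)))
  have wle : ∀ x t : ℝ, 0 ≤ t → η * ww M r x t ≤ 2*η := fun x t ht => by
    have := ww_le hM hr x ht
    have := qq_le ht
    nlinarith
  have wnn : ∀ x t : ℝ, 0 ≤ η * ww M r x t := fun x t => mul_nonneg η0.le (ww_nn _ _ _ _)
  have fin : ∀ A' : ℝ, 0 ≤ A' → A' ≤ S → ∀ w : ℝ, 0 ≤ w → A'*(η/(2*S) + C₀*η^2)*w ≤ η*w := by
    intro A' h0 h1 w hw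
    gcongr
    have : C₀*η^2 ≤ η/(2*S) := by
      rw [le_div_iff₀ (by positivity)] at η5 ⊢
      nlinarith
    calc A'*(η/(2*S) + C₀*η^2) ≤ S*(η/(2*S) + η/(2*S)) := by gcongr
      _ = η := by field_simp; ring
  have quart : ∀ a w : ℝ, 0 ≤ a → 0 ≤ w → a ≤ η*w → a^4 ≤ η^2*w^4 := by
    intro a w h0 hw h
    calc a^4 ≤ (η*w)^4 := by gcongr
      _ = η^2*(η^2*w^4) := by ring
      _ ≤ η^2*(1*w^4) := by gcongr; exact pow_le_one₀ η0.le η1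
      _ = _ := by ring
  obtain ⟨u, v, bu, bv, iu, iv, wu, wv, mu, mv⟩ := fixpt (B := 2*η) (c₁ := c₁) (c₂ := c₂) (K := η/(2*S)) (W₁ := fun x t => η * ww M r (x+c₁*t) t) 
    (W₂ := fun x t => η * ww M r (x+c₂*t) t) hd₁ hd₂ (hf₁.1.of_le (by norm_num)) (hf₂.1.of_le (by norm_num)) (hg₁.1.of_le (by norm_num)) (hg₂.1.of_le (by norm_num))
    (HolderCont_cont hα.1 hu₀) (HolderCont_cont hα.1 hv₀) (hpp1 u₀ su) (hpp1 v₀ sv)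
    (fun x t ht => wnn _ _) (fun x t ht => wnn _ _) (fun x t ht => wle _ _ ht) (fun x t ht => wle _ _ ht) (by
      intro u v bu bv wu wv
      have key : ∀ y s, 0 ≤ s → |f₁ (u y s, v y s)| ≤ C₀*η^2*(ww M r (y+c₁*s) s^4 + ww M r (y+c₁*s) s * ww M r (y+c₂*s) s) ∧
          |g₁ (u y s, v y s)| ≤ C₀*η^2*(ww M r (y+c₁*s) s^2 + ww M r (y+c₁*s) s * ww M r (y+c₂*s) s) ∧
          |f₂ (u y s, v y s)| ≤ C₀*η^2*(ww M r (y+c₂*s) s^4 + ww M r (y+c₂*s) s * ww M r (y+c₁*s) s) ∧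
          |g₂ (u y s, v y s)| ≤ C₀*η^2*(ww M r (y+c₂*s) s^2 + ww M r (y+c₂*s) s * ww M r (y+c₁*s) s) := by
        intro y s hs
        have e1 := wu y s hs
        have e2 := wv y s hs
        obtain ⟨n1, n2, n3, n4⟩ := hnl (u y s) (v y s) ((bu.2 y s).trans (by linarith)) ((bv.2 y s).trans (by linarith))
        have w1 := ww_nn M r (y+c₁*s) s
        have w2 := ww_nn M r (y+c₂*s) s
        have x1 := quart _ _ (abs_nonneg _) w1 e1
        have x2 := quart _ _ (abs_nonneg _) w2 e2
        have x3 := pow_le_pow_left₀ (abs_nonneg _) e1 2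
        have x4 := pow_le_pow_left₀ (abs_nonneg _) e2 2
        have x5 := mul_le_mul e1 e2 (abs_nonneg _) (wnn _ _)
        clear bu bv wu wv
        refine ⟨n1.trans ?_, n2.trans ?_, n3.trans ?_, n4.trans ?_⟩ <;> rw [mul_assoc C₀] <;> gcongr <;> linarith
      intro x t ht
      constructor
      · refine (I1 u₀ (cp f₁ u v) (cp g₁ u v) (η/(2*S)) (C₀*η^2) (by positivity) (by positivity) (hpp u₀ su) 
          (fun y s hs => (key y s hs).1) (fun y s hs => (key y s hs).2.1) x t ht).trans ?_
        exact fin A1 a1 (by linarith) _ (ww_nn _ _ _ _)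
      · refine (I2 v₀ (cp f₂ u v) (cp g₂ u v) (η/(2*S)) (C₀*η^2) (by positivity) (by positivity) (hpp v₀ sv) 
          (fun y s hs => (key y s hs).2.2.1) (fun y s hs => (key y s hs).2.2.2) x t ht).trans ?_
        exact fin A2 a2 (by linarith) _ (ww_nn _ _ _ _))
  have cl := classical hd₁ hd₂ hf₁.1 hf₂.1 hg₁.1 hg₂.1 hα.1 hα.2 bu bv mu mv
  rw [show (fun x => u x 0) = u₀ from funext iu, show (fun x => v x 0) = v₀ from funext iv] at cl
  refine ⟨u, v, cl, fun t ht => ?_⟩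
  have ηε : η ≤ ε := by linarith
  have cu : Continuous fun x => |u x t| + |v x t| := (bu.sec t).abs.add (bv.sec t).abs
  obtain ⟨j1, m1⟩ := I3 (c₁*t) t ht
  obtain ⟨j2, m2⟩ := I3 (c₂*t) t ht
  have jj : Integrable fun x => η * ww M r (x+c₁*t) t + η * ww M r (x+c₂*t) t := (j1.const_mul η).fun_add (j2.const_mul η)
  have ji : Integrable fun x => |u x t| + |v x t| := jj.mono' cu.aestronglyMeasurable (Filter.Eventually.of_forall fun x => by
    rw [Real.norm_eq_abs, abs_of_nonneg (by positivity)]; exact add_le_add (wu x t ht) (wv x t ht))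
  refine ⟨fun x => (wu x t ht).trans (mul_le_mul_of_nonneg_right ηε (ww_nn _ _ _ _)), 
    fun x => (wv x t ht).trans (mul_le_mul_of_nonneg_right ηε (ww_nn _ _ _ _)), fun x => ?_, ji, ?_⟩
  · have e1 := wu x t ht
    have e2 := wv x t ht
    have k1 := mul_le_mul_of_nonneg_left (ww_le hM hr (x+c₁*t) ht) η0.le
    have k2 := mul_le_mul_of_nonneg_left (ww_le hM hr (x+c₂*t) ht) η0.le
    have q0 := qq_pos ht
    rw [div_eq_mul_inv]
    change _ ≤ ε * qq t
    nlinarith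
  · calc ∫ x, (|u x t| + |v x t|) ≤ ∫ x, (η * ww M r (x+c₁*t) t + η * ww M r (x+c₂*t) t) :=
          integral_mono ji jj fun x => add_le_add (wu x t ht) (wv x t ht)
      _ = η * (∫ x, ww M r (x+c₁*t) t) + η * (∫ x, ww M r (x+c₂*t) t) := by
          rw [integral_add (j1.const_mul η) (j2.const_mul η), integral_const_mul, integral_const_mul]
      _ ≤ η * A3 + η * A3 := by gcongr
      _ ≤ ε := by
        rw [le_div_iff₀ (by positivity)] at η4
        linarith
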